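/- arXiv:1902.08064 — 2 statements merged into one kernel-verified Lean document; each statement's English description precedes it below -/
import Mathlib

section
/- Let λ, μ be positive real numbers and ν ∈ ℂ with 2·Re ν > λ + μ + 4, and let ε ∈ {0,1}. Then for all s, t ∈ [−1,1], |s − t|^{2ν} · sgn(s − t)^ε = Σ b^{λ,μ,ν}_{ℓ,m} C_ℓ^λ(s) C_m^μ(t), where the sum ranges over all pairs (ℓ,m) ∈ ℕ² with ℓ + m ≡ ε (mod 2), and the series on the right-hand side converges absolutely and uniformly on [−1,1]². -/
open MeasureTheory Filter

/-- The Gegenbauer (ultraspherical) polynomial `C_n^λ(x)`, via its explicit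
expansion (equivalent to the generating function
`(1 - 2xr + r²)^{-λ} = Σ C_n^λ(x) r^n`). -/
noncomputable def gegenbauer (l : ℂ) (n : ℕ) (x : ℂ) : ℂ :=
  ∑ k ∈ Finset.range (n / 2 + 1),
    ((-1 : ℂ) ^ k * (ascPochhammer ℂ (n - k)).eval l /
      ((Nat.factorial k : ℂ) * (Nat.factorial (n - 2 * k) : ℂ))) * (2 * x) ^ (n - 2 * k)

/-- The coefficient `b^{λ,μ,ν}_{ℓ,m}`. -/
noncomputable def bCoef (l μ ν : ℂ) (ℓ m : ℕ) : ℂ :=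
  ((-1 : ℂ) ^ m * (l + ℓ) * (μ + m) * Complex.Gamma (l + μ + 2 * ν + 1) *
      Complex.Gamma l * Complex.Gamma μ * Complex.Gamma (2 * ν + 1)) /
    ((2 : ℂ) ^ (2 * ν) *
      (Complex.Gamma (ν + 1 + (l + μ) / 2 + (l + ℓ) / 2 + (μ + m) / 2) *
        Complex.Gamma (ν + 1 + (l + μ) / 2 + (l + ℓ) / 2 - (μ + m) / 2) *
        Complex.Gamma (ν + 1 + (l + μ) / 2 - (l + ℓ) / 2 + (μ + m) / 2) *
        Complex.Gamma (ν + 1 + (l + μ) / 2 - (l + ℓ) / 2 - (μ + m) / 2)))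

/-!
Replace `t` by `-t` and let `F_{λ,μ,ν}(s, t)` be the sum of the series over all `(ℓ, m)`, without
the parity condition; the claim consists of the even and odd parts, under `(s, t) ↦ (-s, -t)`, of
`F = 2 (s + t)_+^{2ν}`. The derivative and contiguity relations of Gegenbauer polynomials,
combined with those of the reciprocal Gamma factors of the coefficients, give `F_{λ+1,μ,ν} =
F_{λ,μ,ν}`, `∂F_{λ,μ,ν}/∂s = 2ν F_{λ+1,μ,ν-1/2}` and `F_{λ,μ,ν+1/2} = (s + t) F_{λ,μ,ν}`. Hence
`F` solves Euler's equation `(s + t) ∂F/∂s = 2ν F` and, by symmetry, the same equation in `t`, so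
that it equals `c₊ (s + t)^{2ν}` where `s + t > 0` and `c₋ (-s - t)^{2ν}` where `s + t < 0`.

Integrating against the two Gegenbauer weights leaves only the term `(0, 0)` of the series, which
gives one linear relation between `c₊` and `c₋`, and the same argument for `ν + 1/2` gives a
second. They force `c₋ = 0` and `c₊ = 2` once the mean of `(s + t)_+^{2ν}` is known. That mean
satisfies a first order recurrence under `λ ↦ λ + 1`; it is determined by its limit as `λ → ∞`,
where the weight concentrates at `0`, and by the elementary case `λ = 1/2`.
-/

/-- The `k`-th summand of the explicit expansion of `gegenbauer l n x`, extended by zero beyond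
`k = n / 2` so that sums over different ranges can be compared term by term. -/
noncomputable def gegenbauerTerm (l : ℂ) (n : ℕ) (x : ℂ) (k : ℕ) : ℂ :=
  if 2 * k ≤ n then ((-1 : ℂ) ^ k * (ascPochhammer ℂ (n - k)).eval l /
    ((Nat.factorial k : ℂ) * (Nat.factorial (n - 2 * k) : ℂ))) * (2 * x) ^ (n - 2 * k) else 0

lemma gegenbauerTerm_of_lt {n k : ℕ} (h : n < 2 * k) (l x : ℂ) : gegenbauerTerm l n x k = 0 :=
  if_neg (by omega)

lemma gegenbauerTerm_of_eq {n a k : ℕ} (h : n = a + 2 * k) (l x : ℂ) :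
    gegenbauerTerm l n x k = ((-1 : ℂ) ^ k * (ascPochhammer ℂ (a + k)).eval l /
      ((Nat.factorial k : ℂ) * (Nat.factorial a : ℂ))) * (2 * x) ^ a := by
  rw [gegenbauerTerm, if_pos (by omega), show n - k = a + k by omega,
    show n - 2 * k = a by omega]

lemma gegenbauer_eq_sum_gegenbauerTerm (l x : ℂ) {n N : ℕ} (hN : n / 2 + 1 ≤ N) :
    gegenbauer l n x = ∑ k ∈ Finset.range N, gegenbauerTerm l n x k := by
  rw [← Finset.sum_subset (Finset.range_mono hN), gegenbauer]
  · refine Finset.sum_congr rfl fun k hk => ?_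
    rw [Finset.mem_range] at hk
    rw [gegenbauerTerm, if_pos (by omega)]
  · intro k _ hk
    rw [Finset.mem_range] at hk
    exact gegenbauerTerm_of_lt (by omega) l x

lemma gegenbauer_zero (l x : ℂ) : gegenbauer l 0 x = 1 := by simp [gegenbauer]

lemma gegenbauer_one (l x : ℂ) : gegenbauer l 1 x = 2 * l * x := by
  simp only [gegenbauer, Nat.reduceDiv, zero_add, Finset.range_one, Finset.sum_singleton, pow_zero,
    tsub_zero, ascPochhammer_one, Polynomial.eval_X, Nat.factorial_zero, mul_zero,
    Nat.factorial_one, Nat.cast_one, pow_one]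
  ring

lemma gegenbauer_neg (l x : ℂ) (n : ℕ) : gegenbauer l n (-x) = (-1) ^ n * gegenbauer l n x := by
  rw [gegenbauer, gegenbauer, Finset.mul_sum]
  refine Finset.sum_congr rfl fun k hk => ?_
  have hk' : 2 * k ≤ n := by have := Finset.mem_range.mp hk; omega
  have hsign : (-1 : ℂ) ^ n = (-1) ^ (n - 2 * k) := by
    rw [← Nat.sub_add_cancel hk', pow_add, pow_mul, neg_one_sq, one_pow, mul_one,
      Nat.add_sub_cancel]
  rw [mul_neg, neg_pow (2 * x), hsign]
  ring

lemma mul_eval_ascPochhammer_add_one (l : ℂ) (n : ℕ) :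
    l * (ascPochhammer ℂ n).eval (l + 1) = (ascPochhammer ℂ n).eval l * (l + n) := by
  rw [← ascPochhammer_succ_eval, ascPochhammer_succ_left]
  simp

lemma gegenbauerTerm_add_two_zero (l x : ℂ) (n : ℕ) :
    ((n : ℂ) + 2) * gegenbauerTerm l (n + 2) x 0 =
      2 * (n + 1 + l) * x * gegenbauerTerm l (n + 1) x 0 := by
  rw [gegenbauerTerm_of_eq (a := n + 2) (by omega), gegenbauerTerm_of_eq (a := n + 1) (by omega),
    add_zero, add_zero, ascPochhammer_succ_eval, Nat.factorial_succ (n + 1)]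
  have hn : (n : ℂ) + 2 ≠ 0 := by exact_mod_cast (n + 1).succ_ne_zero
  have hfact := Nat.factorial_ne_zero (n + 1)
  push_cast
  rw [add_assoc (n : ℂ) 1 1, one_add_one_eq_two]
  field_simp
  ring

lemma gegenbauerTerm_add_two_succ (l x : ℂ) (n k : ℕ) :
    ((n : ℂ) + 2) * gegenbauerTerm l (n + 2) x (k + 1) =
      2 * (n + 1 + l) * x * gegenbauerTerm l (n + 1) x (k + 1) -
        (n + 2 * l) * gegenbauerTerm l n x k := by
  rcases lt_or_ge n (2 * k) with h | h
  · simp only [gegenbauerTerm_of_lt h, gegenbauerTerm_of_lt (show n + 2 < 2 * (k + 1) by omega),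
      gegenbauerTerm_of_lt (show n + 1 < 2 * (k + 1) by omega), mul_zero, sub_zero]
  obtain ⟨a, rfl⟩ : ∃ a, n = a + 2 * k := ⟨n - 2 * k, by omega⟩
  have hkfact := Nat.factorial_ne_zero k
  have hk : (k : ℂ) + 1 ≠ 0 := by exact_mod_cast k.succ_ne_zero
  rw [gegenbauerTerm_of_eq (show a + 2 * k + 2 = a + 2 * (k + 1) by ring),
    gegenbauerTerm_of_eq rfl]
  rcases a with _ | a
  · rw [gegenbauerTerm_of_lt (by omega), ← add_assoc, ascPochhammer_succ_eval,
      Nat.factorial_succ k, pow_succ (-1 : ℂ)]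
    push_cast
    field_simp
    ring
  · have hafact := Nat.factorial_ne_zero a
    have ha : (a : ℂ) + 1 ≠ 0 := by exact_mod_cast a.succ_ne_zero
    rw [gegenbauerTerm_of_eq (show a + 1 + 2 * k + 1 = a + 2 * (k + 1) by ring),
      show a + 1 + (k + 1) = a + (k + 1) + 1 by ring, ascPochhammer_succ_eval,
      show a + 1 + k = a + (k + 1) by ring, Nat.factorial_succ k, Nat.factorial_succ a,
      pow_succ (-1 : ℂ)]
    push_cast
    field_simp
    ring

lemma gegenbauer_add_two (l x : ℂ) (n : ℕ) :
    ((n : ℂ) + 2) * gegenbauer l (n + 2) x =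
      2 * (n + 1 + l) * x * gegenbauer l (n + 1) x - (n + 2 * l) * gegenbauer l n x := by
  rw [gegenbauer_eq_sum_gegenbauerTerm l x (show (n + 2) / 2 + 1 ≤ n + 3 by omega),
    gegenbauer_eq_sum_gegenbauerTerm l x (show (n + 1) / 2 + 1 ≤ n + 3 by omega),
    gegenbauer_eq_sum_gegenbauerTerm l x (show n / 2 + 1 ≤ n + 2 by omega),
    Finset.sum_range_succ' _ (n + 2), Finset.sum_range_succ' _ (n + 2), mul_add, mul_add,
    Finset.mul_sum, Finset.mul_sum, Finset.mul_sum, gegenbauerTerm_add_two_zero,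
    Finset.sum_congr rfl fun k _ => gegenbauerTerm_add_two_succ l x n k, Finset.sum_sub_distrib]
  ring

lemma hasDerivAt_gegenbauerTerm_succ (l x : ℂ) (n k : ℕ) :
    HasDerivAt (fun x => gegenbauerTerm l (n + 1) x k)
      (2 * l * gegenbauerTerm (l + 1) n x k) x := by
  rcases lt_or_ge n (2 * k) with h | h
  · have hconst : (fun x => gegenbauerTerm l (n + 1) x k) =
        fun _ => gegenbauerTerm l (n + 1) 0 k := by
      funext y
      rcases (show n + 1 < 2 * k ∨ n + 1 = 0 + 2 * k by omega) with h' | h'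
      · simp only [gegenbauerTerm_of_lt h']
      · simp only [gegenbauerTerm_of_eq h', pow_zero]
    rw [hconst, gegenbauerTerm_of_lt h, mul_zero]
    exact hasDerivAt_const x _
  obtain ⟨a, rfl⟩ : ∃ a, n = a + 2 * k := ⟨n - 2 * k, by omega⟩
  simp only [gegenbauerTerm_of_eq (show a + 2 * k + 1 = a + 1 + 2 * k by ring),
    gegenbauerTerm_of_eq (show a + 2 * k = a + 2 * k from rfl)]
  have hpow : HasDerivAt (fun y : ℂ => (2 * y) ^ (a + 1))
      (((a + 1 : ℕ) : ℂ) * (2 * x) ^ a * 2) x := by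
    simpa using ((hasDerivAt_id x).const_mul 2).fun_pow (a + 1)
  refine (hpow.const_mul _).congr_deriv ?_
  have hpoch := mul_eval_ascPochhammer_add_one l (a + k)
  rw [← ascPochhammer_succ_eval, add_right_comm] at hpoch
  rw [← hpoch, Nat.factorial_succ a]
  have hafact := Nat.factorial_ne_zero a
  have hkfact := Nat.factorial_ne_zero k
  have ha : (a : ℂ) + 1 ≠ 0 := by exact_mod_cast a.succ_ne_zero
  push_cast
  field_simp

lemma hasDerivAt_gegenbauer_succ (l x : ℂ) (n : ℕ) :
    HasDerivAt (fun x => gegenbauer l (n + 1) x) (2 * l * gegenbauer (l + 1) n x) x := by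
  simp only [fun y => gegenbauer_eq_sum_gegenbauerTerm l y (show (n + 1) / 2 + 1 ≤ n + 2 by omega),
    gegenbauer_eq_sum_gegenbauerTerm (l + 1) x (show n / 2 + 1 ≤ n + 2 by omega), Finset.mul_sum]
  exact HasDerivAt.fun_sum fun k _ => hasDerivAt_gegenbauerTerm_succ l x n k

lemma continuous_gegenbauer (l : ℂ) (n : ℕ) : Continuous (gegenbauer l n) := by
  unfold gegenbauer
  fun_prop

lemma gegenbauer_connection (l x : ℂ) (n : ℕ) :
    ((n : ℂ) + 2 + l) * gegenbauer l (n + 2) x =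
      l * (gegenbauer (l + 1) (n + 2) x - gegenbauer (l + 1) n x) := by
  -- Differentiate the recurrence of order `l` and compare with the recurrence of order `l + 1`.
  have hleft := (hasDerivAt_gegenbauer_succ l x (n + 2)).const_mul (((n + 1 : ℕ) : ℂ) + 2)
  have hright := ((((hasDerivAt_id x).const_mul (2 * (((n + 1 : ℕ) : ℂ) + 1 + l))).mul
    (hasDerivAt_gegenbauer_succ l x (n + 1))).sub
      ((hasDerivAt_gegenbauer_succ l x n).const_mul (((n + 1 : ℕ) : ℂ) + 2 * l)))
  have hderiv := (hright.congr_of_eventuallyEq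
    (Eventually.of_forall fun y => gegenbauer_add_two l y (n + 1))).unique hleft
  have hrec := gegenbauer_add_two (l + 1) x n
  simp only [id] at hderiv
  push_cast at hderiv
  linear_combination hderiv / 2 + l * hrec

lemma gegenbauer_add_two_eq (l x : ℂ) (n : ℕ) (hl : (n : ℂ) + 2 + l ≠ 0) :
    ((n : ℂ) + 2) * gegenbauer l (n + 2) x =
      2 * l * (x * gegenbauer (l + 1) (n + 1) x - gegenbauer (l + 1) n x) := by
  apply mul_left_cancel₀ hl
  linear_combination ((n : ℂ) + 2) * gegenbauer_connection l x n +
    l * gegenbauer_add_two (l + 1) x n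

lemma gegenbauer_succ_eq (l x : ℂ) (n : ℕ) (hl : (n : ℂ) + 1 + l ≠ 0) :
    ((n : ℂ) + 1 + 2 * l) * gegenbauer l (n + 1) x =
      2 * l * (gegenbauer (l + 1) (n + 1) x - x * gegenbauer (l + 1) n x) := by
  rcases n with _ | n
  · simp only [zero_add, gegenbauer_one, gegenbauer_zero, Nat.cast_zero]
    ring
  push_cast at hl ⊢
  apply mul_left_cancel₀ hl
  linear_combination ((n : ℂ) + 2 + 2 * l) * gegenbauer_connection l x n -
    l * gegenbauer_add_two (l + 1) x n

lemma one_sub_sq_mul_gegenbauer (l x : ℂ) (n : ℕ) (h₁ : (n : ℂ) + 1 + l ≠ 0)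
    (h₂ : (n : ℂ) + 2 + l ≠ 0) :
    (1 - x ^ 2) * (2 * l * gegenbauer (l + 1) n x) =
      (n + 1 + 2 * l) * x * gegenbauer l (n + 1) x - (n + 2) * gegenbauer l (n + 2) x := by
  linear_combination (-x) * gegenbauer_succ_eq l x n h₁ + gegenbauer_add_two_eq l x n h₂

/-- The formal binomial series `(1 - z X) ^ (-l)`. The generating function of the Gegenbauer
polynomials at `cos θ` is the product of two of them, at `z = exp (± i θ)`. -/
noncomputable def negBinomialSeries (l z : ℂ) : PowerSeries ℂ :=
  PowerSeries.mk fun n => z ^ n * ((ascPochhammer ℂ n).eval l / (n.factorial : ℂ))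

open PowerSeries in
lemma one_sub_mul_derivative_negBinomialSeries (l z : ℂ) :
    (1 - C z * X) * d⁄dX ℂ (negBinomialSeries l z) = C (l * z) * negBinomialSeries l z := by
  ext n
  rw [sub_mul, one_mul, map_sub, mul_assoc, coeff_C_mul, coeff_C_mul, coeff_derivative]
  rcases n with _ | n
  · simp [negBinomialSeries, mul_comm]
  simp only [coeff_succ_X_mul, coeff_derivative, negBinomialSeries, coeff_mk]
  rw [ascPochhammer_succ_eval (n + 1), Nat.factorial_succ (n + 1)]
  have hfact := Nat.factorial_ne_zero (n + 1)
  have hn : (n : ℂ) + 1 + 1 ≠ 0 := by exact_mod_cast (n + 1).succ_ne_zero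
  push_cast
  field_simp
  ring

open PowerSeries in
lemma derivative_negBinomialSeries_mul (l : ℂ) {z w : ℂ} (hzw : z * w = 1) :
    let G := negBinomialSeries l z * negBinomialSeries l w
    d⁄dX ℂ G + X * (X * d⁄dX ℂ G) + C (2 * l) * (X * G) =
      C (z + w) * (X * d⁄dX ℂ G) + C (l * (z + w)) * G := by
  intro G
  have hC : (C z : PowerSeries ℂ) * C w = 1 := by rw [← map_mul, hzw, map_one]
  have hz := one_sub_mul_derivative_negBinomialSeries l z
  have hw := one_sub_mul_derivative_negBinomialSeries l w
  have hG : d⁄dX ℂ G = negBinomialSeries l z * d⁄dX ℂ (negBinomialSeries l w) +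
      negBinomialSeries l w * d⁄dX ℂ (negBinomialSeries l z) := by
    simp only [G, Derivation.leibniz, smul_eq_mul]
  rw [hG]
  simp only [G, map_mul, map_add, map_ofNat] at hz hw hC ⊢
  linear_combination (1 - C w * X) * negBinomialSeries l w * hz +
    (1 - C z * X) * negBinomialSeries l z * hw +
    (-(X * X) * (negBinomialSeries l z * d⁄dX ℂ (negBinomialSeries l w) +
      negBinomialSeries l w * d⁄dX ℂ (negBinomialSeries l z)) -
      2 * C l * X * negBinomialSeries l z * negBinomialSeries l w) * hC

open PowerSeries in
lemma coeff_negBinomialSeries_mul_add_two (l : ℂ) {z w : ℂ} (hzw : z * w = 1) (n : ℕ) :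
    let G := negBinomialSeries l z * negBinomialSeries l w
    ((n : ℂ) + 2) * coeff (n + 2) G =
      (n + 1 + l) * (z + w) * coeff (n + 1) G - (n + 2 * l) * coeff n G := by
  intro G
  have hcoeff := congrArg (coeff (n + 1)) (derivative_negBinomialSeries_mul l hzw)
  have hXX : coeff (n + 1) (X * (X * d⁄dX ℂ G)) = coeff n G * n := by
    rcases n with _ | n
    · simp
    · rw [coeff_succ_X_mul, coeff_succ_X_mul, coeff_derivative]
      push_cast
      rfl
  rw [map_add, map_add, map_add, hXX] at hcoeff
  simp only [coeff_C_mul, coeff_succ_X_mul, coeff_derivative] at hcoeff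
  push_cast at hcoeff
  linear_combination hcoeff

lemma gegenbauer_eq_coeff (l : ℂ) {z w x : ℂ} (hzw : z * w = 1) (hx : z + w = 2 * x) (n : ℕ) :
    gegenbauer l n x =
      PowerSeries.coeff n (negBinomialSeries l z * negBinomialSeries l w) := by
  induction n using Nat.twoStepInduction with
  | zero => simp [gegenbauer_zero, negBinomialSeries, PowerSeries.coeff_mul]
  | one =>
    rw [gegenbauer_one, PowerSeries.coeff_mul, Finset.Nat.sum_antidiagonal_eq_sum_range_succ_mk]
    simp only [Finset.sum_range_succ, Finset.sum_range_zero, negBinomialSeries,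
      PowerSeries.coeff_mk, tsub_zero, tsub_self, ascPochhammer_zero, ascPochhammer_one,
      Polynomial.eval_one, Polynomial.eval_X, Nat.factorial_zero, Nat.factorial_one, Nat.cast_one,
      pow_zero, pow_one]
    linear_combination (-l) * hx
  | more n h₀ h₁ =>
    have hn : (n : ℂ) + 2 ≠ 0 := by exact_mod_cast (n + 1).succ_ne_zero
    apply mul_left_cancel₀ hn
    rw [gegenbauer_add_two, coeff_negBinomialSeries_mul_add_two l hzw, h₀, h₁, hx]
    ring

lemma eval_ascPochhammer_ofReal (l : ℝ) (n : ℕ) :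
    (ascPochhammer ℂ n).eval (l : ℂ) = (((ascPochhammer ℝ n).eval l : ℝ) : ℂ) := by
  rw [← ascPochhammer_map (algebraMap ℝ ℂ), Polynomial.eval_map_algebraMap,
    ← Complex.coe_algebraMap, Polynomial.aeval_algebraMap_apply_eq_algebraMap_eval]

lemma coeff_negBinomialSeries_one (l : ℝ) (n : ℕ) :
    PowerSeries.coeff n (negBinomialSeries l 1) =
      (((ascPochhammer ℝ n).eval l / n.factorial : ℝ) : ℂ) := by
  simp [negBinomialSeries, eval_ascPochhammer_ofReal]

lemma norm_coeff_negBinomialSeries {l : ℝ} (hl : 0 < l) {z : ℂ} (hz : ‖z‖ = 1) (n : ℕ) :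
    ‖PowerSeries.coeff n (negBinomialSeries l z)‖ =
      (ascPochhammer ℝ n).eval l / n.factorial := by
  have hpos := ascPochhammer_pos n l hl
  rw [negBinomialSeries, PowerSeries.coeff_mk, norm_mul, norm_pow, hz, one_pow, one_mul,
    eval_ascPochhammer_ofReal, norm_div, Complex.norm_real, Complex.norm_natCast,
    Real.norm_of_nonneg hpos.le]

lemma norm_gegenbauer_le_norm_gegenbauer_one {l : ℝ} (hl : 0 < l) (n : ℕ) {x : ℝ}
    (hx : x ∈ Set.Icc (-1 : ℝ) 1) : ‖gegenbauer l n x‖ ≤ ‖gegenbauer l n 1‖ := by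
  set S : ℝ := ∑ p ∈ Finset.HasAntidiagonal.antidiagonal n,
    (ascPochhammer ℝ p.1).eval l / p.1.factorial * ((ascPochhammer ℝ p.2).eval l / p.2.factorial)
  have hone : gegenbauer l n 1 = (S : ℂ) := by
    rw [gegenbauer_eq_coeff l (mul_one 1) (by norm_num), PowerSeries.coeff_mul]
    simp only [coeff_negBinomialSeries_one, S, Complex.ofReal_sum, Complex.ofReal_mul]
  have hle : ‖gegenbauer l n x‖ ≤ S := by
    set θ := Real.arccos x
    have hcos : Real.cos θ = x := Real.cos_arccos hx.1 hx.2
    rw [gegenbauer_eq_coeff l (z := Complex.exp (θ * Complex.I))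
      (w := Complex.exp ((-θ : ℝ) * Complex.I)) (by rw [← Complex.exp_add]; simp)
      (by rw [← hcos, Complex.ofReal_cos, Complex.cos]; push_cast; ring), PowerSeries.coeff_mul]
    refine (norm_sum_le _ _).trans_eq (Finset.sum_congr rfl fun p _ => ?_)
    rw [norm_mul, norm_coeff_negBinomialSeries hl (Complex.norm_exp_ofReal_mul_I θ),
      norm_coeff_negBinomialSeries hl (Complex.norm_exp_ofReal_mul_I (-θ))]
  rw [hone, Complex.norm_real]
  exact hle.trans (le_abs_self S)

lemma gegenbauer_eval_one (l : ℂ) (n : ℕ) :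
    gegenbauer l n 1 = (ascPochhammer ℂ n).eval (2 * l) / n.factorial := by
  induction n using Nat.twoStepInduction with
  | zero => simp [gegenbauer_zero]
  | one => simp [gegenbauer_one]
  | more n h₀ h₁ =>
    have hn : (n : ℂ) + 1 + 1 ≠ 0 := by exact_mod_cast (n + 1).succ_ne_zero
    have hn' : (n : ℂ) + 1 ≠ 0 := by exact_mod_cast n.succ_ne_zero
    have hfact := Nat.factorial_ne_zero n
    have hrec := gegenbauer_add_two l 1 n
    rw [show (n : ℂ) + 2 = n + 1 + 1 by ring] at hrec
    apply mul_left_cancel₀ hn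
    rw [hrec, h₀, h₁, ascPochhammer_succ_eval (n + 1), ascPochhammer_succ_eval n,
      Nat.factorial_succ (n + 1), Nat.factorial_succ n]
    push_cast
    field_simp
    ring

lemma eval_ascPochhammer_eq_prod (s : ℂ) (n : ℕ) :
    (ascPochhammer ℂ n).eval s = ∏ j ∈ Finset.range n, (s + j) := by
  induction n with
  | zero => simp
  | succ n ih => rw [ascPochhammer_succ_eval, Finset.prod_range_succ, ih]

lemma tendsto_eval_ascPochhammer_div (s : ℂ) :
    Tendsto (fun n : ℕ => (ascPochhammer ℂ n).eval s / (n.factorial * (n : ℂ) ^ (s - 1))) atTop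
      (nhds (Complex.Gamma s)⁻¹) := by
  by_cases hs : Complex.Gamma s = 0
  · obtain ⟨m, rfl⟩ := (Complex.Gamma_eq_zero_iff s).mp hs
    rw [hs, inv_zero]
    refine tendsto_const_nhds.congr' ?_
    filter_upwards [eventually_gt_atTop m] with n hn
    rw [ascPochhammer_eval_neg_coe_nat_of_lt hn, zero_div]
  have hne (n : ℕ) : s + n ≠ 0 := fun h =>
    hs ((Complex.Gamma_eq_zero_iff s).mpr ⟨n, eq_neg_of_add_eq_zero_left h⟩)
  have hlim := ((Complex.GammaSeq_tendsto_Gamma s).inv₀ hs).mul (tendsto_natCast_div_add_atTop s)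
  rw [mul_one] at hlim
  refine hlim.congr' ?_
  filter_upwards [eventually_ne_atTop 0] with n hn
  have hn' : (n : ℂ) ≠ 0 := Nat.cast_ne_zero.mpr hn
  have hfact := Nat.factorial_ne_zero n
  have hn_add := hne n
  rw [add_comm] at hn_add
  rw [Complex.GammaSeq, Finset.prod_range_succ, ← eval_ascPochhammer_eq_prod,
    Complex.cpow_sub _ _ hn', Complex.cpow_one, add_comm s]
  field_simp

lemma exists_forall_norm_le_of_tendsto_div_cpow {f : ℕ → ℂ} {s L : ℂ}
    (h : Tendsto (fun n : ℕ => f n / (n : ℂ) ^ s) atTop (nhds L)) :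
    ∃ C, 0 < C ∧ ∀ n : ℕ, ‖f n‖ ≤ C * ((n : ℝ) + 1) ^ s.re := by
  have hcpow : f =O[atTop] fun n : ℕ => (n : ℂ) ^ s := by
    refine Asymptotics.isBigO_of_div_tendsto_nhds ?_ L h
    filter_upwards [eventually_ne_atTop 0] with n hn hzero
    exact absurd hzero (by simp [Complex.cpow_eq_zero_iff, hn])
  have hrpow : (fun n : ℕ => (n : ℂ) ^ s) =O[atTop] fun n : ℕ => (n : ℝ) ^ s.re := by
    refine Asymptotics.IsBigO.of_bound 1 ?_
    filter_upwards [eventually_gt_atTop 0] with n hn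
    rw [Complex.norm_natCast_cpow_of_pos hn, one_mul]
    exact Real.le_norm_self _
  have hratio : Tendsto (fun n : ℕ => (n : ℝ) ^ s.re / ((n : ℝ) + 1) ^ s.re) atTop
      (nhds (1 ^ s.re)) :=
    ((tendsto_natCast_div_add_atTop (1 : ℝ)).rpow_const (Or.inl one_ne_zero)).congr fun n =>
      Real.div_rpow (by positivity) (by positivity) s.re
  have hpos (n : ℕ) : 0 < ((n : ℝ) + 1) ^ s.re := by positivity
  have hshift : (fun n : ℕ => (n : ℝ) ^ s.re) =O[atTop] fun n : ℕ => ((n : ℝ) + 1) ^ s.re :=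
    Asymptotics.isBigO_of_div_tendsto_nhds
      (Eventually.of_forall fun n hn => absurd hn (hpos n).ne') _ hratio
  obtain ⟨C, hC, hbound⟩ := Asymptotics.bound_of_isBigO_nat_atTop ((hcpow.trans hrpow).trans hshift)
  refine ⟨C, hC, fun n => (hbound (hpos n).ne').trans_eq ?_⟩
  rw [Real.norm_of_nonneg (hpos n).le]

lemma exists_norm_gegenbauer_le {l : ℝ} (hl : 0 < l) :
    ∃ C, 0 < C ∧ ∀ (n : ℕ), ∀ x ∈ Set.Icc (-1 : ℝ) 1,
      ‖gegenbauer l n x‖ ≤ C * ((n : ℝ) + 1) ^ (2 * l - 1) := by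
  have hlim : Tendsto (fun n : ℕ => gegenbauer l n 1 / (n : ℂ) ^ (2 * l - 1 : ℂ)) atTop
      (nhds (Complex.Gamma (2 * l))⁻¹) :=
    (tendsto_eval_ascPochhammer_div (2 * l)).congr fun n => by
      rw [gegenbauer_eval_one, div_div]
  obtain ⟨C, hC, hbound⟩ := exists_forall_norm_le_of_tendsto_div_cpow hlim
  refine ⟨C, hC, fun n x hx => ?_⟩
  simpa using (norm_gegenbauer_le_norm_gegenbauer_one hl n hx).trans (hbound n)

/-- The entire function `1 / (Γ(A + z) Γ(A - z))`; the denominator of `bCoef` is built from it. -/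
noncomputable def recipGammaPair (A z : ℂ) : ℂ :=
  (Complex.Gamma (A + z))⁻¹ * (Complex.Gamma (A - z))⁻¹

lemma recipGammaPair_neg (A z : ℂ) : recipGammaPair A (-z) = recipGammaPair A z := by
  rw [recipGammaPair, recipGammaPair, mul_comm, sub_neg_eq_add, ← sub_eq_add_neg]

lemma inv_Gamma_sub_natCast (s : ℂ) (n : ℕ) :
    (Complex.Gamma (s - n))⁻¹ =
      (-1) ^ n * (ascPochhammer ℂ n).eval (1 - s) * (Complex.Gamma s)⁻¹ := by
  induction n with
  | zero => simp
  | succ n ih =>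
    have hstep := Complex.one_div_Gamma_eq_self_mul_one_div_Gamma_add_one (s - (n + 1 : ℕ))
    rw [show s - ((n + 1 : ℕ) : ℂ) + 1 = s - n by push_cast; ring, ih] at hstep
    rw [hstep, ascPochhammer_succ_eval]
    push_cast
    ring

lemma recipGammaPair_add_natCast {A z : ℂ} (hz : ∀ k : ℕ, A + z ≠ -k) (n : ℕ) :
    recipGammaPair A (z + n) = (-1) ^ n * recipGammaPair A z *
      ((ascPochhammer ℂ n).eval (1 - (A - z)) / (ascPochhammer ℂ n).eval (A + z)) := by
  have hG : Complex.Gamma (A + z) ≠ 0 := Complex.Gamma_ne_zero hz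
  rw [recipGammaPair, ← add_assoc, ← sub_sub, inv_Gamma_sub_natCast, recipGammaPair,
    ← Complex.Gamma_add_nat_div_Gamma_eq _ hz]
  field_simp

lemma ne_neg_natCast_of_re_pos {z : ℂ} (hz : 0 < z.re) (k : ℕ) : z ≠ -k := by
  rintro rfl
  have : (0 : ℝ) ≤ k := k.cast_nonneg
  simp only [Complex.neg_re, Complex.natCast_re] at hz
  linarith

lemma exists_norm_recipGammaPair_add_natCast_le {A z : ℂ} (hz : 0 < (A + z).re) :
    ∃ C, 0 < C ∧ ∀ n : ℕ,
      ‖recipGammaPair A (z + n)‖ ≤ C * ((n : ℝ) + 1) ^ (1 - 2 * A.re) := by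
  have hne := ne_neg_natCast_of_re_pos hz
  have hG : (Complex.Gamma (A + z))⁻¹ ≠ 0 := inv_ne_zero (Complex.Gamma_ne_zero hne)
  have hratio := (tendsto_eval_ascPochhammer_div (1 - (A - z))).div
    (tendsto_eval_ascPochhammer_div (A + z)) hG
  have hlim : Tendsto (fun n : ℕ => (ascPochhammer ℂ n).eval (1 - (A - z)) /
      (ascPochhammer ℂ n).eval (A + z) / (n : ℂ) ^ (1 - 2 * A)) atTop
        (nhds ((Complex.Gamma (1 - (A - z)))⁻¹ / (Complex.Gamma (A + z))⁻¹)) := by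
    refine hratio.congr' ?_
    filter_upwards [eventually_ne_atTop 0] with n hn
    have hn' : (n : ℂ) ≠ 0 := Nat.cast_ne_zero.mpr hn
    have hfact := Nat.factorial_ne_zero n
    have hcpow : (n : ℂ) ^ (1 - (A - z) - 1) = (n : ℂ) ^ (1 - 2 * A) * (n : ℂ) ^ (A + z - 1) := by
      rw [← Complex.cpow_add _ _ hn']
      ring_nf
    have hcpow_ne : (n : ℂ) ^ (A + z - 1) ≠ 0 := by simp [Complex.cpow_eq_zero_iff, hn]
    rw [Pi.div_apply, hcpow]
    field_simp
  obtain ⟨C, hC, hbound⟩ := exists_forall_norm_le_of_tendsto_div_cpow hlim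
  refine ⟨(‖recipGammaPair A z‖ + 1) * C, by positivity, fun n => ?_⟩
  have hn := hbound n
  rw [recipGammaPair_add_natCast hne, norm_mul, norm_mul, norm_pow, norm_neg, norm_one, one_pow,
    one_mul, mul_assoc]
  simp only [Complex.sub_re, Complex.one_re, Complex.mul_re, Complex.re_ofNat, Complex.im_ofNat,
    zero_mul, sub_zero] at hn
  gcongr
  linarith

lemma exists_norm_recipGammaPair_add_half_le {A z : ℂ} (hz : 0 < (A + z).re) (hA : 1 / 2 ≤ A.re) :
    ∃ C, 0 < C ∧ ∀ N : ℕ,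
      ‖recipGammaPair A (z + N / 2)‖ ≤ C * ((N : ℝ) + 1) ^ (1 - 2 * A.re) := by
  have hz' : 0 < (A + (z + 1 / 2)).re := by
    have hre : (A + (z + 1 / 2)).re = (A + z).re + 1 / 2 := by simp [add_assoc]
    linarith
  obtain ⟨C₀, hC₀, heven⟩ := exists_norm_recipGammaPair_add_natCast_le hz
  obtain ⟨C₁, hC₁, hodd⟩ := exists_norm_recipGammaPair_add_natCast_le hz'
  have hhalf {k N : ℕ} (hkN : N ≤ 2 * k + 1) : ((k : ℝ) + 1) ^ (1 - 2 * A.re) ≤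
      (1 / 2) ^ (1 - 2 * A.re) * ((N : ℝ) + 1) ^ (1 - 2 * A.re) := by
    rw [← Real.mul_rpow (by positivity) (by positivity)]
    refine Real.rpow_le_rpow_of_nonpos (by positivity) ?_ (by linarith)
    have : (N : ℝ) ≤ 2 * k + 1 := by exact_mod_cast hkN
    linarith
  refine ⟨(C₀ + C₁) * (1 / 2) ^ (1 - 2 * A.re), by positivity, fun N => ?_⟩
  rw [mul_assoc]
  rcases Nat.even_or_odd' N with ⟨k, rfl | rfl⟩
  · rw [show z + ((2 * k : ℕ) : ℂ) / 2 = z + k by push_cast; ring]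
    exact (heven k).trans (mul_le_mul (by linarith) (hhalf (by omega)) (by positivity)
      (by positivity))
  · rw [show z + ((2 * k + 1 : ℕ) : ℂ) / 2 = z + 1 / 2 + k by push_cast; ring]
    exact (hodd k).trans (mul_le_mul (by linarith) (hhalf le_rfl) (by positivity) (by positivity))

lemma recipGammaPair_sub_half (A z : ℂ) :
    recipGammaPair A (z - 1 / 2) = (A - 1 / 2 + z) * recipGammaPair (A + 1 / 2) z := by
  have hstep := Complex.one_div_Gamma_eq_self_mul_one_div_Gamma_add_one (A + (z - 1 / 2))
  rw [show A + (z - 1 / 2) + 1 = A + 1 / 2 + z by ring] at hstep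
  rw [recipGammaPair, recipGammaPair, hstep, show A - (z - 1 / 2) = A + 1 / 2 - z by ring]
  ring

lemma recipGammaPair_add_half (A z : ℂ) :
    recipGammaPair A (z + 1 / 2) = (A - 1 / 2 - z) * recipGammaPair (A + 1 / 2) z := by
  rw [← recipGammaPair_neg, ← recipGammaPair_neg (A + 1 / 2), neg_add', recipGammaPair_sub_half,
    sub_eq_add_neg _ z]

/-- The reciprocal of the product of four Gamma factors in `bCoef`, as a function of
`A = ν + 1 + (λ + μ) / 2`, `x = λ + ℓ` and `y = μ + m`. -/
noncomputable def recipGammaQuad (A x y : ℂ) : ℂ :=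
  recipGammaPair A ((x + y) / 2) * recipGammaPair A ((x - y) / 2)

lemma recipGammaQuad_comm (A x y : ℂ) : recipGammaQuad A x y = recipGammaQuad A y x := by
  rw [recipGammaQuad, recipGammaQuad, ← recipGammaPair_neg A ((x - y) / 2), add_comm x, ← neg_div,
    neg_sub]

lemma recipGammaQuad_sub_one_left (A x y : ℂ) :
    recipGammaQuad A (x - 1) y = (A - 1 / 2 + (x + y) / 2) * (A - 1 / 2 + (x - y) / 2) *
      recipGammaQuad (A + 1 / 2) x y := by
  rw [recipGammaQuad, recipGammaQuad, show (x - 1 + y) / 2 = (x + y) / 2 - 1 / 2 by ring,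
    show (x - 1 - y) / 2 = (x - y) / 2 - 1 / 2 by ring, recipGammaPair_sub_half,
    recipGammaPair_sub_half]
  ring

lemma recipGammaQuad_add_one_left (A x y : ℂ) :
    recipGammaQuad A (x + 1) y = (A - 1 / 2 - (x + y) / 2) * (A - 1 / 2 - (x - y) / 2) *
      recipGammaQuad (A + 1 / 2) x y := by
  rw [recipGammaQuad, recipGammaQuad, show (x + 1 + y) / 2 = (x + y) / 2 + 1 / 2 by ring,
    show (x + 1 - y) / 2 = (x - y) / 2 + 1 / 2 by ring, recipGammaPair_add_half,
    recipGammaPair_add_half]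
  ring

lemma recipGammaQuad_sub_recipGammaQuad (A x y : ℂ) :
    recipGammaQuad A (x - 1) y - recipGammaQuad A (x + 1) y =
      (2 * A - 1) * x * recipGammaQuad (A + 1 / 2) x y := by
  rw [recipGammaQuad_sub_one_left, recipGammaQuad_add_one_left]
  ring

lemma recipGammaQuad_contiguous (l μ ν x y : ℂ) :
    y * ((x - l) * recipGammaQuad (ν + 1 + (l + μ) / 2) (x - 1) y +
        (x + l) * recipGammaQuad (ν + 1 + (l + μ) / 2) (x + 1) y) +
      x * ((y - μ) * recipGammaQuad (ν + 1 + (l + μ) / 2) x (y - 1) +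
        (y + μ) * recipGammaQuad (ν + 1 + (l + μ) / 2) x (y + 1)) =
      (l + μ + 2 * ν + 1) * (2 * ν + 1) * (x * y) *
        recipGammaQuad (ν + 1 / 2 + 1 + (l + μ) / 2) x y := by
  rw [recipGammaQuad_sub_one_left, recipGammaQuad_add_one_left, recipGammaQuad_comm _ x (y - 1),
    recipGammaQuad_comm _ x (y + 1), recipGammaQuad_sub_one_left, recipGammaQuad_add_one_left,
    recipGammaQuad_comm _ y x,
    show ν + 1 / 2 + 1 + (l + μ) / 2 = ν + 1 + (l + μ) / 2 + 1 / 2 by ring]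
  ring

lemma exists_norm_recipGammaQuad_le {l μ : ℝ} {A : ℂ} (h₁ : (l + μ) / 2 + 1 / 2 ≤ A.re)
    (hl : 0 < l) (hμ : 0 < μ) :
    ∃ C, 0 < C ∧ ∀ i j : ℕ, ‖recipGammaQuad A (l + i) (μ + j)‖ ≤
      C * ((i : ℝ) + j + 1) ^ (1 - 2 * A.re) := by
  have hA : 1 / 2 ≤ A.re := by linarith
  have hre (z : ℝ) (hz : -(l + μ) / 2 ≤ z) : 0 < (A + z).re := by
    rw [Complex.add_re, Complex.ofReal_re]
    linarith
  obtain ⟨C₁, hC₁, hsum⟩ := exists_norm_recipGammaPair_add_half_le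
    (hre ((l + μ) / 2) (by linarith)) hA
  obtain ⟨C₂, hC₂, hdiff⟩ := exists_norm_recipGammaPair_add_half_le
    (hre ((l - μ) / 2) (by linarith)) hA
  obtain ⟨C₃, hC₃, hdiff'⟩ := exists_norm_recipGammaPair_add_half_le
    (hre ((μ - l) / 2) (by linarith)) hA
  have hdiff_le (i j : ℕ) : ‖recipGammaPair A ((l + i - (μ + j)) / 2)‖ ≤ C₂ + C₃ := by
    have hone (N : ℕ) : ((N : ℝ) + 1) ^ (1 - 2 * A.re) ≤ 1 :=
      Real.rpow_le_one_of_one_le_of_nonpos (by simp) (by linarith)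
    rcases le_total j i with hij | hij
    · obtain ⟨N, rfl⟩ := Nat.exists_eq_add_of_le hij
      rw [show ((l : ℂ) + (j + N : ℕ) - (μ + j)) / 2 = ((l - μ) / 2 : ℝ) + N / 2 by push_cast; ring]
      nlinarith [hdiff N, hone N]
    · obtain ⟨N, rfl⟩ := Nat.exists_eq_add_of_le hij
      rw [← recipGammaPair_neg,
        show -(((l : ℂ) + i - (μ + (i + N : ℕ))) / 2) = ((μ - l) / 2 : ℝ) + N / 2 by
          push_cast; ring]
      nlinarith [hdiff' N, hone N]
  refine ⟨C₁ * (C₂ + C₃), by positivity, fun i j => ?_⟩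
  have hsum' := hsum (i + j)
  rw [show (((l + μ) / 2 : ℝ) : ℂ) + (i + j : ℕ) / 2 = (l + i + (μ + j)) / 2 by push_cast; ring,
    Nat.cast_add] at hsum'
  rw [recipGammaQuad, norm_mul, mul_right_comm]
  exact mul_le_mul hsum' (hdiff_le i j) (norm_nonneg _) (by positivity)

lemma exists_norm_add_mul_gegenbauer_le {l : ℝ} (hl : 0 < l) :
    ∃ C, 0 < C ∧ ∀ (n : ℕ), ∀ x ∈ Set.Icc (-1 : ℝ) 1,
      ‖((l : ℂ) + n) * gegenbauer l n x‖ ≤ C * ((n : ℝ) + 1) ^ (2 * l) := by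
  obtain ⟨C, hC, hbound⟩ := exists_norm_gegenbauer_le hl
  refine ⟨(l + 1) * C, by positivity, fun n x hx => ?_⟩
  have hcoef : ‖(l : ℂ) + n‖ ≤ (l + 1) * (n + 1) := by
    rw [← Complex.ofReal_natCast, ← Complex.ofReal_add, Complex.norm_real,
      Real.norm_of_nonneg (by positivity)]
    have hln : 0 ≤ l * n := by positivity
    linarith
  calc ‖((l : ℂ) + n) * gegenbauer l n x‖
      ≤ (l + 1) * (n + 1) * (C * ((n : ℝ) + 1) ^ (2 * l - 1)) := by
        rw [norm_mul]
        exact mul_le_mul hcoef (hbound n x hx) (norm_nonneg _) (by positivity)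
    _ = (l + 1) * C * ((n : ℝ) + 1) ^ (2 * l) := by
        rw [Real.rpow_sub_one (by positivity)]
        field_simp

lemma exists_norm_succ_mul_gegenbauer_succ_le {l : ℝ} (hl : 0 < l) :
    ∃ C, 0 < C ∧ ∀ (n : ℕ), ∀ x ∈ Set.Icc (-1 : ℝ) 1,
      ‖((n : ℂ) + 1) * gegenbauer l (n + 1) x‖ ≤ C * ((n : ℝ) + 1) ^ (2 * l) := by
  obtain ⟨C, hC, hbound⟩ := exists_norm_add_mul_gegenbauer_le hl
  refine ⟨C * 2 ^ (2 * l), by positivity, fun n x hx => ?_⟩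
  have hcoef : ‖(n : ℂ) + 1‖ ≤ ‖(l : ℂ) + (n + 1 : ℕ)‖ := by
    rw [← Nat.cast_add_one, Complex.norm_natCast, ← Complex.ofReal_natCast, ← Complex.ofReal_add,
      Complex.norm_real, Real.norm_of_nonneg (by positivity)]
    linarith
  calc ‖((n : ℂ) + 1) * gegenbauer l (n + 1) x‖
      ≤ ‖((l : ℂ) + (n + 1 : ℕ)) * gegenbauer l (n + 1) x‖ := by
        rw [norm_mul, norm_mul]
        gcongr
    _ ≤ C * (((n + 1 : ℕ) : ℝ) + 1) ^ (2 * l) := hbound (n + 1) x hx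
    _ ≤ C * (2 * ((n : ℝ) + 1)) ^ (2 * l) := by
        gcongr
        push_cast
        linarith
    _ = C * 2 ^ (2 * l) * ((n : ℝ) + 1) ^ (2 * l) := by
        rw [Real.mul_rpow (by positivity) (by positivity), mul_assoc]

/-- The summable weight on `ℕ × ℕ` that dominates all the double series of this development. -/
noncomputable def doubleWeight (p : ℕ × ℕ) : ℝ :=
  ((p.1 : ℝ) + 1) ^ (-(3 / 2) : ℝ) * ((p.2 : ℝ) + 1) ^ (-(3 / 2) : ℝ)

lemma summable_doubleWeight : Summable doubleWeight := by
  have hsum : Summable fun n : ℕ => ((n : ℝ) + 1) ^ (-(3 / 2) : ℝ) := by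
    simpa using (summable_nat_add_iff (f := fun n : ℕ => (n : ℝ) ^ (-(3 / 2) : ℝ)) 1).mpr
      (Real.summable_nat_rpow.mpr (by norm_num))
  exact hsum.mul_of_nonneg hsum (fun n => by positivity) fun n => by positivity

lemma rpow_mul_rpow_mul_rpow_le_doubleWeight {a b c : ℝ} (ha : 0 ≤ a) (hb : 0 ≤ b)
    (h : a + b + 3 ≤ c) (i j : ℕ) :
    ((i : ℝ) + 1) ^ a * ((j : ℝ) + 1) ^ b * ((i : ℝ) + j + 1) ^ (-c) ≤ doubleWeight (i, j) := by
  have hN : (1 : ℝ) ≤ (i : ℝ) + j + 1 := by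
    linarith [i.cast_nonneg (α := ℝ), j.cast_nonneg (α := ℝ)]
  have hsplit {k : ℕ} {e : ℝ} (he : 0 ≤ e) (hk : (k : ℝ) ≤ i + j) : ((k : ℝ) + 1) ^ e ≤
      ((i : ℝ) + j + 1) ^ (e + 3 / 2) * ((k : ℝ) + 1) ^ (-(3 / 2) : ℝ) := by
    calc ((k : ℝ) + 1) ^ e = ((k : ℝ) + 1) ^ (e + 3 / 2) * ((k : ℝ) + 1) ^ (-(3 / 2) : ℝ) := by
          rw [← Real.rpow_add (by positivity)]
          ring_nf
      _ ≤ _ := by gcongr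
  calc ((i : ℝ) + 1) ^ a * ((j : ℝ) + 1) ^ b * ((i : ℝ) + j + 1) ^ (-c)
      ≤ (((i : ℝ) + j + 1) ^ (a + 3 / 2) * ((i : ℝ) + 1) ^ (-(3 / 2) : ℝ)) *
          (((i : ℝ) + j + 1) ^ (b + 3 / 2) * ((j : ℝ) + 1) ^ (-(3 / 2) : ℝ)) *
          ((i : ℝ) + j + 1) ^ (-c) := by
        gcongr
        · exact hsplit ha (by simp)
        · exact hsplit hb (by simp)
    _ = ((i : ℝ) + j + 1) ^ (a + 3 / 2 + (b + 3 / 2) + -c) * doubleWeight (i, j) := by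
        rw [Real.rpow_add (by positivity) (a + 3 / 2 + (b + 3 / 2)) (-c),
          Real.rpow_add (by positivity) (a + 3 / 2) (b + 3 / 2), doubleWeight]
        ring
    _ ≤ doubleWeight (i, j) :=
        mul_le_of_le_one_left (by unfold doubleWeight; positivity)
          (Real.rpow_le_one_of_one_le_of_nonpos hN (by linarith))

lemma norm_mul_mul_le_doubleWeight {a b c Cu Cv Cw : ℝ} (ha : 0 ≤ a) (hb : 0 ≤ b)
    (h : a + b + 3 ≤ c) {i j : ℕ} {u v w : ℂ} (hu : ‖u‖ ≤ Cu * ((i : ℝ) + 1) ^ a)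
    (hv : ‖v‖ ≤ Cv * ((j : ℝ) + 1) ^ b) (hw : ‖w‖ ≤ Cw * ((i : ℝ) + j + 1) ^ (-c))
    (hCu : 0 < Cu) (hCv : 0 < Cv) (hCw : 0 < Cw) :
    ‖u * v * w‖ ≤ Cu * Cv * Cw * doubleWeight (i, j) := by
  calc ‖u * v * w‖ ≤ Cu * ((i : ℝ) + 1) ^ a * (Cv * ((j : ℝ) + 1) ^ b) *
        (Cw * ((i : ℝ) + j + 1) ^ (-c)) := by
        rw [norm_mul, norm_mul]
        gcongr
    _ = Cu * Cv * Cw * (((i : ℝ) + 1) ^ a * ((j : ℝ) + 1) ^ b * ((i : ℝ) + j + 1) ^ (-c)) := by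
        ring
    _ ≤ Cu * Cv * Cw * doubleWeight (i, j) := by
        gcongr
        exact rpow_mul_rpow_mul_rpow_le_doubleWeight ha hb h i j

section IndexShift

variable {β : Type*}

lemma hasSum_succ_fst_iff {f : ℕ × β → ℂ} {a : ℂ} (hf : ∀ b, f (0, b) = 0) :
    HasSum (fun p : ℕ × β => f (p.1 + 1, p.2)) a ↔ HasSum f a := by
  have hinj : Function.Injective fun p : ℕ × β => (p.1 + 1, p.2) := fun p q hpq => by
    simpa [Prod.ext_iff] using hpq
  refine hinj.hasSum_iff (f := f) fun p hp => ?_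
  rcases p with ⟨_ | n, b⟩
  · exact hf b
  · exact absurd ⟨(n, b), rfl⟩ hp

lemma hasSum_mul_gegenbauer (l x : ℂ) (K : ℂ → β → ℂ)
    (h₁ : Summable fun p : ℕ × β => (l + p.1) * gegenbauer l p.1 x * K (l + p.1) p.2)
    (h₂ : Summable fun p : ℕ × β => ((p.1 : ℂ) + 1) * gegenbauer l (p.1 + 1) x * K (l + p.1) p.2) :
    HasSum (fun p : ℕ × β => gegenbauer l p.1 x *
        (p.1 * K (l + p.1 - 1) p.2 + (p.1 + 2 * l) * K (l + p.1 + 1) p.2))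
      (2 * x * ∑' p : ℕ × β, (l + p.1) * gegenbauer l p.1 x * K (l + p.1) p.2) := by
  have hup : HasSum (fun p : ℕ × β => p.1 * gegenbauer l p.1 x * K (l + p.1 - 1) p.2)
      (∑' p : ℕ × β, ((p.1 : ℂ) + 1) * gegenbauer l (p.1 + 1) x * K (l + p.1) p.2) := by
    refine (hasSum_succ_fst_iff fun b => by simp).mp (h₂.hasSum.congr_fun fun p => ?_)
    push_cast
    rw [← add_assoc, add_sub_cancel_right]
  have hdown := (hasSum_succ_fst_iff fun b => by
    simp only [Nat.cast_zero, add_zero, zero_add, gegenbauer_zero, gegenbauer_one]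
    ring).mpr ((h₁.hasSum.mul_left (2 * x)).sub h₂.hasSum)
  have hadd := hup.add hdown
  rw [add_sub_cancel] at hadd
  refine hadd.congr_fun fun p => ?_
  have hrec := gegenbauer_add_two l x p.1
  push_cast
  rw [← add_assoc]
  linear_combination K (l + p.1 + 1) p.2 * hrec

lemma hasSum_gegenbauer_connection (l x : ℂ) (K : ℂ → β → ℂ)
    (h₁ : Summable fun p : ℕ × β => (l + p.1) * gegenbauer l p.1 x * K (l + p.1) p.2)
    (h₂ : Summable fun p : ℕ × β => gegenbauer (l + 1) p.1 x * K (l + p.1) p.2) :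
    HasSum (fun p : ℕ × β => l * gegenbauer (l + 1) p.1 x *
        (K (l + p.1) p.2 - K (l + p.1 + 2) p.2))
      (∑' p : ℕ × β, (l + p.1) * gegenbauer l p.1 x * K (l + p.1) p.2) := by
  have hdown := (hasSum_succ_fst_iff fun b => by
    simp only [Nat.cast_one, zero_add, gegenbauer_one]
    ring).mpr ((hasSum_succ_fst_iff fun b => by
      simp only [Nat.cast_zero, add_zero, gegenbauer_zero]
      ring).mpr ((h₂.hasSum.mul_left l).sub h₁.hasSum))
  have hsub := (h₂.hasSum.mul_left l).sub hdown
  rw [sub_sub_cancel] at hsub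
  refine hsub.congr_fun fun p => ?_
  have hconn := gegenbauer_connection l x p.1
  push_cast
  rw [show l + ((p.1 : ℂ) + 1 + 1) = l + p.1 + 2 by ring]
  linear_combination (-K (l + p.1 + 2) p.2) * hconn

end IndexShift

lemma summable_mul_mul_recipGammaQuad {l μ a b Cu Cv : ℝ} {A : ℂ} {u v : ℕ → ℂ} (hl : 0 < l)
    (hμ : 0 < μ) (hA : (l + μ) / 2 + 1 / 2 ≤ A.re) (ha : 0 ≤ a) (hb : 0 ≤ b)
    (hab : a + b + 4 ≤ 2 * A.re) (hCu : 0 < Cu) (hCv : 0 < Cv)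
    (hu : ∀ n, ‖u n‖ ≤ Cu * ((n : ℝ) + 1) ^ a) (hv : ∀ n, ‖v n‖ ≤ Cv * ((n : ℝ) + 1) ^ b) :
    Summable fun p : ℕ × ℕ => u p.1 * (v p.2 * recipGammaQuad A (l + p.1) (μ + p.2)) := by
  obtain ⟨Cw, hCw, hw⟩ := exists_norm_recipGammaQuad_le hA hl hμ
  refine .of_norm_bounded (summable_doubleWeight.mul_left (Cu * Cv * Cw)) fun p => ?_
  rw [← mul_assoc]
  refine norm_mul_mul_le_doubleWeight (c := 2 * A.re - 1) ha hb (by linarith) (hu p.1) (hv p.2) ?_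
    hCu hCv hCw
  rw [neg_sub]
  exact hw p.1 p.2

lemma re_add_one_add_half (l μ : ℝ) (ν : ℂ) :
    (ν + 1 + (l + μ) / 2).re = ν.re + 1 + (l + μ) / 2 := by
  rw [← Complex.ofReal_add, ← Complex.ofReal_ofNat, ← Complex.ofReal_div]
  simp

/-- The part of `bCoef l μ ν` that does not depend on the indices. -/
noncomputable def bCoefConst (l μ ν : ℂ) : ℂ :=
  Complex.Gamma (l + μ + 2 * ν + 1) * Complex.Gamma l * Complex.Gamma μ *
    Complex.Gamma (2 * ν + 1) / 2 ^ (2 * ν)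

lemma bCoefConst_comm (l μ ν : ℂ) : bCoefConst l μ ν = bCoefConst μ l ν := by
  rw [bCoefConst, bCoefConst, add_comm l μ]
  ring

lemma bCoefConst_add_one_left {l μ ν : ℂ} (hl : l ≠ 0) (h : l + μ + 2 * ν + 1 ≠ 0) :
    bCoefConst (l + 1) μ ν = bCoefConst l μ ν * ((l + μ + 2 * ν + 1) * l) := by
  rw [bCoefConst, bCoefConst, Complex.Gamma_add_one l hl,
    show l + 1 + μ + 2 * ν + 1 = l + μ + 2 * ν + 1 + 1 by ring, Complex.Gamma_add_one _ h]
  ring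

lemma bCoefConst_add_half {l μ ν : ℂ} (h : l + μ + 2 * ν + 1 ≠ 0) (hν : 2 * ν + 1 ≠ 0) :
    bCoefConst l μ (ν + 1 / 2) =
      bCoefConst l μ ν * ((l + μ + 2 * ν + 1) * (2 * ν + 1)) / 2 := by
  rw [bCoefConst, bCoefConst, show 2 * (ν + 1 / 2) = 2 * ν + 1 by ring,
    show l + μ + (2 * ν + 1) + 1 = l + μ + 2 * ν + 1 + 1 by ring, Complex.Gamma_add_one _ h,
    Complex.Gamma_add_one _ hν, Complex.cpow_add _ _ two_ne_zero, Complex.cpow_one]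
  field_simp

lemma bCoefConst_add_one_sub_half {l μ ν : ℂ} (hl : l ≠ 0) (hν : ν ≠ 0) :
    2 * ν * bCoefConst (l + 1) μ (ν - 1 / 2) = 2 * l * bCoefConst l μ ν := by
  rw [bCoefConst, bCoefConst, Complex.Gamma_add_one l hl,
    Complex.Gamma_add_one (2 * ν) (mul_ne_zero two_ne_zero hν),
    show l + 1 + μ + 2 * (ν - 1 / 2) + 1 = l + μ + 2 * ν + 1 by ring,
    show 2 * (ν - 1 / 2) + 1 = 2 * ν by ring, show 2 * (ν - 1 / 2) = 2 * ν - 1 by ring,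
    Complex.cpow_sub _ _ two_ne_zero, Complex.cpow_one]
  field_simp

/-- The summand `b^{l,μ,ν}_{i,j} C_i^l(s) C_j^μ(-t)` of the series for `2 (s + t)_+^{2ν}`: replacing
`t` by `-t` absorbs the sign `(-1)^j` of `bCoef` and makes the series symmetric under exchanging
`(l, s)` with `(μ, t)`. -/
noncomputable def kernelTerm (l μ : ℝ) (ν : ℂ) (s t : ℝ) (p : ℕ × ℕ) : ℂ :=
  bCoefConst l μ ν * ((l + p.1) * gegenbauer l p.1 s * ((μ + p.2) * gegenbauer μ p.2 t *
    recipGammaQuad (ν + 1 + (l + μ) / 2) (l + p.1) (μ + p.2)))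

/-- The sum of the series `kernelTerm`, eventually shown to be `2 (s + t)_+^{2ν}`. -/
noncomputable def kernelSum (l μ : ℝ) (ν : ℂ) (s t : ℝ) : ℂ := ∑' p, kernelTerm l μ ν s t p

lemma kernelTerm_swap (l μ : ℝ) (ν : ℂ) (s t : ℝ) (p : ℕ × ℕ) :
    kernelTerm l μ ν s t p.swap = kernelTerm μ l ν t s p := by
  rw [kernelTerm, kernelTerm, bCoefConst_comm, recipGammaQuad_comm, add_comm (l : ℂ) μ,
    Prod.fst_swap, Prod.snd_swap]
  ring

lemma kernelSum_comm (l μ : ℝ) (ν : ℂ) (s t : ℝ) :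
    kernelSum l μ ν s t = kernelSum μ l ν t s := by
  rw [kernelSum, kernelSum, ← (Equiv.prodComm ℕ ℕ).tsum_eq]
  exact tsum_congr (kernelTerm_swap l μ ν s t)

lemma kernelTerm_neg_neg (l μ : ℝ) (ν : ℂ) (s t : ℝ) (p : ℕ × ℕ) :
    kernelTerm l μ ν (-s) (-t) p = (-1) ^ (p.1 + p.2) * kernelTerm l μ ν s t p := by
  rw [kernelTerm, kernelTerm, Complex.ofReal_neg, Complex.ofReal_neg, gegenbauer_neg,
    gegenbauer_neg]
  ring

lemma continuous_kernelTerm (l μ : ℝ) (ν : ℂ) (p : ℕ × ℕ) :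
    Continuous fun q : ℝ × ℝ => kernelTerm l μ ν q.1 q.2 p := by
  have hl := continuous_gegenbauer l p.1
  have hμ := continuous_gegenbauer μ p.2
  simp only [kernelTerm]
  fun_prop

lemma bCoef_mul_gegenbauer_mul_gegenbauer (l μ : ℝ) (ν : ℂ) (s t : ℝ) (p : ℕ × ℕ) :
    bCoef l μ ν p.1 p.2 * gegenbauer l p.1 s * gegenbauer μ p.2 t =
      kernelTerm l μ ν s (-t) p := by
  rw [kernelTerm, bCoef, bCoefConst, recipGammaQuad, recipGammaPair, recipGammaPair,
    Complex.ofReal_neg, gegenbauer_neg,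
    show ν + 1 + ((l : ℂ) + μ) / 2 + (l + p.1 + (μ + p.2)) / 2 =
      ν + 1 + (l + μ) / 2 + (l + p.1) / 2 + (μ + p.2) / 2 by ring,
    show ν + 1 + ((l : ℂ) + μ) / 2 - (l + p.1 + (μ + p.2)) / 2 =
      ν + 1 + (l + μ) / 2 - (l + p.1) / 2 - (μ + p.2) / 2 by ring,
    show ν + 1 + ((l : ℂ) + μ) / 2 + (l + p.1 - (μ + p.2)) / 2 =
      ν + 1 + (l + μ) / 2 + (l + p.1) / 2 - (μ + p.2) / 2 by ring,
    show ν + 1 + ((l : ℂ) + μ) / 2 - (l + p.1 - (μ + p.2)) / 2 =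
      ν + 1 + (l + μ) / 2 - (l + p.1) / 2 + (μ + p.2) / 2 by ring]
  simp only [div_eq_mul_inv, mul_inv]
  ring

section Convergence

variable {l μ : ℝ} {ν : ℂ} {s t : ℝ}

lemma exists_norm_kernelTerm_le (hl : 0 < l) (hμ : 0 < μ) (hν : l + μ + 2 ≤ 2 * ν.re) :
    ∃ C, ∀ p, ∀ s ∈ Set.Icc (-1 : ℝ) 1, ∀ t ∈ Set.Icc (-1 : ℝ) 1,
      ‖kernelTerm l μ ν s t p‖ ≤ C * doubleWeight p := by
  have hA := re_add_one_add_half l μ ν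
  obtain ⟨Cu, hCu, hu⟩ := exists_norm_add_mul_gegenbauer_le hl
  obtain ⟨Cv, hCv, hv⟩ := exists_norm_add_mul_gegenbauer_le hμ
  obtain ⟨Cw, hCw, hw⟩ := exists_norm_recipGammaQuad_le (A := ν + 1 + (l + μ) / 2) (l := l) (μ := μ)
    (by linarith) hl hμ
  refine ⟨‖bCoefConst l μ ν‖ * (Cu * Cv * Cw), fun p s hs t ht => ?_⟩
  rw [kernelTerm, norm_mul, mul_assoc ‖_‖, ← mul_assoc (((l : ℂ) + p.1) * _)]
  refine mul_le_mul_of_nonneg_left ?_ (norm_nonneg _)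
  refine norm_mul_mul_le_doubleWeight (c := 2 * (ν + 1 + (l + μ) / 2).re - 1) (by positivity)
    (by positivity) (by linarith) (hu p.1 s hs) (hv p.2 t ht) ?_ hCu hCv hCw
  rw [neg_sub]
  exact hw p.1 p.2

lemma summable_norm_kernelTerm (hl : 0 < l) (hμ : 0 < μ) (hν : l + μ + 2 ≤ 2 * ν.re)
    (hs : s ∈ Set.Icc (-1 : ℝ) 1) (ht : t ∈ Set.Icc (-1 : ℝ) 1) :
    Summable fun p => ‖kernelTerm l μ ν s t p‖ := by
  obtain ⟨C, hC⟩ := exists_norm_kernelTerm_le hl hμ hν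
  exact .of_nonneg_of_le (fun _ => norm_nonneg _) (fun p => hC p s hs t ht)
    (summable_doubleWeight.mul_left C)

lemma hasSum_kernelTerm (hl : 0 < l) (hμ : 0 < μ) (hν : l + μ + 2 ≤ 2 * ν.re)
    (hs : s ∈ Set.Icc (-1 : ℝ) 1) (ht : t ∈ Set.Icc (-1 : ℝ) 1) :
    HasSum (kernelTerm l μ ν s t) (kernelSum l μ ν s t) :=
  (summable_norm_kernelTerm hl hμ hν hs ht).of_norm.hasSum

end Convergence

lemma re_two_mul (z : ℂ) : (2 * z).re = 2 * z.re := by simp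

lemma re_sub_half (z : ℂ) : (z - 1 / 2).re = z.re - 1 / 2 := by simp

section Relations

variable {l μ : ℝ} {ν : ℂ} {s t : ℝ}

lemma re_two_mul_add_pos (hl : 0 < l) (hμ : 0 < μ) (hν : 0 < 2 * ν.re) :
    0 < ((l : ℂ) + μ + 2 * ν + 1).re := by
  rw [Complex.add_re, Complex.add_re, Complex.add_re, re_two_mul, Complex.ofReal_re,
    Complex.ofReal_re, Complex.one_re]
  linarith

theorem kernelSum_add_one_left (hl : 0 < l) (hμ : 0 < μ) (hν : l + μ + 3 ≤ 2 * ν.re)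
    (hs : s ∈ Set.Icc (-1 : ℝ) 1) (ht : t ∈ Set.Icc (-1 : ℝ) 1) :
    kernelSum (l + 1) μ ν s t = kernelSum l μ ν s t := by
  have hA := re_add_one_add_half l μ ν
  obtain ⟨Cu, hCu, hu⟩ := exists_norm_add_mul_gegenbauer_le hl
  obtain ⟨Cu', hCu', hu'⟩ := exists_norm_gegenbauer_le (add_pos hl one_pos)
  obtain ⟨Cv, hCv, hv⟩ := exists_norm_add_mul_gegenbauer_le hμ
  have hsum := summable_mul_mul_recipGammaQuad (A := ν + 1 + (l + μ) / 2) hl hμ (by linarith)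
    (by positivity) (by positivity) (by linarith) hCu hCv (hu · s hs) (hv · t ht)
  have hsum' := summable_mul_mul_recipGammaQuad (A := ν + 1 + (l + μ) / 2) hl hμ (by linarith)
    (by linarith) (by positivity) (by linarith) hCu' hCv (hu' · s hs) (hv · t ht)
  rw [Complex.ofReal_add, Complex.ofReal_one] at hsum'
  have h := (hasSum_gegenbauer_connection l s
    (fun z (j : ℕ) => (μ + j) * gegenbauer μ j t * recipGammaQuad (ν + 1 + (l + μ) / 2) z (μ + j))
    hsum hsum').mul_left
    (bCoefConst l μ ν)
  rw [kernelSum, kernelSum, tsum_congr fun p => ?_, h.tsum_eq, ← tsum_mul_left]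
  · rfl
  · have hne := Complex.ne_zero_of_re_pos (re_two_mul_add_pos hl hμ (ν := ν) (by linarith))
    have hQ := recipGammaQuad_sub_recipGammaQuad (ν + 1 + (l + μ) / 2) (l + p.1 + 1) (μ + p.2)
    rw [add_sub_cancel_right, add_assoc _ (1 : ℂ) 1, one_add_one_eq_two,
      show (2 * (ν + 1 + ((l : ℂ) + μ) / 2) - 1) = l + μ + 2 * ν + 1 by ring] at hQ
    rw [kernelTerm, Complex.ofReal_add, Complex.ofReal_one,
      bCoefConst_add_one_left (by exact_mod_cast hl.ne') hne,
      show ν + 1 + ((l : ℂ) + 1 + μ) / 2 = ν + 1 + (l + μ) / 2 + 1 / 2 by ring,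
      add_right_comm (l : ℂ) 1]
    linear_combination (-bCoefConst l μ ν * l * gegenbauer (l + 1) p.1 s *
      ((μ + p.2) * gegenbauer μ p.2 t)) * hQ

lemma hasSum_mul_gegenbauer_recipGammaQuad (hl : 0 < l) (hμ : 0 < μ)
    (hν : l + μ + 2 ≤ 2 * ν.re) (hs : s ∈ Set.Icc (-1 : ℝ) 1) (ht : t ∈ Set.Icc (-1 : ℝ) 1) :
    HasSum (fun p : ℕ × ℕ => bCoefConst l μ ν * (gegenbauer l p.1 s * gegenbauer μ p.2 t) *
      ((μ + p.2) * (p.1 * recipGammaQuad (ν + 1 + (l + μ) / 2) (l + p.1 - 1) (μ + p.2) +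
        (p.1 + 2 * l) * recipGammaQuad (ν + 1 + (l + μ) / 2) (l + p.1 + 1) (μ + p.2))))
      (2 * s * kernelSum l μ ν s t) := by
  have hA := re_add_one_add_half l μ ν
  obtain ⟨Cu, hCu, hu⟩ := exists_norm_add_mul_gegenbauer_le hl
  obtain ⟨Cu', hCu', hu'⟩ := exists_norm_succ_mul_gegenbauer_succ_le hl
  obtain ⟨Cv, hCv, hv⟩ := exists_norm_add_mul_gegenbauer_le hμ
  have hsum := summable_mul_mul_recipGammaQuad (A := ν + 1 + (l + μ) / 2) hl hμ (by linarith)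
    (by positivity) (by positivity) (by linarith) hCu hCv (hu · s hs) (hv · t ht)
  have hsum' := summable_mul_mul_recipGammaQuad (A := ν + 1 + (l + μ) / 2) hl hμ (by linarith)
    (by positivity) (by positivity) (by linarith) hCu' hCv (hu' · s hs) (hv · t ht)
  have h := (hasSum_mul_gegenbauer l s
    (fun z (j : ℕ) => (μ + j) * gegenbauer μ j t * recipGammaQuad (ν + 1 + (l + μ) / 2) z (μ + j))
    hsum hsum').mul_left (bCoefConst l μ ν)
  rw [mul_left_comm, ← tsum_mul_left] at h
  refine h.congr_fun fun p => ?_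
  ring

theorem kernelSum_add_half (hl : 0 < l) (hμ : 0 < μ) (hν : l + μ + 2 ≤ 2 * ν.re)
    (hs : s ∈ Set.Icc (-1 : ℝ) 1) (ht : t ∈ Set.Icc (-1 : ℝ) 1) :
    kernelSum l μ (ν + 1 / 2) s t = (s + t) * kernelSum l μ ν s t := by
  have hsum_s := hasSum_mul_gegenbauer_recipGammaQuad hl hμ hν hs ht
  have hsum_t := (Equiv.prodComm ℕ ℕ).hasSum_iff.mpr
    (hasSum_mul_gegenbauer_recipGammaQuad hμ hl (by linarith) ht hs)
  have hne := Complex.ne_zero_of_re_pos (re_two_mul_add_pos hl hμ (ν := ν) (by linarith))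
  have hν' : 2 * ν + 1 ≠ 0 := Complex.ne_zero_of_re_pos (by
    rw [Complex.add_re, re_two_mul, Complex.one_re]
    linarith)
  have hadd := (hsum_s.add hsum_t).div_const 2
  rw [kernelSum_comm μ l, ← add_mul, ← mul_add, mul_assoc, mul_div_cancel_left₀ _ two_ne_zero]
    at hadd
  refine HasSum.tsum_eq (hadd.congr_fun fun p => ?_)
  have hQ := recipGammaQuad_contiguous l μ ν (l + p.1) (μ + p.2)
  rw [add_sub_cancel_left, add_sub_cancel_left] at hQ
  rw [Function.comp_apply, Equiv.prodComm_apply, Prod.fst_swap, Prod.snd_swap, kernelTerm,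
    bCoefConst_add_half hne hν', bCoefConst_comm μ, add_comm (μ : ℂ) l,
    recipGammaQuad_comm _ (μ + _ - 1), recipGammaQuad_comm _ (μ + _ + 1)]
  linear_combination (-bCoefConst l μ ν * gegenbauer l p.1 s * gegenbauer μ p.2 t / 2) * hQ

lemma hasDerivAt_kernelTerm_succ (hl : l ≠ 0) (hν : ν ≠ 0) (p : ℕ × ℕ) :
    HasDerivAt (fun s => kernelTerm l μ ν s t (p.1 + 1, p.2))
      (2 * ν * kernelTerm (l + 1) μ (ν - 1 / 2) s t p) s := by
  have h := (((hasDerivAt_gegenbauer_succ l s p.1).comp_ofReal.const_mul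
    (l + (p.1 + 1 : ℕ) : ℂ)).mul_const ((μ + p.2) * gegenbauer μ p.2 t *
      recipGammaQuad (ν + 1 + (l + μ) / 2) (l + (p.1 + 1 : ℕ)) (μ + p.2))).const_mul
        (bCoefConst l μ ν)
  refine h.congr_deriv ?_
  have hconst := bCoefConst_add_one_sub_half (μ := (μ : ℂ)) (Complex.ofReal_ne_zero.mpr hl) hν
  rw [kernelTerm]
  push_cast
  rw [show ν - 1 / 2 + 1 + ((l : ℂ) + 1 + μ) / 2 = ν + 1 + (l + μ) / 2 by ring,
    show (l : ℂ) + 1 + p.1 = l + (p.1 + 1) by ring]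
  linear_combination (-((l + (p.1 + 1)) * gegenbauer (l + 1) p.1 s * ((μ + p.2) *
    gegenbauer μ p.2 t * recipGammaQuad (ν + 1 + (l + μ) / 2) (l + (p.1 + 1)) (μ + p.2)))) *
      hconst

theorem hasDerivAt_kernelSum (hl : 0 < l) (hμ : 0 < μ) (hν : l + μ + 4 ≤ 2 * ν.re)
    (hs : s ∈ Set.Ioo (-1 : ℝ) 1) (ht : t ∈ Set.Icc (-1 : ℝ) 1) :
    HasDerivAt (fun s => kernelSum l μ ν s t) (2 * ν * kernelSum (l + 1) μ (ν - 1 / 2) s t) s := by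
  have hν0 : ν ≠ 0 := Complex.ne_zero_of_re_pos (by linarith)
  have hbase : (1 : ℝ) ∈ Set.Icc (-1 : ℝ) 1 := by simp
  have hdiff {x : ℝ} (hx : x ∈ Set.Ioo (-1 : ℝ) 1) :
      HasSum (fun p : ℕ × ℕ => kernelTerm l μ ν x t (p.1 + 1, p.2) -
        kernelTerm l μ ν 1 t (p.1 + 1, p.2)) (kernelSum l μ ν x t - kernelSum l μ ν 1 t) := by
    refine (hasSum_succ_fst_iff fun j => ?_).mpr
      ((hasSum_kernelTerm hl hμ (by linarith) (Set.Ioo_subset_Icc_self hx) ht).sub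
        (hasSum_kernelTerm hl hμ (by linarith) hbase ht))
    rw [kernelTerm, kernelTerm, gegenbauer_zero, gegenbauer_zero, sub_self]
  obtain ⟨C, hC⟩ := exists_norm_kernelTerm_le (l := l + 1) (ν := ν - 1 / 2) (by linarith) hμ (by
    rw [re_sub_half]
    linarith)
  have hderiv := hasDerivAt_tsum_of_isPreconnected (y := s)
    (summable_doubleWeight.mul_left (‖2 * ν‖ * C)) isOpen_Ioo isPreconnected_Ioo
    (fun p x _ => (hasDerivAt_kernelTerm_succ (μ := μ) (t := t) (s := x) hl.ne' hν0 p).sub_const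
      (kernelTerm l μ ν 1 t (p.1 + 1, p.2)))
    (fun p x hx => by
      rw [norm_mul, mul_assoc]
      exact mul_le_mul_of_nonneg_left (hC p x (Set.Ioo_subset_Icc_self hx) t ht) (norm_nonneg _))
    hs (hdiff hs).summable hs
  rw [tsum_mul_left] at hderiv
  refine (hderiv.const_add (kernelSum l μ ν 1 t)).congr_of_eventuallyEq ?_
  filter_upwards [Ioo_mem_nhds hs.1 hs.2] with x hx
  rw [(hdiff hx).tsum_eq, add_sub_cancel]

lemma continuousOn_kernelSum (hl : 0 < l) (hμ : 0 < μ) (hν : l + μ + 2 ≤ 2 * ν.re) :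
    ContinuousOn (fun q : ℝ × ℝ => kernelSum l μ ν q.1 q.2)
      (Set.Icc (-1 : ℝ) 1 ×ˢ Set.Icc (-1 : ℝ) 1) := by
  obtain ⟨C, hC⟩ := exists_norm_kernelTerm_le hl hμ hν
  exact continuousOn_tsum (fun p => (continuous_kernelTerm l μ ν p).continuousOn)
    (summable_doubleWeight.mul_left C) fun p q hq => hC p q.1 hq.1 q.2 hq.2

end Relations

/-- The truncated power `u ↦ u₊ ^ p`. -/
noncomputable def posPow (p : ℂ) (u : ℝ) : ℂ := ((max u 0 : ℝ) : ℂ) ^ p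

lemma posPow_of_nonneg (p : ℂ) {u : ℝ} (hu : 0 ≤ u) : posPow p u = (u : ℂ) ^ p := by
  rw [posPow, max_eq_left hu]

lemma posPow_of_nonpos {p : ℂ} (hp : p ≠ 0) {u : ℝ} (hu : u ≤ 0) : posPow p u = 0 := by
  rw [posPow, max_eq_right hu, Complex.ofReal_zero, Complex.zero_cpow hp]

lemma mul_posPow {p : ℂ} (hp : 0 < p.re) (u : ℝ) : u * posPow p u = posPow (p + 1) u := by
  have hp1 : p + 1 ≠ 0 := Complex.ne_zero_of_re_pos (by
    rw [Complex.add_re, Complex.one_re]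
    linarith)
  rcases le_or_gt u 0 with hu | hu
  · rw [posPow_of_nonpos (Complex.ne_zero_of_re_pos hp) hu, posPow_of_nonpos hp1 hu, mul_zero]
  · rw [posPow_of_nonneg _ hu.le, posPow_of_nonneg _ hu.le,
      Complex.cpow_add _ _ (Complex.ofReal_ne_zero.mpr hu.ne'), Complex.cpow_one, mul_comm]

lemma continuous_posPow {p : ℂ} (hp : 0 < p.re) : Continuous (posPow p) :=
  (Complex.continuous_ofReal_cpow_const hp).comp (continuous_id.max continuous_const)

lemma hasDerivAt_posPow {p : ℂ} (hp : 1 < p.re) (u : ℝ) :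
    HasDerivAt (posPow p) (p * posPow (p - 1) u) u := by
  have hp0 : p ≠ 0 := Complex.ne_zero_of_re_pos (by linarith)
  have hre : 0 < (p - 1).re := by
    rw [Complex.sub_re, Complex.one_re]
    linarith
  have hne : ∀ y : ℝ, y ≠ 0 → HasDerivAt (posPow p) (p * posPow (p - 1) y) y := by
    intro y hy
    rcases lt_or_gt_of_ne hy with hneg | hpos
    · rw [posPow_of_nonpos (Complex.ne_zero_of_re_pos hre) hneg.le, mul_zero]
      refine (hasDerivAt_const y 0).congr_of_eventuallyEq ?_
      filter_upwards [Iio_mem_nhds hneg] with x hx using posPow_of_nonpos hp0 (le_of_lt hx)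
    · rw [posPow_of_nonneg _ hpos.le]
      refine (((hasDerivAt_id (y : ℂ)).cpow_const (c := p) (.inl hpos)).comp_ofReal.congr_deriv
        (mul_one _)).congr_of_eventuallyEq ?_
      filter_upwards [Ioi_mem_nhds hpos] with x hx using posPow_of_nonneg p (le_of_lt hx)
  rcases eq_or_ne u 0 with rfl | hu
  · exact hasDerivAt_of_hasDerivAt_of_ne (g := fun y => p * posPow (p - 1) y) hne
      (continuous_posPow (by linarith)).continuousAt
      ((continuous_posPow hre).const_mul p).continuousAt
  · exact hne u hu

lemma mul_cpow_eq_mul_cpow_of_hasDerivAt {h h' : ℝ → ℂ} {p : ℂ} {a b t : ℝ} (hab : a ≤ b)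
    (hat : 0 < a + t) (hcont : ContinuousOn h (Set.Icc a b))
    (hderiv : ∀ x ∈ Set.Ico a b, HasDerivAt h (h' x) x)
    (heuler : ∀ x ∈ Set.Ico a b, (x + t) * h' x = p * h x) :
    h a * (b + t) ^ p = h b * (a + t) ^ p := by
  have hslit {x : ℝ} (hx : a ≤ x) : (x + t : ℂ) ∈ Complex.slitPlane := by
    rw [← Complex.ofReal_add, Complex.ofReal_mem_slitPlane]
    linarith
  have hpow {x : ℝ} (hx : a ≤ x) : HasDerivAt (fun x : ℝ => (x + t : ℂ) ^ (-p))
      (-p * (x + t) ^ (-p - 1)) x := by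
    simpa using (((hasDerivAt_id (x : ℂ)).add_const (t : ℂ)).cpow_const (c := -p)
      (hslit hx)).comp_ofReal
  have hconst := constant_of_has_deriv_right_zero (f := fun x : ℝ => h x * (x + t) ^ (-p))
    (hcont.mul fun x hx => (hpow hx.1).continuousAt.continuousWithinAt)
    (fun x hx => by
      refine (((hderiv x hx).mul (hpow hx.1)).congr_deriv ?_).hasDerivWithinAt
      have hx0 := Complex.slitPlane_ne_zero (hslit hx.1)
      rw [Complex.cpow_sub _ _ hx0, Complex.cpow_one]
      field_simp
      linear_combination ((x : ℂ) + t) ^ (-p) * heuler x hx) b ⟨hab, le_rfl⟩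
  have ha0 := Complex.slitPlane_ne_zero (hslit le_rfl)
  have hb0 := Complex.slitPlane_ne_zero (hslit hab)
  rw [Complex.cpow_neg, Complex.cpow_neg, ← div_eq_mul_inv, ← div_eq_mul_inv,
    div_eq_div_iff (Complex.cpow_ne_zero_iff.mpr (.inl hb0))
      (Complex.cpow_ne_zero_iff.mpr (.inl ha0))] at hconst
  exact hconst.symm

lemma mul_two_cpow_eq_mul_cpow_of_hasDerivAt {H H₁ H₂ : ℝ → ℝ → ℂ} {p : ℂ}
    (hcont : ContinuousOn (fun q : ℝ × ℝ => H q.1 q.2) (Set.Icc (-1 : ℝ) 1 ×ˢ Set.Icc (-1 : ℝ) 1))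
    (hderiv₁ : ∀ s ∈ Set.Ioo (-1 : ℝ) 1, ∀ t ∈ Set.Icc (-1 : ℝ) 1,
      HasDerivAt (fun s => H s t) (H₁ s t) s ∧ (s + t) * H₁ s t = p * H s t)
    (hderiv₂ : ∀ s ∈ Set.Icc (-1 : ℝ) 1, ∀ t ∈ Set.Ioo (-1 : ℝ) 1,
      HasDerivAt (fun t => H s t) (H₂ s t) t ∧ (s + t) * H₂ s t = p * H s t)
    {s t : ℝ} (hs : s ∈ Set.Icc (-1 : ℝ) 1) (ht : t ∈ Set.Icc (-1 : ℝ) 1) (hst : 0 < s + t) :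
    H s t * 2 ^ p = H 1 1 * (s + t) ^ p := by
  have hone : (1 : ℝ) ∈ Set.Icc (-1 : ℝ) 1 := by simp
  have hmove_s := mul_cpow_eq_mul_cpow_of_hasDerivAt (h := fun s => H s t) (p := p) hs.2 hst
    (hcont.comp (Continuous.prodMk_left t).continuousOn fun x hx => ⟨⟨hs.1.trans hx.1, hx.2⟩, ht⟩)
    (fun x hx => (hderiv₁ x ⟨by linarith [hx.1, ht.2], hx.2⟩ t ht).1)
    (fun x hx => (hderiv₁ x ⟨by linarith [hx.1, ht.2], hx.2⟩ t ht).2)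
  have hmove_t := mul_cpow_eq_mul_cpow_of_hasDerivAt (h := fun t => H 1 t) (p := p) (t := 1) ht.2
    (by linarith [hs.2])
    (hcont.comp (Continuous.prodMk_right 1).continuousOn
      fun x hx => ⟨hone, ⟨ht.1.trans hx.1, hx.2⟩⟩)
    (fun x hx => (hderiv₂ 1 hone x ⟨by linarith [hx.1, hs.2], hx.2⟩).1)
    (fun x hx => by
      rw [add_comm]
      exact (hderiv₂ 1 hone x ⟨by linarith [hx.1, hs.2], hx.2⟩).2)
  have hne : (t + 1 : ℂ) ^ p ≠ 0 := by
    refine Complex.cpow_ne_zero_iff.mpr (.inl ?_)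
    exact_mod_cast (show t + 1 ≠ 0 by linarith [hs.2])
  rw [Complex.ofReal_one, add_comm (1 : ℂ)] at hmove_s
  rw [Complex.ofReal_one, one_add_one_eq_two] at hmove_t
  refine mul_right_cancel₀ hne ?_
  linear_combination 2 ^ p * hmove_s + (s + t : ℂ) ^ p * hmove_t

section KernelSum

variable {l μ : ℝ} {ν : ℂ} {s t : ℝ}

lemma add_mul_kernelSum_add_one_left (hl : 0 < l) (hμ : 0 < μ) (hν : l + μ + 4 ≤ 2 * ν.re)
    (hs : s ∈ Set.Icc (-1 : ℝ) 1) (ht : t ∈ Set.Icc (-1 : ℝ) 1) :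
    (s + t) * kernelSum (l + 1) μ (ν - 1 / 2) s t = kernelSum l μ ν s t := by
  rw [← kernelSum_add_half (add_pos hl one_pos) hμ (by rw [re_sub_half]; linarith) hs ht,
    sub_add_cancel, kernelSum_add_one_left hl hμ (by linarith) hs ht]

lemma kernelSum_of_add_eq_zero (hl : 0 < l) (hμ : 0 < μ) (hν : l + μ + 3 ≤ 2 * ν.re)
    (hs : s ∈ Set.Icc (-1 : ℝ) 1) (ht : t ∈ Set.Icc (-1 : ℝ) 1) (hst : s + t = 0) :
    kernelSum l μ ν s t = 0 := by
  rw [← sub_add_cancel ν (1 / 2),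
    kernelSum_add_half hl hμ (by rw [re_sub_half]; linarith) hs ht, ← Complex.ofReal_add, hst,
    Complex.ofReal_zero, zero_mul]

lemma kernelSum_euler_left (hl : 0 < l) (hμ : 0 < μ) (hν : l + μ + 4 ≤ 2 * ν.re)
    (hs : s ∈ Set.Ioo (-1 : ℝ) 1) (ht : t ∈ Set.Icc (-1 : ℝ) 1) :
    HasDerivAt (fun s => kernelSum l μ ν s t) (2 * ν * kernelSum (l + 1) μ (ν - 1 / 2) s t) s ∧
      (s + t) * (2 * ν * kernelSum (l + 1) μ (ν - 1 / 2) s t) = 2 * ν * kernelSum l μ ν s t := by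
  refine ⟨hasDerivAt_kernelSum hl hμ hν hs ht, ?_⟩
  rw [mul_left_comm, add_mul_kernelSum_add_one_left hl hμ hν (Set.Ioo_subset_Icc_self hs) ht]

lemma kernelSum_euler_right (hl : 0 < l) (hμ : 0 < μ) (hν : l + μ + 4 ≤ 2 * ν.re)
    (hs : s ∈ Set.Icc (-1 : ℝ) 1) (ht : t ∈ Set.Ioo (-1 : ℝ) 1) :
    HasDerivAt (fun t => kernelSum l μ ν s t) (2 * ν * kernelSum (μ + 1) l (ν - 1 / 2) t s) t ∧
      (s + t) * (2 * ν * kernelSum (μ + 1) l (ν - 1 / 2) t s) = 2 * ν * kernelSum l μ ν s t := by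
  simp only [kernelSum_comm l μ ν]
  rw [add_comm (s : ℂ)]
  exact kernelSum_euler_left hμ hl (by linarith) ht hs

lemma kernelSum_mul_two_cpow_of_pos (hl : 0 < l) (hμ : 0 < μ) (hν : l + μ + 4 ≤ 2 * ν.re)
    (hs : s ∈ Set.Icc (-1 : ℝ) 1) (ht : t ∈ Set.Icc (-1 : ℝ) 1) (hst : 0 < s + t) :
    kernelSum l μ ν s t * 2 ^ (2 * ν) = kernelSum l μ ν 1 1 * (s + t) ^ (2 * ν) :=
  mul_two_cpow_eq_mul_cpow_of_hasDerivAt (continuousOn_kernelSum hl hμ (by linarith))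
    (fun _ hs _ ht => kernelSum_euler_left hl hμ hν hs ht)
    (fun _ hs _ ht => kernelSum_euler_right hl hμ hν hs ht) hs ht hst

lemma neg_mem_Icc_neg_one_one {x : ℝ} (hx : x ∈ Set.Icc (-1 : ℝ) 1) :
    -x ∈ Set.Icc (-1 : ℝ) 1 :=
  ⟨neg_le_neg hx.2, neg_le.mp hx.1⟩

lemma neg_mem_Ioo_neg_one_one {x : ℝ} (hx : x ∈ Set.Ioo (-1 : ℝ) 1) :
    -x ∈ Set.Ioo (-1 : ℝ) 1 :=
  ⟨neg_lt_neg hx.2, neg_lt.mp hx.1⟩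

lemma kernelSum_neg_neg_mul_two_cpow_of_pos (hl : 0 < l) (hμ : 0 < μ)
    (hν : l + μ + 4 ≤ 2 * ν.re) (hs : s ∈ Set.Icc (-1 : ℝ) 1) (ht : t ∈ Set.Icc (-1 : ℝ) 1)
    (hst : 0 < s + t) :
    kernelSum l μ ν (-s) (-t) * 2 ^ (2 * ν) = kernelSum l μ ν (-1) (-1) * (s + t) ^ (2 * ν) := by
  have hcont := (continuousOn_kernelSum (ν := ν) hl hμ (by linarith)).comp
    (continuous_neg (G := ℝ × ℝ)).continuousOn (s := Set.Icc (-1 : ℝ) 1 ×ˢ Set.Icc (-1 : ℝ) 1)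
    fun q hq => ⟨neg_mem_Icc_neg_one_one hq.1, neg_mem_Icc_neg_one_one hq.2⟩
  refine mul_two_cpow_eq_mul_cpow_of_hasDerivAt (H := fun s t => kernelSum l μ ν (-s) (-t))
    (H₁ := fun s t => -(2 * ν * kernelSum (l + 1) μ (ν - 1 / 2) (-s) (-t)))
    (H₂ := fun s t => -(2 * ν * kernelSum (μ + 1) l (ν - 1 / 2) (-t) (-s)))
    hcont (fun s hs t ht => ?_) (fun s hs t ht => ?_) hs ht hst
  · obtain ⟨hderiv, heuler⟩ := kernelSum_euler_left hl hμ hν (neg_mem_Ioo_neg_one_one hs)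
      (neg_mem_Icc_neg_one_one ht)
    push_cast at heuler
    exact ⟨(hderiv.scomp s (hasDerivAt_neg s)).congr_deriv (neg_one_smul ℝ _),
      by linear_combination heuler⟩
  · obtain ⟨hderiv, heuler⟩ := kernelSum_euler_right hl hμ hν (neg_mem_Icc_neg_one_one hs)
      (neg_mem_Ioo_neg_one_one ht)
    push_cast at heuler
    exact ⟨(hderiv.scomp t (hasDerivAt_neg t)).congr_deriv (neg_one_smul ℝ _),
      by linear_combination heuler⟩

theorem kernelSum_mul_two_cpow (hl : 0 < l) (hμ : 0 < μ) (hν : l + μ + 4 ≤ 2 * ν.re)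
    (hs : s ∈ Set.Icc (-1 : ℝ) 1) (ht : t ∈ Set.Icc (-1 : ℝ) 1) :
    kernelSum l μ ν s t * 2 ^ (2 * ν) = kernelSum l μ ν 1 1 * posPow (2 * ν) (s + t) +
      kernelSum l μ ν (-1) (-1) * posPow (2 * ν) (-(s + t)) := by
  have hp : 2 * ν ≠ 0 := Complex.ne_zero_of_re_pos (by rw [re_two_mul]; linarith)
  rcases lt_trichotomy (s + t) 0 with hneg | hzero | hpos
  · have hreflect := kernelSum_neg_neg_mul_two_cpow_of_pos hl hμ hν (neg_mem_Icc_neg_one_one hs)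
      (neg_mem_Icc_neg_one_one ht) (by linarith)
    rw [neg_neg, neg_neg] at hreflect
    rw [posPow_of_nonpos hp hneg.le, posPow_of_nonneg _ (neg_nonneg.mpr hneg.le), hreflect,
      mul_zero, zero_add, neg_add]
    push_cast
    rfl
  · rw [kernelSum_of_add_eq_zero hl hμ (by linarith) hs ht hzero, hzero, neg_zero,
      posPow_of_nonpos hp le_rfl, zero_mul, mul_zero, mul_zero, add_zero]
  · rw [posPow_of_nonneg _ hpos.le, posPow_of_nonpos hp (neg_nonpos.mpr hpos.le), mul_zero,
      add_zero, kernelSum_mul_two_cpow_of_pos hl hμ hν hs ht hpos, Complex.ofReal_add]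

theorem kernelSum_add_half_mul_two_cpow (hl : 0 < l) (hμ : 0 < μ)
    (hν : l + μ + 4 ≤ 2 * ν.re) (hs : s ∈ Set.Icc (-1 : ℝ) 1) (ht : t ∈ Set.Icc (-1 : ℝ) 1) :
    kernelSum l μ (ν + 1 / 2) s t * 2 ^ (2 * ν) =
      kernelSum l μ ν 1 1 * posPow (2 * ν + 1) (s + t) -
        kernelSum l μ ν (-1) (-1) * posPow (2 * ν + 1) (-(s + t)) := by
  have hp : 0 < (2 * ν).re := by rw [re_two_mul]; linarith
  rw [kernelSum_add_half hl hμ (by linarith) hs ht, mul_assoc,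
    kernelSum_mul_two_cpow hl hμ hν hs ht, ← mul_posPow hp, ← mul_posPow hp]
  push_cast
  ring

end KernelSum

lemma integrable_of_ae_mem_isCompact {X E : Type*} [TopologicalSpace X] [T2Space X]
    [MeasurableSpace X] [OpensMeasurableSpace X] [NormedAddCommGroup E]
    [SecondCountableTopologyEither X E] {m : Measure X} [IsFiniteMeasure m] {K : Set X}
    (hK : IsCompact K) (hm : ∀ᵐ x ∂m, x ∈ K) {g : X → E} (hg : Continuous g) : Integrable g m := by
  rw [← Measure.restrict_eq_self_of_ae_mem hm]
  exact hg.continuousOn.integrableOn_compact' hK hK.measurableSet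

/-- The probability measure on `[-1, 1]` with density proportional to `(1 - x ^ 2) ^ (l - 1 / 2)`,
for which the polynomials `gegenbauer l n` are orthogonal. -/
noncomputable def gegenbauerMeasure (l : ℝ) : Measure ℝ :=
  (ProbabilityTheory.betaMeasure (l + 1 / 2) (l + 1 / 2)).map fun x => 2 * x - 1

lemma beta_add_one_add_one {a : ℝ} (ha : 0 < a) :
    ProbabilityTheory.beta (a + 1) (a + 1) =
      a / (2 * (2 * a + 1)) * ProbabilityTheory.beta a a := by
  have := (Real.Gamma_pos_of_pos (add_pos ha ha)).ne'
  rw [ProbabilityTheory.beta, ProbabilityTheory.beta, Real.Gamma_add_one ha.ne',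
    show a + 1 + (a + 1) = a + a + 1 + 1 by ring, Real.Gamma_add_one (by linarith),
    Real.Gamma_add_one (by linarith)]
  field_simp
  ring

section GegenbauerMeasure

variable {l : ℝ}

lemma isProbabilityMeasure_gegenbauerMeasure (hl : 0 < l) :
    IsProbabilityMeasure (gegenbauerMeasure l) := by
  have hbeta := ProbabilityTheory.isProbabilityMeasureBeta (show 0 < l + 1 / 2 by linarith)
    (show 0 < l + 1 / 2 by linarith)
  exact Measure.isProbabilityMeasure_map (by fun_prop)

lemma ae_mem_Icc_gegenbauerMeasure (l : ℝ) :
    ∀ᵐ x ∂gegenbauerMeasure l, x ∈ Set.Icc (-1 : ℝ) 1 := by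
  refine (ae_map_iff (p := fun x => x ∈ Set.Icc (-1 : ℝ) 1) (by fun_prop)
    measurableSet_Icc).mpr ?_
  refine (ae_withDensity_iff
    (ProbabilityTheory.measurable_betaPDFReal _ _).ennreal_ofReal).mpr (.of_forall fun x hx => ?_)
  have h0 : 0 < x := not_le.mp fun h => hx (ProbabilityTheory.betaPDF_eq_zero_of_nonpos h)
  have h1 : x < 1 := not_le.mp fun h => hx (ProbabilityTheory.betaPDF_eq_zero_of_one_le h)
  exact ⟨by linarith, by linarith⟩

lemma integrable_gegenbauerMeasure {E : Type*} [NormedAddCommGroup E] (hl : 0 < l) {g : ℝ → E}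
    (hg : Continuous g) : Integrable g (gegenbauerMeasure l) :=
  have := isProbabilityMeasure_gegenbauerMeasure hl
  integrable_of_ae_mem_isCompact isCompact_Icc (ae_mem_Icc_gegenbauerMeasure l) hg

lemma integral_gegenbauerMeasure (hl : 0 < l) {g : ℝ → ℂ} (hg : Continuous g) :
    ∫ x, g x ∂gegenbauerMeasure l = ((ProbabilityTheory.beta (l + 1 / 2) (l + 1 / 2))⁻¹ : ℂ) *
      ∫ x in (0 : ℝ)..1, (((x * (1 - x)) ^ (l - 1 / 2) : ℝ) : ℂ) * g (2 * x - 1) := by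
  rw [gegenbauerMeasure, integral_map (by fun_prop) hg.aestronglyMeasurable,
    ProbabilityTheory.betaMeasure, integral_withDensity_eq_integral_toReal_smul
      (f := ProbabilityTheory.betaPDF _ _)
      (ProbabilityTheory.measurable_betaPDFReal _ _).ennreal_ofReal
      (.of_forall fun _ => ENNReal.ofReal_lt_top),
    ← intervalIntegral.integral_const_mul, intervalIntegral.integral_of_le zero_le_one,
    integral_Ioc_eq_integral_Ioo, ← integral_indicator measurableSet_Ioo]
  congr 1 with x
  by_cases hx : x ∈ Set.Ioo (0 : ℝ) 1
  · have hpos : 0 ≤ ProbabilityTheory.betaPDFReal (l + 1 / 2) (l + 1 / 2) x :=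
      (ProbabilityTheory.betaPDFReal_pos hx.1 hx.2 (by linarith) (by linarith)).le
    rw [Set.indicator_of_mem hx, ProbabilityTheory.betaPDF, ENNReal.toReal_ofReal hpos,
      ProbabilityTheory.betaPDFReal, if_pos ⟨hx.1, hx.2⟩, Complex.real_smul, add_sub_assoc,
      Real.mul_rpow hx.1.le (sub_nonneg.mpr hx.2.le), ← mul_assoc]
    push_cast
    ring_nf
  · rw [Set.indicator_of_notMem hx, ProbabilityTheory.betaPDF, ProbabilityTheory.betaPDFReal,
      if_neg (show ¬(0 < x ∧ x < 1) from hx), ENNReal.ofReal_zero, ENNReal.toReal_zero, zero_smul]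

lemma intervalIntegrable_mul_one_sub_rpow (hl : 0 < l) :
    IntervalIntegrable (fun x : ℝ => (((x * (1 - x)) ^ (l - 1 / 2) : ℝ) : ℂ)) volume 0 1 := by
  have hre : 0 < ((l : ℂ) + 1 / 2).re := by
    simp
    linarith
  have hbeta := Complex.betaIntegral_convergent hre hre
  rw [intervalIntegrable_iff_integrableOn_Ioo_of_le zero_le_one] at hbeta ⊢
  refine hbeta.congr_fun (fun x hx => ?_) measurableSet_Ioo
  have hx1 : 0 < 1 - x := sub_pos.mpr hx.2
  simp only
  rw [Real.mul_rpow hx.1.le hx1.le, Complex.ofReal_mul, Complex.ofReal_cpow hx.1.le,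
    Complex.ofReal_cpow hx1.le]
  push_cast
  ring_nf

lemma hasDerivAt_mul_one_sub_rpow_mul {x : ℝ} (hx : x ∈ Set.Ioo (0 : ℝ) 1) {h : ℝ → ℂ} {h' : ℂ}
    (hderiv : HasDerivAt h h' (2 * x - 1)) :
    HasDerivAt (fun x : ℝ => (((x * (1 - x)) ^ (l + 1 / 2) : ℝ) : ℂ) * h (2 * x - 1))
      (((x * (1 - x)) ^ (l - 1 / 2) : ℝ) * ((1 - ((2 * x - 1 : ℝ) : ℂ) ^ 2) * h') / 2 -
        (l + 1 / 2) *
          (((x * (1 - x)) ^ (l - 1 / 2) : ℝ) * ((2 * x - 1 : ℝ) * h (2 * x - 1)))) x := by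
  have hpos : 0 < x * (1 - x) := mul_pos hx.1 (sub_pos.mpr hx.2)
  have hpow : (x * (1 - x)) ^ (l + 1 / 2) = (x * (1 - x)) ^ (l - 1 / 2) * (x * (1 - x)) := by
    rw [← Real.rpow_add_one hpos.ne']
    ring_nf
  have hweight := (((hasDerivAt_id x).mul ((hasDerivAt_id x).const_sub 1)).rpow_const
    (p := l + 1 / 2) (.inl hpos.ne')).ofReal_comp
  have hcomp := hderiv.scomp x (((hasDerivAt_id x).const_mul 2).sub_const 1)
  refine (hweight.mul hcomp).congr_deriv ?_
  simp only [id, Pi.mul_apply, Function.comp_apply]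
  rw [hpow, show l + 1 / 2 - 1 = l - 1 / 2 by ring, Complex.real_smul]
  push_cast
  ring

lemma integral_mul_gegenbauerMeasure_of_hasDerivAt (hl : 0 < l) {h h' : ℝ → ℂ}
    (hderiv : ∀ x, HasDerivAt h (h' x) x) (hcont : Continuous h') :
    (2 * l + 1) * ∫ x, x * h x ∂gegenbauerMeasure l =
      ∫ x, (1 - (x : ℂ) ^ 2) * h' x ∂gegenbauerMeasure l := by
  have hcont_h : Continuous h := continuous_iff_continuousAt.mpr fun x => (hderiv x).continuousAt
  have hint {f : ℝ → ℂ} (hf : Continuous f) :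
      IntervalIntegrable (fun x => (((x * (1 - x)) ^ (l - 1 / 2) : ℝ) : ℂ) * f (2 * x - 1))
        volume 0 1 :=
    (intervalIntegrable_mul_one_sub_rpow hl).mul_continuousOn (by fun_prop)
  have hleft := hint (f := fun x => x * h x) (by fun_prop)
  have hright := hint (f := fun x => (1 - (x : ℂ) ^ 2) * h' x) (by fun_prop)
  have hpow : Continuous fun x : ℝ => (((x * (1 - x)) ^ (l + 1 / 2) : ℝ) : ℂ) :=
    Complex.continuous_ofReal.comp ((by fun_prop : Continuous fun x : ℝ => x * (1 - x)).rpow_const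
      fun _ => .inr (by linarith))
  have hprim := intervalIntegral.integral_eq_sub_of_hasDerivAt_of_le zero_le_one
    (hpow.mul (by fun_prop : Continuous fun x : ℝ => h (2 * x - 1))).continuousOn
    (fun x hx => hasDerivAt_mul_one_sub_rpow_mul hx (hderiv _))
    ((hright.div_const 2).sub (hleft.const_mul (l + 1 / 2)))
  rw [intervalIntegral.integral_sub (hright.div_const 2) (hleft.const_mul _),
    intervalIntegral.integral_div, intervalIntegral.integral_const_mul] at hprim
  simp only [Pi.mul_apply, sub_self, mul_zero, zero_mul, Complex.ofReal_zero,
    Real.zero_rpow (show l + 1 / 2 ≠ 0 by linarith)] at hprim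
  rw [integral_gegenbauerMeasure hl (by fun_prop), integral_gegenbauerMeasure hl (by fun_prop)]
  linear_combination (-2 * (ProbabilityTheory.beta (l + 1 / 2) (l + 1 / 2) : ℂ)⁻¹) * hprim

lemma integral_gegenbauerMeasure_neg (hl : 0 < l) {g : ℝ → ℂ} (hg : Continuous g) :
    ∫ x, g (-x) ∂gegenbauerMeasure l = ∫ x, g x ∂gegenbauerMeasure l := by
  rw [integral_gegenbauerMeasure hl hg, integral_gegenbauerMeasure hl (by fun_prop)]
  have hreflect := intervalIntegral.integral_comp_sub_left (a := 0) (b := 1)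
    (fun x : ℝ => (((x * (1 - x)) ^ (l - 1 / 2) : ℝ) : ℂ) * g (2 * x - 1)) 1
  rw [sub_self, sub_zero] at hreflect
  rw [← hreflect]
  ring_nf

lemma integral_gegenbauerMeasure_add_one (hl : 0 < l) {g : ℝ → ℂ} (hg : Continuous g) :
    (2 * l + 1) * ∫ x, g x ∂gegenbauerMeasure (l + 1) =
      (2 * l + 2) * ∫ x, (1 - (x : ℂ) ^ 2) * g x ∂gegenbauerMeasure l := by
  have hbeta := beta_add_one_add_one (a := l + 1 / 2) (by linarith)
  have hpos := ProbabilityTheory.beta_pos (α := l + 1 / 2) (β := l + 1 / 2) (by linarith)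
    (by linarith)
  have hweight : (∫ x in (0 : ℝ)..1, (((x * (1 - x)) ^ (l + 1 - 1 / 2) : ℝ) : ℂ) * g (2 * x - 1)) =
      (∫ x in (0 : ℝ)..1, (((x * (1 - x)) ^ (l - 1 / 2) : ℝ) : ℂ) *
        ((1 - ((2 * x - 1 : ℝ) : ℂ) ^ 2) * g (2 * x - 1))) / 4 := by
    rw [← intervalIntegral.integral_div]
    refine intervalIntegral.integral_congr fun x hx => ?_
    rw [Set.uIcc_of_le zero_le_one] at hx
    rw [show l + 1 - 1 / 2 = l - 1 / 2 + 1 by ring,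
      Real.rpow_add_one' (mul_nonneg hx.1 (sub_nonneg.mpr hx.2)) (by linarith)]
    push_cast
    ring
  rw [integral_gegenbauerMeasure (by linarith) hg, integral_gegenbauerMeasure hl (by fun_prop),
    hweight, show l + 1 + 1 / 2 = l + 1 / 2 + 1 by ring, hbeta]
  have hl₁ : (2 * l + 1 : ℂ) ≠ 0 := by exact_mod_cast (by positivity : 2 * l + 1 ≠ 0)
  have hl₂ : (l + 1 : ℂ) ≠ 0 := by exact_mod_cast (by positivity : l + 1 ≠ 0)
  have := Complex.ofReal_ne_zero.mpr hpos.ne'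
  push_cast
  rw [show (2 * ((l : ℂ) + 1 / 2) + 1) = 2 * (l + 1) by ring,
    show ((l : ℂ) + 1 / 2) = (2 * l + 1) / 2 by ring]
  field_simp
  ring

lemma integral_gegenbauerMeasure_half {g : ℝ → ℂ} (hg : Continuous g) :
    ∫ x, g x ∂gegenbauerMeasure (1 / 2) = (∫ x in (-1 : ℝ)..1, g x) / 2 := by
  have haffine := intervalIntegral.integral_comp_mul_sub (a := 0) (b := 1) g
    (two_ne_zero (α := ℝ)) 1
  have hbeta : ProbabilityTheory.beta (1 / 2 + 1 / 2) (1 / 2 + 1 / 2) = 1 := by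
    rw [add_halves, ProbabilityTheory.beta, Real.Gamma_one, one_add_one_eq_two, Real.Gamma_two]
    norm_num
  rw [mul_zero, zero_sub, mul_one, show (2 : ℝ) - 1 = 1 by norm_num] at haffine
  rw [integral_gegenbauerMeasure one_half_pos hg, hbeta]
  simp only [sub_self, Real.rpow_zero, Complex.ofReal_one, one_mul, haffine, inv_one,
    Complex.real_smul, Complex.ofReal_inv, Complex.ofReal_ofNat, div_eq_inv_mul]

lemma integral_sq_gegenbauerMeasure (hl : 0 < l) :
    (2 * l + 2) * ∫ x, x ^ 2 ∂gegenbauerMeasure l = 1 := by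
  have := isProbabilityMeasure_gegenbauerMeasure hl
  have hparts := integral_mul_gegenbauerMeasure_of_hasDerivAt hl
    (fun x => (hasDerivAt_id (x : ℂ)).comp_ofReal) continuous_const
  have hreal : (∫ x : ℝ, (x : ℂ) ^ 2 ∂gegenbauerMeasure l) =
      ((∫ x, x ^ 2 ∂gegenbauerMeasure l : ℝ) : ℂ) := by
    rw [← integral_complex_ofReal]
    push_cast
    rfl
  simp only [id, ← sq, mul_one] at hparts
  rw [integral_sub (integrable_gegenbauerMeasure hl continuous_const)
    (integrable_gegenbauerMeasure hl (by fun_prop)), hreal] at hparts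
  rw [integral_const, probReal_univ, one_smul] at hparts
  have hparts' : (2 * l + 1) * ∫ x, x ^ 2 ∂gegenbauerMeasure l =
      1 - ∫ x, x ^ 2 ∂gegenbauerMeasure l := by exact_mod_cast hparts
  linear_combination hparts'

lemma integral_gegenbauer_succ (hl : 0 < l) (n : ℕ) :
    ∫ x : ℝ, gegenbauer l (n + 1) x ∂gegenbauerMeasure l = 0 := by
  rcases n with _ | n
  · have hparts := integral_mul_gegenbauerMeasure_of_hasDerivAt hl
      (fun x => hasDerivAt_const x (2 * l : ℂ)) continuous_const
    simp only [mul_zero, integral_zero, mul_eq_zero] at hparts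
    simp only [zero_add, gegenbauer_one, mul_comm (2 * (l : ℂ))]
    exact hparts.resolve_left (by exact_mod_cast (by positivity : 2 * l + 1 ≠ 0))
  have hne : ((n : ℂ) + 2) * (n + 2 + 2 * l) ≠ 0 := by
    exact_mod_cast (by positivity : ((n : ℝ) + 2) * (n + 2 + 2 * l) ≠ 0)
  have hgeg (c : ℂ) (k : ℕ) : Continuous fun x : ℝ => gegenbauer c k x :=
    (continuous_gegenbauer c k).comp Complex.continuous_ofReal
  have hparts := integral_mul_gegenbauerMeasure_of_hasDerivAt hl
    (fun x => (hasDerivAt_gegenbauer_succ (l + 1) x n).comp_ofReal) (by fun_prop)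
  have hpoint (x : ℝ) : ((n : ℂ) + 2) * (n + 2 + 2 * l) * gegenbauer l (n + 2) x =
      2 * l * ((2 * l + 1) * (x * gegenbauer (l + 1) (n + 1) x) -
        (1 - (x : ℂ) ^ 2) * (2 * (l + 1) * gegenbauer (l + 1 + 1) n x)) := by
    have hsucc := gegenbauer_succ_eq l x (n + 1)
      (by exact_mod_cast (by positivity : ((n + 1 : ℕ) : ℝ) + 1 + l ≠ 0))
    have hone_sub := one_sub_sq_mul_gegenbauer (l + 1) x n
      (by exact_mod_cast (by positivity : (n : ℝ) + 1 + (l + 1) ≠ 0))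
      (by exact_mod_cast (by positivity : (n : ℝ) + 2 + (l + 1) ≠ 0))
    rw [show n + 1 + 1 = n + 2 from rfl] at hsucc
    push_cast at hsucc
    linear_combination ((n : ℂ) + 2) * hsucc + 2 * l * hone_sub
  refine (mul_eq_zero.mp ?_).resolve_left hne
  rw [← integral_const_mul, integral_congr_ae (.of_forall hpoint), integral_const_mul,
    integral_sub (integrable_gegenbauerMeasure hl (by fun_prop))
      (integrable_gegenbauerMeasure hl (by fun_prop)), integral_const_mul, hparts, sub_self,
    mul_zero]

end GegenbauerMeasure

instance (l : ℝ) : SFinite (gegenbauerMeasure l) := by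
  rw [gegenbauerMeasure, ProbabilityTheory.betaMeasure]
  infer_instance

section ProductMeasure

variable {l μ : ℝ} {p : ℂ}

lemma ae_mem_Icc_prod_gegenbauerMeasure (l μ : ℝ) :
    ∀ᵐ q ∂(gegenbauerMeasure l).prod (gegenbauerMeasure μ),
      q ∈ Set.Icc (-1 : ℝ) 1 ×ˢ Set.Icc (-1 : ℝ) 1 :=
  (Measure.quasiMeasurePreserving_fst.ae (ae_mem_Icc_gegenbauerMeasure l)).and
    (Measure.quasiMeasurePreserving_snd.ae (ae_mem_Icc_gegenbauerMeasure μ))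

lemma integrable_prod_gegenbauerMeasure {E : Type*} [NormedAddCommGroup E] (hl : 0 < l)
    (hμ : 0 < μ) {g : ℝ × ℝ → E} (hg : Continuous g) :
    Integrable g ((gegenbauerMeasure l).prod (gegenbauerMeasure μ)) :=
  have := isProbabilityMeasure_gegenbauerMeasure hl
  have := isProbabilityMeasure_gegenbauerMeasure hμ
  integrable_of_ae_mem_isCompact (isCompact_Icc.prod isCompact_Icc)
    (ae_mem_Icc_prod_gegenbauerMeasure l μ) hg

lemma integral_fst_mul_prod_gegenbauerMeasure_of_hasDerivAt (hl : 0 < l) (hμ : 0 < μ)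
    {h h' : ℝ × ℝ → ℂ} (hderiv : ∀ s t, HasDerivAt (fun s => h (s, t)) (h' (s, t)) s)
    (hcont : Continuous h) (hcont' : Continuous h') :
    (2 * l + 1) * ∫ q : ℝ × ℝ, q.1 * h q ∂(gegenbauerMeasure l).prod (gegenbauerMeasure μ) =
      ∫ q : ℝ × ℝ, (1 - (q.1 : ℂ) ^ 2) * h' q
        ∂(gegenbauerMeasure l).prod (gegenbauerMeasure μ) := by
  rw [integral_prod_symm _ (integrable_prod_gegenbauerMeasure hl hμ (by fun_prop)),
    integral_prod_symm _ (integrable_prod_gegenbauerMeasure hl hμ (by fun_prop)),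
    ← integral_const_mul]
  congr 1 with t
  exact integral_mul_gegenbauerMeasure_of_hasDerivAt hl (fun s => hderiv s t)
    (hcont'.comp (Continuous.prodMk_left t))

/-- The mean of `(s + t)_+ ^ p` when `s` and `t` are independent with laws `gegenbauerMeasure l`
and `gegenbauerMeasure μ`. -/
noncomputable def posPowMean (l μ : ℝ) (p : ℂ) : ℂ :=
  ∫ q : ℝ × ℝ, posPow p (q.1 + q.2) ∂(gegenbauerMeasure l).prod (gegenbauerMeasure μ)

lemma posPowMean_comm (l μ : ℝ) (p : ℂ) : posPowMean l μ p = posPowMean μ l p := by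
  rw [posPowMean, posPowMean, ← integral_prod_swap]
  simp only [Prod.fst_swap, Prod.snd_swap, add_comm]

lemma posPowMean_add_one_left (hl : 0 < l) (hμ : 0 < μ) (hp : 0 < p.re) :
    (2 * l + 1) * posPowMean (l + 1) μ p =
      (2 * l + 2) * ∫ q : ℝ × ℝ, (1 - (q.1 : ℂ) ^ 2) * posPow p (q.1 + q.2)
        ∂(gegenbauerMeasure l).prod (gegenbauerMeasure μ) := by
  have hpow := continuous_posPow hp
  rw [posPowMean,
    integral_prod_symm _ (integrable_prod_gegenbauerMeasure (by linarith) hμ (by fun_prop)),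
    integral_prod_symm _ (integrable_prod_gegenbauerMeasure hl hμ (by fun_prop)),
    ← integral_const_mul, ← integral_const_mul]
  congr 1 with t
  exact integral_gegenbauerMeasure_add_one hl (hpow.comp (continuous_add_const t))

lemma integral_one_sub_sq_mul_posPow (hl : 0 < l) (hμ : 0 < μ) (hp : 0 < p.re) :
    (2 * l + 2 + p) * ∫ q : ℝ × ℝ, (1 - (q.1 : ℂ) ^ 2) * posPow p (q.1 + q.2)
        ∂(gegenbauerMeasure l).prod (gegenbauerMeasure μ) =
      (2 * l + 1) * (posPowMean l μ p + ∫ q : ℝ × ℝ, q.1 * q.2 * posPow p (q.1 + q.2)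
        ∂(gegenbauerMeasure l).prod (gegenbauerMeasure μ)) := by
  have hpow := continuous_posPow hp
  have hp1 : 1 < (p + 1).re := by rw [Complex.add_re, Complex.one_re]; linarith
  have hpow1 := continuous_posPow (zero_lt_one.trans hp1)
  have hderiv (s t : ℝ) : HasDerivAt (fun s => posPow (p + 1) (s + t))
      ((p + 1) * posPow p (s + t)) s := by
    have h := (hasDerivAt_posPow hp1 (s + t)).comp_add_const s t
    rwa [add_sub_cancel_right] at h
  have hparts := integral_fst_mul_prod_gegenbauerMeasure_of_hasDerivAt hl hμ
    (h := fun q => posPow (p + 1) (q.1 + q.2)) (h' := fun q => (p + 1) * posPow p (q.1 + q.2))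
    hderiv (by fun_prop) (by fun_prop)
  have hint {g : ℝ × ℝ → ℂ} (hg : Continuous g) := integrable_prod_gegenbauerMeasure hl hμ hg
  have hleft (q : ℝ × ℝ) : q.1 * posPow (p + 1) (q.1 + q.2) = posPow p (q.1 + q.2) -
      (1 - (q.1 : ℂ) ^ 2) * posPow p (q.1 + q.2) + q.1 * q.2 * posPow p (q.1 + q.2) := by
    rw [← mul_posPow hp]
    push_cast
    ring
  simp only [hleft, mul_left_comm _ (p + 1)] at hparts
  rw [integral_add (hint (by fun_prop)) (hint (by fun_prop)),
    integral_sub (hint (by fun_prop)) (hint (by fun_prop)), integral_const_mul] at hparts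
  rw [posPowMean]
  linear_combination -hparts

lemma integral_mul_mul_posPow (hl : 0 < l) (hμ : 0 < μ) (hp : 1 < p.re) :
    (2 * l + 2 * μ + 2 + p) * ∫ q : ℝ × ℝ, q.1 * q.2 * posPow p (q.1 + q.2)
        ∂(gegenbauerMeasure l).prod (gegenbauerMeasure μ) = p * posPowMean l μ p := by
  have hpow := continuous_posPow (zero_lt_one.trans hp)
  have hp1 : 0 < (p - 1).re := by rw [Complex.sub_re, Complex.one_re]; linarith
  have hpow1 := continuous_posPow hp1
  have hparts {a b : ℝ} (ha : 0 < a) (hb : 0 < b) :=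
    integral_fst_mul_prod_gegenbauerMeasure_of_hasDerivAt ha hb
      (h := fun q => q.2 * posPow p (q.1 + q.2))
      (h' := fun q => q.2 * (p * posPow (p - 1) (q.1 + q.2)))
      (fun s t => ((hasDerivAt_posPow hp (s + t)).comp_add_const s t).const_mul (t : ℂ))
      (by fun_prop) (by fun_prop)
  have hparts₁ := hparts hl hμ
  have hparts₂ := hparts hμ hl
  rw [← integral_prod_swap, ← integral_prod_swap (μ := gegenbauerMeasure μ)] at hparts₂
  have hint {g : ℝ × ℝ → ℂ} (hg : Continuous g) := integrable_prod_gegenbauerMeasure hl hμ hg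
  have hright (q : ℝ × ℝ) : (1 - (q.1 : ℂ) ^ 2) * (q.2 * (p * posPow (p - 1) (q.1 + q.2))) +
      (1 - (q.2 : ℂ) ^ 2) * (q.1 * (p * posPow (p - 1) (q.1 + q.2))) =
        p * (posPow p (q.1 + q.2) - q.1 * q.2 * posPow p (q.1 + q.2)) := by
    have h := mul_posPow hp1 (q.1 + q.2)
    rw [sub_add_cancel] at h
    push_cast at h
    linear_combination p * (1 - q.1 * q.2) * h
  have hsum := integral_congr_ae (μ := (gegenbauerMeasure l).prod (gegenbauerMeasure μ))
    (.of_forall hright)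
  rw [integral_add (hint (by fun_prop)) (hint (by fun_prop)), integral_const_mul,
    integral_sub (hint (by fun_prop)) (hint (by fun_prop)), ← posPowMean, ← hparts₁] at hsum
  simp only [Prod.fst_swap, Prod.snd_swap, add_comm (Prod.snd _ : ℝ)] at hparts₂
  rw [← hparts₂] at hsum
  simp only [← mul_assoc, mul_comm (Complex.ofReal (Prod.snd _)) (Prod.fst _ : ℝ)] at hsum ⊢
  linear_combination hsum

theorem posPowMean_recurrence (hl : 0 < l) (hμ : 0 < μ) (hp : 1 < p.re) :
    (2 * l + 2 + p) * (2 * l + 2 * μ + 2 + p) * posPowMean (l + 1) μ p =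
      (2 * l + 2) * (2 * l + 2 * μ + 2 + 2 * p) * posPowMean l μ p := by
  have hne : (2 * l + 1 : ℂ) ≠ 0 := by exact_mod_cast (by positivity : 2 * l + 1 ≠ 0)
  refine mul_left_cancel₀ hne ?_
  linear_combination
    (2 * l + 2 + p) * (2 * l + 2 * μ + 2 + p) * posPowMean_add_one_left hl hμ (by linarith) +
      (2 * l + 2) * (2 * l + 2 * μ + 2 + p) * integral_one_sub_sq_mul_posPow hl hμ (by linarith) +
      (2 * l + 1) * (2 * l + 2) * integral_mul_mul_posPow hl hμ hp

end ProductMeasure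

section Concentration

variable {l μ : ℝ} {p : ℂ}

lemma sq_integral_abs_gegenbauerMeasure_le (hl : 0 < l) :
    (∫ x, |x| ∂gegenbauerMeasure l) ^ 2 ≤ (2 * l + 2)⁻¹ := by
  have := isProbabilityMeasure_gegenbauerMeasure hl
  have hLp : MemLp (fun x : ℝ => |x|) 2 (gegenbauerMeasure l) :=
    (memLp_two_iff_integrable_sq continuous_abs.aestronglyMeasurable).mpr
      (integrable_gegenbauerMeasure hl (by fun_prop))
  have hvar := (ProbabilityTheory.variance_nonneg _ _).trans_eq
    (ProbabilityTheory.variance_eq_sub hLp)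
  simp only [Pi.pow_apply, sq_abs] at hvar
  rw [← eq_inv_of_mul_eq_one_right (integral_sq_gegenbauerMeasure hl)]
  exact sub_nonneg.mp hvar

lemma tendsto_integral_abs_gegenbauerMeasure :
    Tendsto (fun l => ∫ x, |x| ∂gegenbauerMeasure l) atTop (nhds 0) := by
  have hlim : Tendsto (fun l : ℝ => √((2 * l + 2)⁻¹)) atTop (nhds 0) := by
    refine (Real.continuous_sqrt.tendsto' 0 0 Real.sqrt_zero).comp (tendsto_inv_atTop_zero.comp ?_)
    exact tendsto_atTop_add_const_right _ _ (tendsto_id.const_mul_atTop two_pos)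
  refine squeeze_zero' (.of_forall fun l => integral_nonneg abs_nonneg) ?_ hlim
  filter_upwards [eventually_gt_atTop 0] with l hl
  exact Real.le_sqrt_of_sq_le (sq_integral_abs_gegenbauerMeasure_le hl)

lemma exists_norm_posPow_sub_le (hp : 1 < p.re) :
    ∃ K, ∀ x ∈ Set.Icc (-2 : ℝ) 2, ∀ y ∈ Set.Icc (-2 : ℝ) 2,
      ‖posPow p y - posPow p x‖ ≤ K * |y - x| := by
  have hp1 : 0 < (p - 1).re := by rw [Complex.sub_re, Complex.one_re]; linarith
  obtain ⟨K, hK⟩ := isCompact_Icc.exists_bound_of_continuousOn (s := Set.Icc (-2 : ℝ) 2)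
    (f := fun u => p * posPow (p - 1) u) ((continuous_posPow hp1).const_mul p).continuousOn
  exact ⟨K, fun x hx y hy => (convex_Icc _ _).norm_image_sub_le_of_norm_hasDerivWithin_le
    (fun u _ => (hasDerivAt_posPow hp u).hasDerivWithinAt) hK hx hy⟩

lemma tendsto_posPowMean (hμ : 0 < μ) (hp : 1 < p.re) :
    Tendsto (fun l => posPowMean l μ p) atTop (nhds (∫ t, posPow p t ∂gegenbauerMeasure μ)) := by
  have hpow := continuous_posPow (zero_lt_one.trans hp)
  have := isProbabilityMeasure_gegenbauerMeasure hμ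
  obtain ⟨K, hK⟩ := exists_norm_posPow_sub_le hp
  refine tendsto_iff_norm_sub_tendsto_zero.mpr <| squeeze_zero' (.of_forall fun l => norm_nonneg _)
    ?_ ((tendsto_integral_abs_gegenbauerMeasure.const_mul K).trans_eq (by rw [mul_zero]))
  filter_upwards [eventually_gt_atTop 0] with l hl
  have := isProbabilityMeasure_gegenbauerMeasure hl
  have hmarginal : ∫ t, posPow p t ∂gegenbauerMeasure μ =
      ∫ q : ℝ × ℝ, posPow p q.2 ∂(gegenbauerMeasure l).prod (gegenbauerMeasure μ) := by
    rw [integral_fun_snd, probReal_univ, one_smul]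
  have habs : ∫ s, |s| ∂gegenbauerMeasure l =
      ∫ q : ℝ × ℝ, |q.1| ∂(gegenbauerMeasure l).prod (gegenbauerMeasure μ) := by
    rw [integral_fun_fst (f := fun s : ℝ => |s|), probReal_univ, one_smul]
  rw [posPowMean, hmarginal, habs, ← integral_const_mul,
    ← integral_sub (integrable_prod_gegenbauerMeasure hl hμ (by fun_prop))
      (integrable_prod_gegenbauerMeasure hl hμ (by fun_prop))]
  refine norm_integral_le_of_norm_le (integrable_prod_gegenbauerMeasure hl hμ (by fun_prop)) ?_
  filter_upwards [ae_mem_Icc_prod_gegenbauerMeasure l μ] with q ⟨⟨hs, hs'⟩, ht, ht'⟩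
  refine (hK q.2 ⟨by linarith, by linarith⟩ (q.1 + q.2) ⟨by linarith, by linarith⟩).trans_eq ?_
  rw [add_sub_cancel_right]

end Concentration

section Constant

lemma tendsto_eval_ascPochhammer_ratio {a b c d : ℂ} (hsum : a + b = c + d)
    (hc : Complex.Gamma c ≠ 0) (hd : Complex.Gamma d ≠ 0) :
    Tendsto (fun n : ℕ => (ascPochhammer ℂ n).eval a * (ascPochhammer ℂ n).eval b /
        ((ascPochhammer ℂ n).eval c * (ascPochhammer ℂ n).eval d)) atTop
      (nhds (Complex.Gamma c * Complex.Gamma d / (Complex.Gamma a * Complex.Gamma b))) := by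
  have hlim := ((tendsto_eval_ascPochhammer_div a).mul (tendsto_eval_ascPochhammer_div b)).div
    ((tendsto_eval_ascPochhammer_div c).mul (tendsto_eval_ascPochhammer_div d))
    (mul_ne_zero (inv_ne_zero hc) (inv_ne_zero hd))
  rw [← mul_inv, ← mul_inv, inv_div_inv] at hlim
  refine hlim.congr' ?_
  filter_upwards [eventually_ne_atTop 0] with n hn
  have hn' : (n : ℂ) ≠ 0 := Nat.cast_ne_zero.mpr hn
  have hfac : (n.factorial : ℂ) ≠ 0 := Nat.cast_ne_zero.mpr n.factorial_ne_zero
  have hpow : (n : ℂ) ^ (a - 1) * (n : ℂ) ^ (b - 1) = (n : ℂ) ^ (c - 1) * (n : ℂ) ^ (d - 1) := by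
    rw [← Complex.cpow_add _ _ hn', ← Complex.cpow_add _ _ hn']
    congr 1
    linear_combination hsum
  rw [Pi.div_apply, div_mul_div_comm, div_mul_div_comm, mul_mul_mul_comm _ _ (n.factorial : ℂ),
    mul_mul_mul_comm _ _ (n.factorial : ℂ), hpow, div_div_div_cancel_right₀]
  simp only [ne_eq, mul_eq_zero, Complex.cpow_eq_zero_iff, hn', hfac, false_and, or_self,
    not_false_eq_true]

variable {l μ : ℝ} {ν : ℂ}

lemma Gamma_two_mul_add_one_ne_zero (hν : 0 < 2 * ν.re) : Complex.Gamma (2 * ν + 1) ≠ 0 :=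
  Complex.Gamma_ne_zero_of_re_pos (by
    rw [Complex.add_re, re_two_mul, Complex.one_re]
    linarith)

lemma Gamma_ofReal_add_one_ne_zero (hl : 0 < l) : Complex.Gamma (l + 1) ≠ 0 :=
  Complex.Gamma_ne_zero_of_re_pos (by
    rw [Complex.add_re, Complex.ofReal_re, Complex.one_re]
    linarith)

lemma posPowMean_add_natCast (hl : 0 < l) (hμ : 0 < μ) (hν : 1 < 2 * ν.re) (n : ℕ) :
    posPowMean (l + n) μ (2 * ν) *
        ((ascPochhammer ℂ n).eval (ν + 1 + l) * (ascPochhammer ℂ n).eval (ν + 1 + l + μ)) =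
      posPowMean l μ (2 * ν) *
        ((ascPochhammer ℂ n).eval (l + 1 : ℂ) *
          (ascPochhammer ℂ n).eval (l + μ + 2 * ν + 1 : ℂ)) := by
  induction n with
  | zero => simp
  | succ n ih =>
    have hrec := posPowMean_recurrence (l := l + n) (p := 2 * ν) (by positivity) hμ
      (by rwa [re_two_mul])
    push_cast at hrec
    simp only [ascPochhammer_succ_eval, Nat.cast_succ, ← add_assoc]
    linear_combination (ascPochhammer ℂ n).eval (ν + 1 + l) *
      (ascPochhammer ℂ n).eval (ν + 1 + l + μ) * hrec / 4 +
        (l + 1 + n) * (l + μ + 2 * ν + 1 + n) * ih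

lemma posPowMean_mul_Gamma (hl : 0 < l) (hμ : 0 < μ) (hν : 1 < 2 * ν.re) :
    posPowMean l μ (2 * ν) *
        (Complex.Gamma (ν + 1 + l) * Complex.Gamma (ν + 1 + l + μ)) =
      (∫ t, posPow (2 * ν) t ∂gegenbauerMeasure μ) *
        (Complex.Gamma (l + 1) * Complex.Gamma (l + μ + 2 * ν + 1)) := by
  have hc : 0 < (ν + 1 + l).re := by
    simp only [Complex.add_re, Complex.one_re, Complex.ofReal_re]
    linarith
  have hd : 0 < (ν + 1 + l + μ).re := by
    rw [Complex.add_re, Complex.ofReal_re]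
    linarith
  have hb := Complex.Gamma_ne_zero_of_re_pos (re_two_mul_add_pos hl hμ (ν := ν) (by linarith))
  have hshift : Tendsto (fun n : ℕ => posPowMean (l + n) μ (2 * ν)) atTop
      (nhds (∫ t, posPow (2 * ν) t ∂gegenbauerMeasure μ)) :=
    (tendsto_posPowMean hμ (by rwa [re_two_mul])).comp
      (tendsto_atTop_add_const_left _ l tendsto_natCast_atTop_atTop)
  have hratio := (tendsto_eval_ascPochhammer_ratio (a := l + 1) (b := l + μ + 2 * ν + 1)
    (c := ν + 1 + l) (d := ν + 1 + l + μ) (by ring) (Complex.Gamma_ne_zero_of_re_pos hc)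
    (Complex.Gamma_ne_zero_of_re_pos hd)).const_mul (posPowMean l μ (2 * ν))
  have hpoch {z : ℂ} (hz : 0 < z.re) (n : ℕ) : (ascPochhammer ℂ n).eval z ≠ 0 := by
    rw [eval_ascPochhammer_eq_prod]
    exact Finset.prod_ne_zero_iff.mpr fun k _ h =>
      ne_neg_natCast_of_re_pos hz k (eq_neg_of_add_eq_zero_left h)
  have hlimit := tendsto_nhds_unique hshift (hratio.congr fun n => by
    rw [← mul_div_assoc, ← posPowMean_add_natCast hl hμ hν,
      mul_div_cancel_right₀ _ (mul_ne_zero (hpoch hc n) (hpoch hd n))])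
  rw [hlimit, mul_assoc, div_mul_cancel₀ _ (mul_ne_zero (Gamma_ofReal_add_one_ne_zero hl) hb)]

lemma integral_posPow_gegenbauerMeasure_half {p : ℂ} (hp : 0 < p.re) :
    2 * (p + 1) * ∫ t, posPow p t ∂gegenbauerMeasure (1 / 2) = 1 := by
  have hp1 : 1 < (p + 1).re := by rw [Complex.add_re, Complex.one_re]; linarith
  have hderiv (u : ℝ) : HasDerivAt (posPow (p + 1)) ((p + 1) * posPow p u) u := by
    have h := hasDerivAt_posPow hp1 u
    rwa [add_sub_cancel_right] at h
  have hftc := intervalIntegral.integral_eq_sub_of_hasDerivAt (a := -1) (b := 1)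
    (fun u _ => hderiv u) (((continuous_posPow hp).const_mul _).intervalIntegrable _ _)
  rw [intervalIntegral.integral_const_mul, posPow_of_nonneg _ zero_le_one, Complex.ofReal_one,
    Complex.one_cpow,
    posPow_of_nonpos (Complex.ne_zero_of_re_pos (by linarith)) (neg_nonpos.mpr zero_le_one)] at hftc
  rw [integral_gegenbauerMeasure_half (continuous_posPow hp)]
  linear_combination hftc

lemma bCoef_zero_zero {l μ : ℂ} (hl : l ≠ 0) (hμ : μ ≠ 0) (ν : ℂ) :
    bCoef l μ ν 0 0 =
      Complex.Gamma (l + 1) * Complex.Gamma (μ + 1) * Complex.Gamma (l + μ + 2 * ν + 1) *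
        Complex.Gamma (2 * ν + 1) /
      (2 ^ (2 * ν) * (Complex.Gamma (ν + 1 + l + μ) * Complex.Gamma (ν + 1 + l) *
        Complex.Gamma (ν + 1 + μ) * Complex.Gamma (ν + 1))) := by
  rw [bCoef, Complex.Gamma_add_one l hl, Complex.Gamma_add_one μ hμ, Nat.cast_zero]
  ring_nf

lemma bCoef_zero_zero_comm {l μ : ℂ} (hl : l ≠ 0) (hμ : μ ≠ 0) (ν : ℂ) :
    bCoef l μ ν 0 0 = bCoef μ l ν 0 0 := by
  rw [bCoef_zero_zero hl hμ, bCoef_zero_zero hμ hl, add_comm l μ, add_right_comm _ l μ]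
  ring

lemma bCoef_zero_zero_ne_zero (hl : 0 < l) (hμ : 0 < μ) (hν : 0 < 2 * ν.re) :
    bCoef l μ ν 0 0 ≠ 0 := by
  have hden {x : ℝ} (hx : 0 ≤ x) : Complex.Gamma (ν + 1 + x) ≠ 0 :=
    Complex.Gamma_ne_zero_of_re_pos (by
      simp only [Complex.add_re, Complex.one_re, Complex.ofReal_re]
      linarith)
  have h₀ := hden le_rfl
  have hlμ := hden (add_pos hl hμ).le
  rw [Complex.ofReal_zero, add_zero] at h₀
  rw [Complex.ofReal_add, ← add_assoc] at hlμ
  rw [bCoef_zero_zero (Complex.ofReal_ne_zero.mpr hl.ne') (Complex.ofReal_ne_zero.mpr hμ.ne')]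
  exact div_ne_zero
    (mul_ne_zero (mul_ne_zero (mul_ne_zero (Gamma_ofReal_add_one_ne_zero hl)
      (Gamma_ofReal_add_one_ne_zero hμ))
      (Complex.Gamma_ne_zero_of_re_pos (re_two_mul_add_pos hl hμ hν)))
      (Gamma_two_mul_add_one_ne_zero hν))
    (mul_ne_zero (by simp [Complex.cpow_eq_zero_iff])
      (mul_ne_zero (mul_ne_zero (mul_ne_zero hlμ (hden hl.le)) (hden hμ.le)) h₀))

lemma Gamma_add_one_mul_Gamma_add_three_halves (hν : 2 * ν + 1 ≠ 0) :
    2 ^ (2 * ν) * (Complex.Gamma (ν + 1 + (1 / 2 : ℝ)) * Complex.Gamma (ν + 1)) =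
      (2 * ν + 1) * (Complex.Gamma ((1 / 2 : ℝ) + 1) * Complex.Gamma (2 * ν + 1)) := by
  have hdup := Complex.Gamma_mul_Gamma_add_half (ν + 1)
  have hsqrt : (√Real.pi : ℂ) = Complex.Gamma (1 / 2) := by
    rw [Complex.Gamma_one_half_eq, Real.sqrt_eq_rpow, Complex.ofReal_cpow Real.pi_pos.le]
    norm_num
  have hpow : (2 : ℂ) ^ (2 * ν) * 2 ^ (1 - 2 * (ν + 1)) = 1 / 2 := by
    rw [← Complex.cpow_add _ _ two_ne_zero, show 2 * ν + (1 - 2 * (ν + 1)) = -1 by ring,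
      Complex.cpow_neg_one, one_div]
  rw [show 2 * (ν + 1) = 2 * ν + 1 + 1 by ring, Complex.Gamma_add_one _ hν, hsqrt,
    show 1 - (2 * ν + 1 + 1) = 1 - 2 * (ν + 1) by ring] at hdup
  push_cast
  rw [Complex.Gamma_add_one _ (by norm_num : (1 / 2 : ℂ) ≠ 0), mul_comm (Complex.Gamma _), hdup]
  linear_combination (2 * ν + 1) * Complex.Gamma (2 * ν + 1) * Complex.Gamma (1 / 2) * hpow

lemma posPowMean_mul_Gamma_eq_mul_bCoef (hl : 0 < l) (hμ : 0 < μ) (hν : 1 < 2 * ν.re) :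
    posPowMean l μ (2 * ν) * (Complex.Gamma (μ + 1) * Complex.Gamma (2 * ν + 1)) =
      (∫ t, posPow (2 * ν) t ∂gegenbauerMeasure μ) *
        (2 ^ (2 * ν) * (Complex.Gamma (ν + 1 + μ) * Complex.Gamma (ν + 1))) *
        bCoef l μ ν 0 0 := by
  have hne := bCoef_zero_zero_ne_zero hl hμ (ν := ν) (by linarith)
  have hGamma := posPowMean_mul_Gamma hl hμ hν
  rw [bCoef_zero_zero (Complex.ofReal_ne_zero.mpr hl.ne')
    (Complex.ofReal_ne_zero.mpr hμ.ne')] at hne ⊢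
  rw [← mul_div_assoc, eq_div_iff (div_ne_zero_iff.mp hne).2]
  linear_combination 2 ^ (2 * ν) * Complex.Gamma (ν + 1 + μ) * Complex.Gamma (ν + 1) *
    (Complex.Gamma (μ + 1) * Complex.Gamma (2 * ν + 1)) * hGamma

lemma two_mul_posPowMean_half (hl : 0 < l) (hν : 1 < 2 * ν.re) :
    2 * posPowMean l (1 / 2) (2 * ν) = bCoef l (1 / 2 : ℝ) ν 0 0 := by
  have hre : 0 < (2 * ν).re := by
    rw [re_two_mul]
    linarith
  have hν' : 2 * ν + 1 ≠ 0 := Complex.ne_zero_of_re_pos (by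
    rw [Complex.add_re, Complex.one_re]
    linarith)
  refine mul_right_cancel₀ (mul_ne_zero (Gamma_ofReal_add_one_ne_zero one_half_pos)
    (Gamma_two_mul_add_one_ne_zero (ν := ν) (by linarith))) ?_
  have hGamma := posPowMean_mul_Gamma_eq_mul_bCoef hl one_half_pos hν
  rw [Gamma_add_one_mul_Gamma_add_three_halves hν'] at hGamma
  linear_combination 2 * hGamma + Complex.Gamma ((1 / 2 : ℝ) + 1) * Complex.Gamma (2 * ν + 1) *
    bCoef l (1 / 2 : ℝ) ν 0 0 * integral_posPow_gegenbauerMeasure_half hre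

theorem two_mul_posPowMean (hl : 0 < l) (hμ : 0 < μ) (hν : 1 < 2 * ν.re) :
    2 * posPowMean l μ (2 * ν) = bCoef l μ ν 0 0 := by
  have hhalf : (0 : ℝ) < 1 / 2 := one_half_pos
  have hbase : 2 * posPowMean (1 / 2) μ (2 * ν) = bCoef (1 / 2 : ℝ) μ ν 0 0 := by
    rw [posPowMean_comm, two_mul_posPowMean_half hμ hν, bCoef_zero_zero_comm
      (Complex.ofReal_ne_zero.mpr hμ.ne') (Complex.ofReal_ne_zero.mpr hhalf.ne')]
  have hcentre : 2 * (∫ t, posPow (2 * ν) t ∂gegenbauerMeasure μ) *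
      (2 ^ (2 * ν) * (Complex.Gamma (ν + 1 + μ) * Complex.Gamma (ν + 1))) =
        Complex.Gamma (μ + 1) * Complex.Gamma (2 * ν + 1) := by
    refine mul_right_cancel₀ (bCoef_zero_zero_ne_zero hhalf hμ (ν := ν) (by linarith)) ?_
    linear_combination -2 * posPowMean_mul_Gamma_eq_mul_bCoef hhalf hμ hν +
      Complex.Gamma (μ + 1) * Complex.Gamma (2 * ν + 1) * hbase
  refine mul_right_cancel₀ (mul_ne_zero (Gamma_ofReal_add_one_ne_zero hμ)
    (Gamma_two_mul_add_one_ne_zero (ν := ν) (by linarith))) ?_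
  linear_combination 2 * posPowMean_mul_Gamma_eq_mul_bCoef hl hμ hν + bCoef l μ ν 0 0 * hcentre

end Constant

section Evaluation

variable {l μ : ℝ} {ν : ℂ} {s t : ℝ}

lemma integral_kernelTerm (hl : 0 < l) (hμ : 0 < μ) {p : ℕ × ℕ} (hp : p ≠ (0, 0)) :
    ∫ q : ℝ × ℝ, kernelTerm l μ ν q.1 q.2 p
      ∂(gegenbauerMeasure l).prod (gegenbauerMeasure μ) = 0 := by
  have hsplit (q : ℝ × ℝ) : kernelTerm l μ ν q.1 q.2 p = bCoefConst l μ ν * ((l + p.1) *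
      ((μ + p.2) * recipGammaQuad (ν + 1 + (l + μ) / 2) (l + p.1) (μ + p.2))) *
        (gegenbauer l p.1 q.1 * gegenbauer μ p.2 q.2) := by
    rw [kernelTerm]
    ring
  simp only [hsplit]
  rw [integral_const_mul, integral_prod_mul (fun s : ℝ => gegenbauer l p.1 s)
    (fun t : ℝ => gegenbauer μ p.2 t)]
  obtain ⟨i, j⟩ := p
  rcases i with _ | i
  · rcases j with _ | j
    · exact absurd rfl hp
    · rw [integral_gegenbauer_succ hμ, mul_zero, mul_zero]
  · rw [integral_gegenbauer_succ hl, zero_mul, mul_zero]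

lemma integral_kernelSum (hl : 0 < l) (hμ : 0 < μ) (hν : l + μ + 2 ≤ 2 * ν.re) :
    ∫ q : ℝ × ℝ, kernelSum l μ ν q.1 q.2 ∂(gegenbauerMeasure l).prod (gegenbauerMeasure μ) =
      bCoef l μ ν 0 0 := by
  have := isProbabilityMeasure_gegenbauerMeasure hl
  have := isProbabilityMeasure_gegenbauerMeasure hμ
  obtain ⟨C, hC⟩ := exists_norm_kernelTerm_le hl hμ hν
  have hint (p : ℕ × ℕ) := integrable_prod_gegenbauerMeasure hl hμ (continuous_kernelTerm l μ ν p)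
  have hnorm (p : ℕ × ℕ) : ∫ q : ℝ × ℝ, ‖kernelTerm l μ ν q.1 q.2 p‖
      ∂(gegenbauerMeasure l).prod (gegenbauerMeasure μ) ≤ C * doubleWeight p := by
    refine (integral_mono_ae (hint p).norm (integrable_const (C * doubleWeight p)) ?_).trans_eq ?_
    · filter_upwards [ae_mem_Icc_prod_gegenbauerMeasure l μ] with q hq
      exact hC p q.1 hq.1 q.2 hq.2
    · rw [integral_const, probReal_univ, one_smul]
  have hzero (q : ℝ × ℝ) : kernelTerm l μ ν q.1 q.2 (0, 0) = bCoef l μ ν 0 0 := by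
    have h := bCoef_mul_gegenbauer_mul_gegenbauer l μ ν q.1 (-q.2) (0, 0)
    rw [neg_neg, gegenbauer_zero, gegenbauer_zero, mul_one, mul_one] at h
    exact h.symm
  simp only [kernelSum]
  rw [← integral_tsum_of_summable_integral_norm hint (.of_nonneg_of_le
      (fun p => integral_nonneg fun q => norm_nonneg _) hnorm (summable_doubleWeight.mul_left C)),
    tsum_eq_single (0, 0) fun p hp => integral_kernelTerm hl hμ hp]
  simp only [hzero, integral_const, probReal_univ, one_smul]

lemma integral_prod_gegenbauerMeasure_neg (hl : 0 < l) (hμ : 0 < μ) {g : ℝ × ℝ → ℂ}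
    (hg : Continuous g) :
    ∫ q : ℝ × ℝ, g (-q) ∂(gegenbauerMeasure l).prod (gegenbauerMeasure μ) =
      ∫ q : ℝ × ℝ, g q ∂(gegenbauerMeasure l).prod (gegenbauerMeasure μ) := by
  have hint {g : ℝ × ℝ → ℂ} (hg : Continuous g) := integrable_prod_gegenbauerMeasure hl hμ hg
  calc ∫ q : ℝ × ℝ, g (-q) ∂(gegenbauerMeasure l).prod (gegenbauerMeasure μ)
      = ∫ q : ℝ × ℝ, g (-q.1, q.2) ∂(gegenbauerMeasure l).prod (gegenbauerMeasure μ) := by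
        rw [integral_prod _ (hint (by fun_prop)), integral_prod _ (hint (by fun_prop))]
        congr 1 with s
        exact integral_gegenbauerMeasure_neg hμ (hg.comp (Continuous.prodMk_right (-s)))
    _ = ∫ q : ℝ × ℝ, g q ∂(gegenbauerMeasure l).prod (gegenbauerMeasure μ) := by
        rw [integral_prod_symm _ (hint (by fun_prop)), integral_prod_symm _ (hint hg)]
        congr 1 with t
        exact integral_gegenbauerMeasure_neg hl (hg.comp (Continuous.prodMk_left t))

lemma integral_posPow_neg (hl : 0 < l) (hμ : 0 < μ) {p : ℂ} (hp : 0 < p.re) :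
    ∫ q : ℝ × ℝ, posPow p (-(q.1 + q.2)) ∂(gegenbauerMeasure l).prod (gegenbauerMeasure μ) =
      posPowMean l μ p := by
  have hpow := continuous_posPow hp
  rw [posPowMean, ← integral_prod_gegenbauerMeasure_neg hl hμ (by fun_prop)]
  simp only [Prod.fst_neg, Prod.snd_neg, neg_add, neg_neg]

lemma integral_add_mul_posPow (hl : 0 < l) (hμ : 0 < μ) {p : ℂ} (hp : 0 < p.re) (a b : ℂ) :
    ∫ q : ℝ × ℝ, (a * posPow p (q.1 + q.2) + b * posPow p (-(q.1 + q.2)))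
        ∂(gegenbauerMeasure l).prod (gegenbauerMeasure μ) = (a + b) * posPowMean l μ p := by
  have hpow := continuous_posPow hp
  rw [integral_add (integrable_prod_gegenbauerMeasure hl hμ (by fun_prop))
    (integrable_prod_gegenbauerMeasure hl hμ (by fun_prop)), integral_const_mul,
    integral_const_mul, integral_posPow_neg hl hμ hp, ← posPowMean, add_mul]

lemma add_eq_two_mul_of_kernelSum_mul_eq (hl : 0 < l) (hμ : 0 < μ) (hν : l + μ + 2 ≤ 2 * ν.re)
    {a b c : ℂ} (h : ∀ s ∈ Set.Icc (-1 : ℝ) 1, ∀ t ∈ Set.Icc (-1 : ℝ) 1,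
      kernelSum l μ ν s t * c = a * posPow (2 * ν) (s + t) + b * posPow (2 * ν) (-(s + t))) :
    a + b = 2 * c := by
  have hre : 0 < (2 * ν).re := by
    rw [re_two_mul]
    linarith
  have hmean : bCoef l μ ν 0 0 * c = (a + b) * posPowMean l μ (2 * ν) := by
    rw [← integral_kernelSum hl hμ hν, ← integral_mul_const, ← integral_add_mul_posPow hl hμ hre]
    refine integral_congr_ae ?_
    filter_upwards [ae_mem_Icc_prod_gegenbauerMeasure l μ] with q hq using h q.1 hq.1 q.2 hq.2
  refine mul_right_cancel₀ (bCoef_zero_zero_ne_zero hl hμ (ν := ν) (by linarith)) ?_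
  linear_combination -(a + b) * two_mul_posPowMean hl hμ (ν := ν) (by linarith) - 2 * hmean

theorem kernelSum_eq_two_mul_posPow (hl : 0 < l) (hμ : 0 < μ) (hν : l + μ + 4 ≤ 2 * ν.re)
    (hs : s ∈ Set.Icc (-1 : ℝ) 1) (ht : t ∈ Set.Icc (-1 : ℝ) 1) :
    kernelSum l μ ν s t = 2 * posPow (2 * ν) (s + t) := by
  have htwo : (2 : ℂ) ^ (2 * ν) ≠ 0 := by simp [Complex.cpow_eq_zero_iff]
  have hsum : kernelSum l μ ν 1 1 + kernelSum l μ ν (-1) (-1) = 2 * 2 ^ (2 * ν) :=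
    add_eq_two_mul_of_kernelSum_mul_eq hl hμ (by linarith)
      fun s hs t ht => kernelSum_mul_two_cpow hl hμ hν hs ht
  have hre_half : 2 * (ν + 1 / 2).re = 2 * ν.re + 1 := by
    rw [← re_two_mul, mul_add, Complex.add_re, re_two_mul]
    norm_num
  have hdiff : kernelSum l μ ν 1 1 + -kernelSum l μ ν (-1) (-1) = 2 * 2 ^ (2 * ν) := by
    refine add_eq_two_mul_of_kernelSum_mul_eq (ν := ν + 1 / 2) hl hμ (by linarith)
      fun s hs t ht => ?_
    rw [show 2 * (ν + 1 / 2) = 2 * ν + 1 by ring, neg_mul, ← sub_eq_add_neg]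
    exact kernelSum_add_half_mul_two_cpow hl hμ hν hs ht
  have hneg : kernelSum l μ ν (-1) (-1) = 0 := by linear_combination (hsum - hdiff) / 2
  have hpos : kernelSum l μ ν 1 1 = 2 * 2 ^ (2 * ν) := by linear_combination (hsum + hdiff) / 2
  refine mul_right_cancel₀ htwo ?_
  rw [kernelSum_mul_two_cpow hl hμ hν hs ht, hneg, hpos]
  ring

end Evaluation

section Parity

variable {l μ : ℝ} {ν : ℂ} {s t : ℝ}

lemma abs_cpow_mul_sign_pow {p : ℂ} (hp : p ≠ 0) (x : ℝ) (ε : ℕ) :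
    ((|x| : ℝ) : ℂ) ^ p * ((Real.sign x ^ ε : ℝ) : ℂ) =
      posPow p x + (-1) ^ ε * posPow p (-x) := by
  rcases lt_trichotomy x 0 with hx | rfl | hx
  · rw [posPow_of_nonpos hp hx.le, posPow_of_nonneg p (neg_nonneg.mpr hx.le), abs_of_neg hx,
      Real.sign_of_neg hx]
    push_cast
    ring
  · rw [neg_zero, posPow_of_nonpos hp le_rfl, abs_zero, Complex.ofReal_zero, Complex.zero_cpow hp]
    ring
  · rw [posPow_of_nonneg p hx.le, posPow_of_nonpos hp (neg_nonpos.mpr hx.le), abs_of_pos hx,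
      Real.sign_of_pos hx]
    simp

lemma ite_parity_kernelTerm (l μ : ℝ) (ν : ℂ) (s t : ℝ) (ε : ℕ) (p : ℕ × ℕ) :
    (if (p.1 + p.2) % 2 = ε % 2 then kernelTerm l μ ν s t p else 0) =
      (kernelTerm l μ ν s t p + (-1) ^ ε * kernelTerm l μ ν (-s) (-t) p) / 2 := by
  rw [kernelTerm_neg_neg, ← mul_assoc, ← pow_add]
  split_ifs with h
  · rw [Even.neg_one_pow (by grind), one_mul, add_self_div_two]
  · rw [Odd.neg_one_pow (by grind), neg_one_mul, add_neg_cancel, zero_div]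

lemma hasSum_ite_parity_kernelTerm (hl : 0 < l) (hμ : 0 < μ) (hν : l + μ + 4 ≤ 2 * ν.re)
    (hs : s ∈ Set.Icc (-1 : ℝ) 1) (ht : t ∈ Set.Icc (-1 : ℝ) 1) (ε : ℕ) :
    HasSum (fun p : ℕ × ℕ => if (p.1 + p.2) % 2 = ε % 2 then kernelTerm l μ ν s (-t) p else 0)
      (((|s - t| : ℝ) : ℂ) ^ (2 * ν) * ((Real.sign (s - t) ^ ε : ℝ) : ℂ)) := by
  have hs' := neg_mem_Icc_neg_one_one hs
  have ht' := neg_mem_Icc_neg_one_one ht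
  have hν' : 2 * ν ≠ 0 := Complex.ne_zero_of_re_pos (by rw [re_two_mul]; linarith)
  have hplus := hasSum_kernelTerm hl hμ (ν := ν) (by linarith) hs ht'
  have hminus := hasSum_kernelTerm hl hμ (ν := ν) (by linarith) hs' ht
  rw [kernelSum_eq_two_mul_posPow hl hμ hν hs ht', ← sub_eq_add_neg] at hplus
  rw [kernelSum_eq_two_mul_posPow hl hμ hν hs' ht, neg_add_eq_sub, ← neg_sub] at hminus
  simp only [ite_parity_kernelTerm, neg_neg, abs_cpow_mul_sign_pow hν']
  have hsum := (hplus.add (hminus.mul_left ((-1) ^ ε))).div_const 2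
  rwa [mul_left_comm, ← mul_add, mul_div_cancel_left₀ _ two_ne_zero] at hsum

lemma exists_norm_ite_parity_kernelTerm_le (hl : 0 < l) (hμ : 0 < μ)
    (hν : l + μ + 2 ≤ 2 * ν.re) (ε : ℕ) :
    ∃ C, ∀ p : ℕ × ℕ, ∀ s ∈ Set.Icc (-1 : ℝ) 1, ∀ t ∈ Set.Icc (-1 : ℝ) 1,
      ‖if (p.1 + p.2) % 2 = ε % 2 then kernelTerm l μ ν s (-t) p else 0‖ ≤
        C * doubleWeight p := by
  obtain ⟨C, hC⟩ := exists_norm_kernelTerm_le hl hμ hν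
  refine ⟨C, fun p s hs t ht => le_trans ?_ (hC p s hs (-t) (neg_mem_Icc_neg_one_one ht))⟩
  split_ifs
  · exact le_rfl
  · exact norm_zero.trans_le (norm_nonneg _)

end Parity

theorem stmt0 (lam mu : ℝ) (hlam : 0 < lam) (hmu : 0 < mu) (ν : ℂ)
    (hν : lam + mu + 4 < 2 * ν.re) (ε : ℕ) (hε : ε = 0 ∨ ε = 1) :
    (∀ s ∈ Set.Icc (-1 : ℝ) 1, ∀ t ∈ Set.Icc (-1 : ℝ) 1,
      HasSum
        (fun p : ℕ × ℕ =>
          if (p.1 + p.2) % 2 = ε % 2 then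
            bCoef (lam : ℂ) (mu : ℂ) ν p.1 p.2 * gegenbauer (lam : ℂ) p.1 (s : ℂ) *
              gegenbauer (mu : ℂ) p.2 (t : ℂ)
          else 0)
        (((|s - t| : ℝ) : ℂ) ^ (2 * ν) * (((Real.sign (s - t)) ^ ε : ℝ) : ℂ))) ∧
    (∀ s ∈ Set.Icc (-1 : ℝ) 1, ∀ t ∈ Set.Icc (-1 : ℝ) 1,
      Summable
        (fun p : ℕ × ℕ =>
          ‖if (p.1 + p.2) % 2 = ε % 2 then
              bCoef (lam : ℂ) (mu : ℂ) ν p.1 p.2 * gegenbauer (lam : ℂ) p.1 (s : ℂ) *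
                gegenbauer (mu : ℂ) p.2 (t : ℂ)
            else 0‖)) ∧
    TendstoUniformlyOn
      (fun (F : Finset (ℕ × ℕ)) (q : ℝ × ℝ) =>
        ∑ p ∈ F,
          if (p.1 + p.2) % 2 = ε % 2 then
            bCoef (lam : ℂ) (mu : ℂ) ν p.1 p.2 * gegenbauer (lam : ℂ) p.1 (q.1 : ℂ) *
              gegenbauer (mu : ℂ) p.2 (q.2 : ℂ)
          else 0)
      (fun q : ℝ × ℝ =>
        ((|q.1 - q.2| : ℝ) : ℂ) ^ (2 * ν) * (((Real.sign (q.1 - q.2)) ^ ε : ℝ) : ℂ))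
      atTop (Set.Icc (-1 : ℝ) 1 ×ˢ Set.Icc (-1 : ℝ) 1) := by
  simp only [bCoef_mul_gegenbauer_mul_gegenbauer]
  obtain ⟨C, hC⟩ := exists_norm_ite_parity_kernelTerm_le hlam hmu (ν := ν) (by linarith) ε
  have hbound := summable_doubleWeight.mul_left C
  have hsum {s t : ℝ} (hs : s ∈ Set.Icc (-1 : ℝ) 1) (ht : t ∈ Set.Icc (-1 : ℝ) 1) :=
    hasSum_ite_parity_kernelTerm hlam hmu hν.le hs ht ε
  refine ⟨fun s hs t ht => hsum hs ht, fun s hs t ht => ?_, ?_⟩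
  · exact .of_nonneg_of_le (fun _ => norm_nonneg _) (fun p => hC p s hs t ht) hbound
  · exact (tendstoUniformlyOn_tsum hbound fun p q hq => hC p q.1 hq.1 q.2 hq.2).congr_right
      fun q hq => (hsum hq.1 hq.2).tsum_eq
end

section
/- Suppose λ, μ ∈ ℂ with Re λ > −1/2, Re μ > −1/2 and Re(λ + μ) < 0. Then ∬_{0≤s<t≤1} t^{λ−1/2}(1−t)^{λ−1/2} s^{μ−1/2}(1−s)^{μ−1/2} |s − t|^{−λ−μ} ds dt + (cos(πλ)/cos(πμ)) · ∬_{0≤t<s≤1} t^{λ−1/2}(1−t)^{λ−1/2} s^{μ−1/2}(1−s)^{μ−1/2} |s − t|^{−λ−μ} ds dt = Γ(λ + 1/2) Γ(1/2 − μ) Γ(μ + 1/2)² / (Γ(λ + 1 − μ) Γ(μ + 1 − λ) Γ(λ + μ + 1)). -/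
open MeasureTheory intervalIntegral

/-!
Scaling `s = t u` in the first integral and expanding `(1 - t u) ^ (μ - 1 / 2)` by the binomial
series leaves two Beta integrals in each term, so the integral is a constant times
`∑ n ≥ 0` of `Γ(n + 1/2 - μ) Γ(n + 1/2 + μ) / (Γ(n + 3/2 - λ) Γ(n + 3/2 + λ))`. Exchanging `λ` and
`μ` and applying the reflection formula, the second integral with its ratio of cosines is the same
constant times the sum over `n < 0`. The theorem thus evaluates a bilateral series, a case of
Dougall's `₂H₂` formula that is elementary: for `λ² ≠ μ²` the series telescopes, and for `λ² = μ²`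
it is the partial fraction expansion of `tan (π λ)`, or `∑ 1 / (n + 1/2)²` when `λ = 0`.
-/

section

open Complex Filter ProbabilityTheory Set
open scoped Nat Real Topology

section Gamma

lemma norm_Gamma_le_Gamma_re {z : ℂ} (hz : 0 < z.re) : ‖Gamma z‖ ≤ Real.Gamma z.re := by
  rw [Gamma_eq_integral hz, Real.Gamma_eq_integral hz, GammaIntegral]
  refine (MeasureTheory.norm_integral_le_integral_norm _).trans_eq ?_
  refine setIntegral_congr_fun measurableSet_Ioi fun x hx => ?_
  rw [norm_mul, norm_real, norm_cpow_eq_rpow_re_of_pos hx, sub_re, one_re,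
    Real.norm_of_nonneg (Real.exp_pos _).le]

lemma Gamma_half_sub_mul_Gamma_half_add (z : ℂ) :
    Gamma (1 / 2 - z) * Gamma (1 / 2 + z) = π / cos (π * z) := by
  have h := Gamma_mul_Gamma_one_sub (1 / 2 - z)
  rwa [show 1 - (1 / 2 - z) = 1 / 2 + z by ring,
    show (π : ℂ) * (1 / 2 - z) = π / 2 - π * z by ring, sin_pi_div_two_sub] at h

lemma cos_pi_mul_ne_zero_of_re_mem_Ioo {z : ℂ} (hz : z.re ∈ Ioo (-(1 / 2 : ℝ)) (1 / 2)) :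
    cos (π * z) ≠ 0 := by
  intro h
  have hprod := Gamma_half_sub_mul_Gamma_half_add z
  rw [h, div_zero] at hprod
  refine mul_ne_zero ?_ ?_ hprod <;>
    exact Gamma_ne_zero_of_re_pos (by norm_num; linarith [hz.1, hz.2])

lemma natCast_add_half_sub_ne_zero {z : ℂ} (hz : cos (π * z) ≠ 0) (n : ℕ) :
    (n : ℂ) + 1 / 2 - z ≠ 0 := by
  intro h
  refine hz (cos_eq_zero_iff.2 ⟨n, ?_⟩)
  rw [← sub_eq_zero.1 h]
  push_cast
  ring

lemma natCast_add_half_add_ne_zero {z : ℂ} (hz : cos (π * z) ≠ 0) (n : ℕ) :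
    (n : ℂ) + 1 / 2 + z ≠ 0 := by
  simpa using natCast_add_half_sub_ne_zero (z := -z) (by simpa using hz) n

lemma half_sub_ne_neg_natCast {z : ℂ} (hz : cos (π * z) ≠ 0) (n : ℕ) : 1 / 2 - z ≠ -n := by
  intro h
  exact natCast_add_half_sub_ne_zero hz n (by linear_combination h)

lemma inv_Gamma_one_add_mul_Gamma_one_sub {z : ℂ} (hz : z ≠ 0) :
    (Gamma (1 + z) * Gamma (1 - z))⁻¹ = sin (π * z) / (π * z) := by
  rw [add_comm, Gamma_add_one _ hz, mul_assoc, Gamma_mul_Gamma_one_sub, mul_inv, inv_div]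
  ring

lemma prod_range_add_eq_Gamma_div {s : ℂ} (hs : ∀ k : ℕ, s ≠ -k) (n : ℕ) :
    ∏ j ∈ Finset.range n, (s + j) = Gamma (s + n) / Gamma s := by
  rw [Gamma_add_nat_div_Gamma_eq s hs]
  induction n with
  | zero => simp
  | succ n ih => rw [ascPochhammer_succ_eval, ← ih, Finset.prod_range_succ]

lemma tendsto_Gamma_add_nat_div_of_re_pos {s : ℂ} (hs : 0 < s.re) :
    Tendsto (fun n : ℕ => Gamma (s + n + 1) / ((n : ℂ) ^ s * n !)) atTop (𝓝 1) := by
  have hG := Gamma_ne_zero_of_re_pos hs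
  have hpole : ∀ k : ℕ, s ≠ -k := fun k hk => hG ((Gamma_eq_zero_iff s).2 ⟨k, hk⟩)
  have h := (tendsto_const_nhds (x := Gamma s)).div (GammaSeq_tendsto_Gamma s) hG
  rw [div_self hG] at h
  refine h.congr fun n => ?_
  rw [Pi.div_apply, GammaSeq, prod_range_add_eq_Gamma_div hpole, Nat.cast_succ, ← add_assoc]
  field_simp

lemma tendsto_Gamma_add_nat_div (s : ℂ) :
    Tendsto (fun n : ℕ => Gamma (s + n + 1) / ((n : ℂ) ^ s * n !)) atTop (𝓝 1) := by
  obtain ⟨m, hm⟩ := exists_nat_gt (-s.re)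
  induction m generalizing s with
  | zero => exact tendsto_Gamma_add_nat_div_of_re_pos (by simpa using hm)
  | succ m ih =>
    have hshift := (ih (s + 1) (by rw [add_re, one_re]; push_cast at hm; linarith)).mul
      (tendsto_natCast_div_add_atTop (s + 1))
    rw [mul_one] at hshift
    refine hshift.congr' ?_
    have hpole : ∀ᶠ n : ℕ in atTop, s + n + 1 ≠ 0 := by
      filter_upwards [eventually_gt_atTop m] with n hn h
      have hre : s.re + n + 1 = 0 := by simpa using congrArg re h
      have hmn : (m : ℝ) + 1 ≤ n := by exact_mod_cast hn
      push_cast at hm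
      linarith
    filter_upwards [hpole, eventually_ne_atTop 0] with n hn hn0
    have hn0' : (n : ℂ) ≠ 0 := by exact_mod_cast hn0
    rw [show s + 1 + n + 1 = s + n + 1 + 1 by ring, Gamma_add_one _ hn, cpow_add _ _ hn0',
      cpow_one, show (n : ℂ) + (s + 1) = s + n + 1 by ring]
    field_simp

end Gamma

section Series

/-- A Gamma quotient which, up to the factor `l ^ 2 - m ^ 2`, has the `dougallTerm`s as its
successive differences. -/
noncomputable def gammaRatio (l m : ℂ) (n : ℕ) : ℂ :=
  Gamma (n + 1 / 2 - m) * Gamma (n + 1 / 2 + m) /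
    (Gamma (n + 1 / 2 - l) * Gamma (n + 1 / 2 + l))

/-- The terms of index `n ≥ 0` of the bilateral series in Dougall's formula; by reflection, the term
of index `-1 - n` is `(cos (π * l) / cos (π * m)) ^ 2 * dougallTerm m l n`. -/
noncomputable def dougallTerm (l m : ℂ) (n : ℕ) : ℂ :=
  Gamma (n + 1 / 2 - m) * Gamma (n + 1 / 2 + m) /
    (Gamma (n + 3 / 2 - l) * Gamma (n + 3 / 2 + l))

variable {l m z : ℂ}

lemma dougallTerm_neg_left (l m : ℂ) : dougallTerm (-l) m = dougallTerm l m := by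
  funext n
  rw [dougallTerm, dougallTerm, sub_neg_eq_add, ← sub_eq_add_neg, mul_comm (Gamma (_ + l))]

lemma dougallTerm_neg_right (l m : ℂ) : dougallTerm l (-m) = dougallTerm l m := by
  funext n
  rw [dougallTerm, dougallTerm, sub_neg_eq_add, ← sub_eq_add_neg, mul_comm (Gamma (_ + m))]

lemma gammaRatio_zero (l m : ℂ) : gammaRatio l m 0 = cos (π * l) / cos (π * m) := by
  have hpi : (π : ℂ) ≠ 0 := ofReal_ne_zero.2 Real.pi_ne_zero
  rw [gammaRatio, Nat.cast_zero, zero_add, Gamma_half_sub_mul_Gamma_half_add,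
    Gamma_half_sub_mul_Gamma_half_add, div_div_div_cancel_left' _ _ hpi]

lemma gammaRatio_eq (l m : ℂ) (n : ℕ) :
    gammaRatio l m n = (((n : ℂ) + 1 / 2) ^ 2 - l ^ 2) * dougallTerm l m n := by
  rw [gammaRatio, dougallTerm, div_eq_mul_inv, mul_inv,
    one_div_Gamma_eq_self_mul_one_div_Gamma_add_one (n + 1 / 2 - l),
    one_div_Gamma_eq_self_mul_one_div_Gamma_add_one (n + 1 / 2 + l),
    show (n : ℂ) + 1 / 2 - l + 1 = n + 3 / 2 - l by ring,
    show (n : ℂ) + 1 / 2 + l + 1 = n + 3 / 2 + l by ring]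
  ring

lemma gammaRatio_succ (l : ℂ) (hm : cos (π * m) ≠ 0) (n : ℕ) :
    gammaRatio l m (n + 1) = (((n : ℂ) + 1 / 2) ^ 2 - m ^ 2) * dougallTerm l m n := by
  have hshift (x : ℂ) : ((n + 1 : ℕ) : ℂ) + 1 / 2 + x = n + 1 / 2 + x + 1 := by push_cast; ring
  rw [gammaRatio, dougallTerm, sub_eq_add_neg _ m, hshift, hshift, ← sub_eq_add_neg,
    Gamma_add_one _ (natCast_add_half_sub_ne_zero hm n),
    Gamma_add_one _ (natCast_add_half_add_ne_zero hm n),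
    show ((n + 1 : ℕ) : ℂ) + 1 / 2 = n + 3 / 2 by push_cast; ring]
  ring

lemma gammaRatio_self (hz : cos (π * z) ≠ 0) (n : ℕ) : gammaRatio z z n = 1 := by
  induction n with
  | zero => rw [gammaRatio_zero, div_self hz]
  | succ n ih => rw [gammaRatio_succ z hz, ← gammaRatio_eq, ih]

lemma dougallTerm_self (hz : cos (π * z) ≠ 0) (n : ℕ) :
    dougallTerm z z n = 1 / (((n : ℂ) + 1 / 2) ^ 2 - z ^ 2) := by
  refine eq_one_div_of_mul_eq_one_right ?_
  rw [← gammaRatio_eq, gammaRatio_self hz]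

lemma sum_range_dougallTerm (l : ℂ) (hm : cos (π * m) ≠ 0) (N : ℕ) :
    (l ^ 2 - m ^ 2) * ∑ n ∈ Finset.range N, dougallTerm l m n =
      gammaRatio l m N - gammaRatio l m 0 := by
  rw [← Finset.sum_range_sub, Finset.mul_sum]
  refine Finset.sum_congr rfl fun n _ => ?_
  rw [gammaRatio_succ l hm, gammaRatio_eq l m n]
  ring

lemma tendsto_gammaRatio (l m : ℂ) : Tendsto (gammaRatio l m) atTop (𝓝 1) := by
  have hprod (x : ℂ) : Tendsto (fun n : ℕ => Gamma (((n + 1 : ℕ) : ℂ) + 1 / 2 - x) *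
      Gamma (((n + 1 : ℕ) : ℂ) + 1 / 2 + x) / (n * n ! ^ 2)) atTop (𝓝 1) := by
    have h := (tendsto_Gamma_add_nat_div (1 / 2 - x)).mul (tendsto_Gamma_add_nat_div (1 / 2 + x))
    rw [mul_one] at h
    refine h.congr' ?_
    filter_upwards [eventually_ne_atTop 0] with n hn
    have hn0 : (n : ℂ) ≠ 0 := by exact_mod_cast hn
    have hpow : (n : ℂ) ^ (1 / 2 - x) * (n : ℂ) ^ (1 / 2 + x) = n := by
      rw [← cpow_add _ _ hn0, show 1 / 2 - x + (1 / 2 + x) = 1 by ring, cpow_one]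
    rw [div_mul_div_comm, mul_mul_mul_comm ((n : ℂ) ^ _), hpow, ← sq]
    push_cast
    ring_nf
  rw [← tendsto_add_atTop_iff_nat 1]
  have h := (hprod m).div (hprod l) one_ne_zero
  rw [div_one] at h
  refine h.congr' ?_
  filter_upwards [eventually_ne_atTop 0] with n hn
  have hn0 : (n : ℂ) ≠ 0 := by exact_mod_cast hn
  have hfac : (n ! : ℂ) ≠ 0 := by exact_mod_cast n.factorial_ne_zero
  rw [Pi.div_apply, div_div_div_cancel_right₀ (mul_ne_zero hn0 (pow_ne_zero 2 hfac)), gammaRatio]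

lemma tendsto_natCast_add_half_sq_sub_div_sq (z : ℂ) :
    Tendsto (fun n : ℕ => (((n : ℂ) + 1 / 2) ^ 2 - z ^ 2) / (n : ℂ) ^ 2) atTop (𝓝 1) := by
  have hinv : Tendsto (fun n : ℕ => (n : ℂ)⁻¹) atTop (𝓝 0) := tendsto_inv_atTop_nhds_zero_nat
  have h := ((hinv.const_mul (1 / 2)).const_add 1).pow 2 |>.sub ((hinv.const_mul z).pow 2)
  rw [mul_zero, mul_zero, add_zero, one_pow, zero_pow two_ne_zero, sub_zero] at h
  refine h.congr' ?_
  filter_upwards [eventually_ne_atTop 0] with n hn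
  have hn0 : (n : ℂ) ≠ 0 := by exact_mod_cast hn
  field_simp

lemma summable_dougallTerm (l m : ℂ) : Summable (dougallTerm l m) := by
  have hlim : Tendsto (fun n : ℕ => (n : ℂ) ^ 2 * dougallTerm l m n) atTop (𝓝 1) := by
    have hsq := tendsto_natCast_add_half_sq_sub_div_sq l
    have h := (tendsto_gammaRatio l m).div hsq one_ne_zero
    rw [div_one] at h
    refine h.congr' ?_
    filter_upwards [hsq.eventually_ne one_ne_zero] with n hn
    rw [div_ne_zero_iff] at hn
    rw [Pi.div_apply, gammaRatio_eq, div_div_eq_mul_div, mul_assoc, mul_div_cancel_left₀ _ hn.1,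
      mul_comm]
  refine summable_of_isBigO_nat (Real.summable_one_div_nat_pow.2 one_lt_two) ?_
  have hinv := isBigO_ofReal_left.2
    (Asymptotics.isBigO_refl (fun n : ℕ => 1 / (n : ℝ) ^ 2) atTop)
  refine (hinv.mul (hlim.isBigO_one ℝ)).congr' ?_ (by simp)
  filter_upwards [eventually_ne_atTop 0] with n hn
  have hn0 : (n : ℂ) ≠ 0 := by exact_mod_cast hn
  push_cast
  field_simp

lemma tsum_dougallTerm (hm : cos (π * m) ≠ 0) (hlm : l ^ 2 - m ^ 2 ≠ 0) :
    ∑' n, dougallTerm l m n = (1 - cos (π * l) / cos (π * m)) / (l ^ 2 - m ^ 2) := by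
  rw [eq_div_iff hlm, mul_comm, ← gammaRatio_zero]
  have hsum := ((summable_dougallTerm l m).hasSum.tendsto_sum_nat).const_mul (l ^ 2 - m ^ 2)
  refine tendsto_nhds_unique hsum ?_
  simp only [sum_range_dougallTerm l hm]
  exact (tendsto_gammaRatio l m).sub_const _

lemma hasSum_one_div_natCast_add_half_sq :
    HasSum (fun n : ℕ => 1 / ((n : ℂ) + 1 / 2) ^ 2) ((π : ℂ) ^ 2 / 2) := by
  have hzeta : HasSum (fun n : ℕ => 1 / (n : ℂ) ^ 2) ((π : ℂ) ^ 2 / 6) := by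
    simpa using hasSum_ofReal.2 hasSum_zeta_two
  have heven : HasSum (fun k : ℕ => 1 / ((2 * k : ℕ) : ℂ) ^ 2) (1 / 4 * ((π : ℂ) ^ 2 / 6)) :=
    (hzeta.mul_left (1 / 4)).congr_fun fun k => by push_cast; ring
  have hodd : Summable fun k : ℕ => 1 / ((2 * k + 1 : ℕ) : ℂ) ^ 2 :=
    hzeta.summable.comp_injective (i := fun k => 2 * k + 1) fun a b h => by simpa using h
  have hsum := hzeta.unique
    (HasSum.even_add_odd (f := fun n : ℕ => 1 / (n : ℂ) ^ 2) heven hodd.hasSum)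
  have hval : (π : ℂ) ^ 2 / 2 = 4 * ∑' k : ℕ, 1 / ((2 * k + 1 : ℕ) : ℂ) ^ 2 := by
    linear_combination 4 * hsum
  rw [hval]
  refine (hodd.hasSum.mul_left 4).congr_fun fun k => ?_
  push_cast
  rw [show (k : ℂ) + 1 / 2 = (2 * k + 1) / 2 by ring, div_pow, one_div_div]
  ring

lemma add_half_mem_integerComplement (hz : cos (π * z) ≠ 0) : z + 1 / 2 ∈ integerComplement := by
  rw [mem_integerComplement_iff]
  rintro ⟨k, hk⟩
  refine hz (cos_eq_zero_iff.2 ⟨k - 1, ?_⟩)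
  rw [eq_sub_of_add_eq hk.symm]
  push_cast
  ring

lemma sum_range_two_mul_div_natCast_add_half_sq_sub_sq (hz : cos (π * z) ≠ 0) (N : ℕ) :
    ∑ n ∈ Finset.range N, 2 * z / (((n : ℂ) + 1 / 2) ^ 2 - z ^ 2) =
      1 / (z + 1 / 2 + N) - 1 / (z + 1 / 2) -
        ∑ n ∈ Finset.range N, (1 / (z + 1 / 2 - (n + 1)) + 1 / (z + 1 / 2 + (n + 1))) := by
  have htele := Finset.sum_range_sub (fun n : ℕ => 1 / (z + 1 / 2 + n)) N
  rw [Nat.cast_zero, add_zero] at htele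
  rw [← htele, ← Finset.sum_sub_distrib]
  refine Finset.sum_congr rfl fun n _ => ?_
  have hsub := natCast_add_half_sub_ne_zero hz n
  have hadd := natCast_add_half_add_ne_zero hz n
  rw [show ((n : ℂ) + 1 / 2) ^ 2 - z ^ 2 = (n + 1 / 2 - z) * (n + 1 / 2 + z) by ring,
    show z + 1 / 2 - ((n : ℂ) + 1) = -(n + 1 / 2 - z) by ring,
    show z + 1 / 2 + (n : ℂ) = n + 1 / 2 + z by ring, Nat.cast_succ]
  have hpartial : 2 * z / (((n : ℂ) + 1 / 2 - z) * (n + 1 / 2 + z)) =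
      1 / (n + 1 / 2 - z) - 1 / (n + 1 / 2 + z) := by
    rw [div_sub_div _ _ hsub hadd]
    ring
  rw [hpartial, div_neg]
  ring

lemma tsum_two_mul_div_natCast_add_half_sq_sub_sq (hz : cos (π * z) ≠ 0) :
    ∑' n : ℕ, 2 * z / (((n : ℂ) + 1 / 2) ^ 2 - z ^ 2) = π * tan (π * z) := by
  have hcompl := add_half_mem_integerComplement hz
  have hsum : Summable fun n : ℕ => 2 * z / (((n : ℂ) + 1 / 2) ^ 2 - z ^ 2) :=
    ((summable_dougallTerm z z).mul_left (2 * z)).congr fun n => by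
      rw [dougallTerm_self hz, mul_one_div]
  have hinv : Tendsto (fun N : ℕ => 1 / (z + 1 / 2 + N)) atTop (𝓝 0) := by
    simp only [one_div]
    exact tendsto_inv₀_cobounded.comp
      ((tendsto_const_add_cobounded _).comp tendsto_natCast_atTop_cobounded)
  have hlim := (hinv.sub_const (1 / (z + 1 / 2))).sub (tendsto_logDeriv_euler_cot_sub hcompl)
  simp only [cotTerm, ← sum_range_two_mul_div_natCast_add_half_sq_sub_sq hz] at hlim
  rw [tendsto_nhds_unique hsum.hasSum.tendsto_sum_nat hlim, cot_eq_cos_div_sin,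
    show (π : ℂ) * (z + 1 / 2) = π * z + π / 2 by ring, cos_add_pi_div_two, sin_add_pi_div_two,
    tan_eq_sin_div_cos]
  ring

lemma tsum_dougallTerm_self (hz : cos (π * z) ≠ 0) :
    ∑' n, dougallTerm z z n =
      (π / cos (π * z)) ^ 2 / 2 * (Gamma (1 + 2 * z) * Gamma (1 - 2 * z))⁻¹ := by
  simp only [dougallTerm_self hz]
  rcases eq_or_ne z 0 with rfl | hz0
  · simpa using hasSum_one_div_natCast_add_half_sq.tsum_eq
  · have htan := tsum_two_mul_div_natCast_add_half_sq_sub_sq hz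
    simp only [div_eq_mul_one_div (2 * z), tsum_mul_left] at htan
    rw [inv_Gamma_one_add_mul_Gamma_one_sub (by simpa), mul_left_comm, sin_two_mul]
    rw [tan_eq_sin_div_cos] at htan
    field_simp at htan ⊢
    linear_combination htan

lemma sin_add_mul_sin_sub (x y : ℂ) : sin (x + y) * sin (x - y) = cos y ^ 2 - cos x ^ 2 := by
  rw [sin_add, sin_sub]
  linear_combination cos y ^ 2 * sin_sq_add_cos_sq x - cos x ^ 2 * sin_sq_add_cos_sq y

theorem tsum_dougallTerm_add_tsum_dougallTerm (hm : cos (π * m) ≠ 0) :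
    ∑' n, dougallTerm l m n + (cos (π * l) / cos (π * m)) ^ 2 * ∑' n, dougallTerm m l n =
      (π / cos (π * m)) ^ 2 * (Gamma (1 + (l + m)) * Gamma (1 - (l + m)))⁻¹ *
        (Gamma (1 + (l - m)) * Gamma (1 - (l - m)))⁻¹ := by
  by_cases hlm : l ^ 2 - m ^ 2 = 0
  · rcases sq_eq_sq_iff_eq_or_eq_neg.1 (sub_eq_zero.1 hlm) with rfl | rfl
    · rw [tsum_dougallTerm_self hm, div_self hm, sub_self, add_zero, sub_zero, Gamma_one, ← two_mul]
      ring
    · rw [dougallTerm_neg_left, dougallTerm_neg_right, tsum_dougallTerm_self hm, mul_neg, cos_neg,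
        div_self hm, neg_add_cancel, add_zero, sub_zero, Gamma_one,
        show -m - m = -(2 * m) by ring, ← sub_eq_add_neg, sub_neg_eq_add]
      ring
  · have hpi : (π : ℂ) ≠ 0 := ofReal_ne_zero.2 Real.pi_ne_zero
    have hne : (l + m) * (l - m) ≠ 0 := by rwa [← sq_sub_sq]
    have hadd := left_ne_zero_of_mul hne
    have hsub := right_ne_zero_of_mul hne
    have hsin : sin (π * (l + m)) * sin (π * (l - m)) = cos (π * m) ^ 2 - cos (π * l) ^ 2 := by
      rw [mul_add, mul_sub, sin_add_mul_sin_sub]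
    have hswap : (cos (π * l) / cos (π * m)) ^ 2 * ∑' n, dougallTerm m l n =
        (cos (π * l) / cos (π * m) - (cos (π * l) / cos (π * m)) ^ 2) / (l ^ 2 - m ^ 2) := by
      by_cases hl : cos (π * l) = 0
      · simp [hl]
      · rw [tsum_dougallTerm hl (by rwa [← neg_sub, neg_ne_zero]), ← neg_sub (l ^ 2)]
        field_simp
        ring
    rw [tsum_dougallTerm hm hlm, hswap, inv_Gamma_one_add_mul_Gamma_one_sub hadd,
      inv_Gamma_one_add_mul_Gamma_one_sub hsub, sq_sub_sq, mul_assoc, div_mul_div_comm, hsin]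
    field_simp
    ring

end Series

section Integral

variable {a l m u v z : ℂ} {p : ℝ}

lemma hasSum_multichoose_mul_pow (a : ℂ) (hz : ‖z‖ < 1) :
    HasSum (fun n => Ring.multichoose a n * z ^ n) ((1 - z) ^ (-a)) := by
  have h := (one_div_one_sub_cpow_hasFPowerSeriesOnBall_zero a).hasSum (y := z)
    (by rw [← ENNReal.ofReal_one, Metric.eball_ofReal]; simpa using hz)
  simpa only [FormalMultilinearSeries.ofScalars_apply_eq, ← Ring.multichoose_eq, zero_add,
    smul_eq_mul, one_div, ← cpow_neg] using h

lemma multichoose_eq_Gamma_div (ha : ∀ k : ℕ, a ≠ -k) (n : ℕ) :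
    Ring.multichoose a n = Gamma (a + n) / (Gamma a * n !) := by
  have h := Ring.factorial_nsmul_multichoose_eq_ascPochhammer a n
  rw [Polynomial.ascPochhammer_smeval_eq_eval, ← Gamma_add_nat_div_Gamma_eq a ha,
    nsmul_eq_mul] at h
  rw [← div_div, ← h, mul_div_cancel_left₀]
  exact_mod_cast n.factorial_ne_zero

lemma integral_norm_cpow_mul_one_sub_cpow (hu : 0 < u.re) (hv : 0 < v.re) :
    ∫ x in Ioo (0 : ℝ) 1, ‖(x : ℂ) ^ (u - 1) * (1 - (x : ℂ)) ^ (v - 1)‖ = beta u.re v.re := by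
  rw [beta_eq_betaIntegralReal _ _ hu hv, ← ofReal_re (∫ x in _, _), ← integral_complex_ofReal,
    betaIntegral, integral_of_le zero_le_one, integral_Ioc_eq_integral_Ioo]
  refine congrArg re (setIntegral_congr_fun measurableSet_Ioo fun x hx => ?_)
  have hx1 : 0 < 1 - x := sub_pos.2 hx.2
  rw [norm_mul, ← ofReal_one, ← ofReal_sub, norm_cpow_eq_rpow_re_of_pos hx.1,
    norm_cpow_eq_rpow_re_of_pos hx1, ofReal_mul, ofReal_cpow hx.1.le, ofReal_cpow hx1.le]
  simp

lemma hasSum_mul_betaIntegral_add_nat (hu : 0 < u.re) (hv : 0 < v.re) {c : ℕ → ℂ} {f : ℝ → ℂ}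
    (hc : Summable fun n => ‖c n‖ * beta (u.re + n) v.re)
    (hf : ∀ x ∈ Ioo (0 : ℝ) 1, HasSum (fun n => c n * (x : ℂ) ^ n) (f x)) :
    HasSum (fun n => c n * betaIntegral (u + n) v)
      (∫ x in (0 : ℝ)..1, f x * ((x : ℂ) ^ (u - 1) * (1 - (x : ℂ)) ^ (v - 1))) := by
  have hre (n : ℕ) : (u + n).re = u.re + n := by simp
  have hpos (n : ℕ) : 0 < (u + n).re := by rw [hre]; positivity
  have hint (n : ℕ) : IntegrableOn
      (fun x : ℝ => (x : ℂ) ^ (u + n - 1) * (1 - (x : ℂ)) ^ (v - 1)) (Ioo 0 1) :=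
    (intervalIntegrable_iff_integrableOn_Ioo_of_le zero_le_one).1
      (betaIntegral_convergent (hpos n) hv)
  have h := hasSum_integral_of_summable_integral_norm (fun n => (hint n).const_mul (c n)) <| by
    simpa only [norm_mul (c _), MeasureTheory.integral_const_mul,
      integral_norm_cpow_mul_one_sub_cpow (hpos _) hv, hre] using hc
  simp only [MeasureTheory.integral_const_mul] at h
  simp only [betaIntegral, integral_of_le zero_le_one, integral_Ioc_eq_integral_Ioo]
  refine (congrArg (HasSum _) ?_).mpr h
  refine setIntegral_congr_fun measurableSet_Ioo fun x hx => ?_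
  have hx0 : (x : ℂ) ≠ 0 := ofReal_ne_zero.2 hx.1.ne'
  have hsum := (hf x hx).mul_right ((x : ℂ) ^ (u - 1) * (1 - (x : ℂ)) ^ (v - 1))
  refine (hsum.congr_fun fun n => ?_).tsum_eq.symm
  rw [add_sub_right_comm, cpow_add _ _ hx0, cpow_natCast]
  ring

lemma beta_add_nat_le {a b : ℝ} (ha : 0 < a) (hb : 0 < b) (n : ℕ) :
    beta (a + n) b ≤ beta a b := by
  induction n with
  | zero => simp
  | succ n ih =>
    have han : 0 < a + n := by positivity
    have hstep : beta (a + (n + 1 : ℕ)) b = (a + n) / (a + n + b) * beta (a + n) b := by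
      rw [Nat.cast_succ, ← add_assoc, beta, beta, add_right_comm _ 1 b, Real.Gamma_add_one han.ne',
        Real.Gamma_add_one (add_pos han hb).ne', mul_assoc, div_mul_div_comm]
    rw [hstep]
    refine (mul_le_of_le_one_left (beta_pos han hb).le ?_).trans ih
    rw [div_le_one (add_pos han hb)]
    exact le_add_of_nonneg_right hb.le

lemma beta_re_le_mul_norm_betaIntegral (hp : 0 < p) (hv : 0 < v.re) :
    beta p v.re ≤ Real.Gamma v.re / ‖Gamma v‖ * ‖betaIntegral p v‖ := by
  have hpv : 0 < (p + v).re := by simpa using add_pos hp hv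
  have hGv : 0 < ‖Gamma v‖ := norm_pos_iff.2 (Gamma_ne_zero_of_re_pos hv)
  have hGpv : 0 < ‖Gamma (p + v)‖ := norm_pos_iff.2 (Gamma_ne_zero_of_re_pos hpv)
  have hle := norm_Gamma_le_Gamma_re hpv
  have hp0 := Real.Gamma_pos_of_pos hp
  have hv0 := Real.Gamma_pos_of_pos hv
  rw [betaIntegral_eq_Gamma_mul_div _ _ (by simpa) hv, norm_div, norm_mul, Gamma_ofReal, norm_real,
    Real.norm_of_nonneg hp0.le, beta]
  rw [add_re, ofReal_re] at hle
  calc Real.Gamma p * Real.Gamma v.re / Real.Gamma (p + v.re)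
      ≤ Real.Gamma p * Real.Gamma v.re / ‖Gamma (p + v)‖ := by gcongr
    _ = _ := by field_simp

lemma hasSum_multichoose_mul_pow_mul_betaIntegral (hu : 0 < u.re) (hv : 0 < v.re) (hz : ‖z‖ < 1) :
    HasSum (fun n => Ring.multichoose a n * z ^ n * betaIntegral (u + n) v)
      (∫ x in (0 : ℝ)..1, (1 - z * x) ^ (-a) * ((x : ℂ) ^ (u - 1) * (1 - (x : ℂ)) ^ (v - 1))) := by
  refine hasSum_mul_betaIntegral_add_nat hu hv ?_ fun x hx => ?_
  · have hsum := (hasSum_multichoose_mul_pow a hz).summable.norm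
    refine (hsum.mul_right (beta u.re v.re)).of_nonneg_of_le (fun n => ?_) fun n => ?_
    · have := (beta_pos (by positivity : 0 < u.re + n) hv).le
      positivity
    · gcongr
      exact beta_add_nat_le hu hv n
  · have hzx : ‖z * x‖ < 1 := by
      rw [norm_mul, norm_real, Real.norm_of_nonneg hx.1.le]
      exact mul_lt_one_of_nonneg_of_lt_one_left (norm_nonneg z) hz hx.2.le
    simpa only [mul_pow, mul_assoc] using hasSum_multichoose_mul_pow a hzx

lemma hasSum_multichoose_mul_betaIntegral_mul_betaIntegral {q : ℂ} (hu : 0 < u.re) (hv : 0 < v.re)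
    (hp : 0 < p) (hq : 0 < q.re)
    (hsum : Summable fun n =>
      Ring.multichoose a n * betaIntegral (u + n) v * betaIntegral (p + n) q) :
    HasSum (fun n => Ring.multichoose a n * betaIntegral (u + n) v * betaIntegral (p + n) q)
      (∫ x in (0 : ℝ)..1,
        (∫ y in (0 : ℝ)..1, (1 - x * y) ^ (-a) * ((y : ℂ) ^ (u - 1) * (1 - (y : ℂ)) ^ (v - 1))) *
          ((x : ℂ) ^ ((p : ℂ) - 1) * (1 - (x : ℂ)) ^ (q - 1))) := by
  refine hasSum_mul_betaIntegral_add_nat (by simpa) hq ?_ fun x hx => ?_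
  · have hpn (n : ℕ) : 0 < p + n := by positivity
    refine (hsum.norm.mul_left (Real.Gamma q.re / ‖Gamma q‖)).of_nonneg_of_le (fun n => ?_)
      fun n => ?_
    · have := (beta_pos (hpn n) hq).le
      rw [ofReal_re]
      positivity
    · have h := beta_re_le_mul_norm_betaIntegral (hpn n) hq
      rw [ofReal_add, ofReal_natCast] at h
      rw [norm_mul (_ * _), ofReal_re, mul_left_comm]
      gcongr
  · have hx1 : ‖(x : ℂ)‖ < 1 := by rw [norm_real, Real.norm_of_nonneg hx.1.le]; exact hx.2
    simpa only [mul_right_comm] using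
      hasSum_multichoose_mul_pow_mul_betaIntegral (a := a) hu hv hx1

/-- The integral of `t ^ (l - 1/2) (1 - t) ^ (l - 1/2) s ^ (m - 1/2) (1 - s) ^ (m - 1/2)
|s - t| ^ (-l - m)` over the triangle `0 ≤ s < t ≤ 1`, as an iterated integral. -/
noncomputable def triangleIntegral (l m : ℂ) : ℂ :=
  ∫ t in (0 : ℝ)..1, ∫ s in (0 : ℝ)..t,
    (t : ℂ) ^ (l - 1 / 2 : ℂ) * ((1 - t : ℝ) : ℂ) ^ (l - 1 / 2 : ℂ) *
      (s : ℂ) ^ (m - 1 / 2 : ℂ) * ((1 - s : ℝ) : ℂ) ^ (m - 1 / 2 : ℂ) *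
      ((|s - t| : ℝ) : ℂ) ^ (-l - m)

lemma integral_integral_eq_triangleIntegral_swap (l m : ℂ) :
    ∫ s in (0 : ℝ)..1, ∫ t in (0 : ℝ)..s,
      (t : ℂ) ^ (l - 1 / 2 : ℂ) * ((1 - t : ℝ) : ℂ) ^ (l - 1 / 2 : ℂ) *
        (s : ℂ) ^ (m - 1 / 2 : ℂ) * ((1 - s : ℝ) : ℂ) ^ (m - 1 / 2 : ℂ) *
        ((|s - t| : ℝ) : ℂ) ^ (-l - m) = triangleIntegral m l := by
  refine integral_congr fun s _ => integral_congr fun t _ => ?_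
  rw [abs_sub_comm, show -l - m = -m - l by ring]
  ring

lemma triangleIntegral_eq_integral_integral (l m : ℂ) :
    triangleIntegral l m = ∫ t in (0 : ℝ)..1,
      (∫ u in (0 : ℝ)..1, (1 - t * u) ^ (-(1 / 2 - m)) *
        ((u : ℂ) ^ (m + 1 / 2 - 1) * (1 - (u : ℂ)) ^ (1 - l - m - 1))) *
      ((t : ℂ) ^ (((1 : ℝ) : ℂ) - 1) * (1 - (t : ℂ)) ^ (l + 1 / 2 - 1)) := by
  rw [triangleIntegral, integral_of_le zero_le_one, integral_of_le zero_le_one]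
  refine setIntegral_congr_fun measurableSet_Ioc fun t ht => ?_
  have ht0 : (t : ℂ) ≠ 0 := ofReal_ne_zero.2 ht.1.ne'
  have hscale (F : ℝ → ℂ) : ∫ s in (0 : ℝ)..t, F s = ∫ u in (0 : ℝ)..1, t * F (t * u) := by
    have h := smul_integral_comp_mul_left (a := 0) (b := 1) F t
    rw [mul_zero, mul_one, ← intervalIntegral.integral_smul] at h
    simpa only [real_smul] using h.symm
  rw [hscale, ← intervalIntegral.integral_mul_const, integral_of_le zero_le_one,
    integral_of_le zero_le_one]
  refine setIntegral_congr_fun measurableSet_Ioc fun u hu => ?_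
  have habs : |t * u - t| = t * (1 - u) := by
    rw [abs_of_nonpos (by nlinarith [ht.1, hu.2])]
    ring
  have hpow : (t : ℂ) * ((t : ℂ) ^ (l - 1 / 2) * (t : ℂ) ^ (m - 1 / 2) * (t : ℂ) ^ (-l - m)) =
      1 := by
    rw [← cpow_add _ _ ht0, ← cpow_add _ _ ht0,
      show l - 1 / 2 + (m - 1 / 2) + (-l - m) = -1 by ring, cpow_neg_one, mul_inv_cancel₀ ht0]
  rw [habs, ofReal_mul t u, ofReal_mul t (1 - u), mul_cpow_ofReal_nonneg ht.1.le hu.1.le,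
    mul_cpow_ofReal_nonneg ht.1.le (sub_nonneg.2 hu.2), ofReal_one, sub_self, cpow_zero,
    show m + 1 / 2 - 1 = m - 1 / 2 by ring, show l + 1 / 2 - 1 = l - 1 / 2 by ring,
    show 1 - l - m - 1 = -l - m by ring, neg_sub]
  push_cast
  linear_combination ((1 - (t : ℂ)) ^ (l - 1 / 2) * ((u : ℂ) ^ (m - 1 / 2) *
    (1 - (u : ℂ)) ^ (-l - m) * (1 - (t : ℂ) * u) ^ (m - 1 / 2))) * hpow

variable (hl : -(1 / 2 : ℝ) < l.re) (hm : -(1 / 2 : ℝ) < m.re) (hlm : (l + m).re < 1)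
include hl hm hlm

lemma multichoose_mul_betaIntegral_mul_betaIntegral (hcos : cos (π * m) ≠ 0) (n : ℕ) :
    Ring.multichoose (1 / 2 - m) n * betaIntegral (m + 1 / 2 + n) (1 - l - m) *
        betaIntegral ((1 : ℝ) + n) (l + 1 / 2) =
      Gamma (1 - l - m) * Gamma (l + 1 / 2) / Gamma (1 / 2 - m) * dougallTerm l m n := by
  rw [add_re] at hlm
  have hfac : (n ! : ℂ) ≠ 0 := by exact_mod_cast n.factorial_ne_zero
  rw [multichoose_eq_Gamma_div (half_sub_ne_neg_natCast hcos), dougallTerm,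
    betaIntegral_eq_Gamma_mul_div _ _ (by norm_num; linarith) (by norm_num; linarith),
    betaIntegral_eq_Gamma_mul_div _ _ (by norm_num; linarith) (by norm_num; linarith),
    ofReal_one, add_comm 1 (n : ℂ), Gamma_nat_eq_factorial,
    show m + 1 / 2 + n + (1 - l - m) = n + 3 / 2 - l by ring,
    show 1 / 2 - m + n = n + 1 / 2 - m by ring, show m + 1 / 2 + n = n + 1 / 2 + m by ring,
    show n + 1 + (l + 1 / 2) = n + 3 / 2 + l by ring]
  field_simp

lemma triangleIntegral_eq_mul_tsum_dougallTerm (hcos : cos (π * m) ≠ 0) :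
    triangleIntegral l m =
      Gamma (1 - l - m) * Gamma (l + 1 / 2) / Gamma (1 / 2 - m) * ∑' n, dougallTerm l m n := by
  have hterm := multichoose_mul_betaIntegral_mul_betaIntegral hl hm hlm hcos
  rw [add_re] at hlm
  rw [triangleIntegral_eq_integral_integral, ← tsum_mul_left]
  simp only [← hterm]
  refine (hasSum_multichoose_mul_betaIntegral_mul_betaIntegral (by norm_num; linarith)
    (by norm_num; linarith) one_pos (by norm_num; linarith) ?_).tsum_eq.symm
  simpa only [hterm] using (summable_dougallTerm l m).mul_left _

lemma cos_div_cos_mul_triangleIntegral (hcos : cos (π * m) ≠ 0) :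
    cos (π * l) / cos (π * m) * triangleIntegral m l =
      Gamma (1 - l - m) * Gamma (l + 1 / 2) / Gamma (1 / 2 - m) *
        ((cos (π * l) / cos (π * m)) ^ 2 * ∑' n, dougallTerm m l n) := by
  by_cases hcosl : cos (π * l) = 0
  · simp [hcosl]
  have hGl := Gamma_ne_zero (half_sub_ne_neg_natCast hcosl)
  have hGm := Gamma_ne_zero (half_sub_ne_neg_natCast hcos)
  have hreflect : Gamma (1 / 2 - l) * Gamma (l + 1 / 2) * cos (π * l) =
      Gamma (1 / 2 - m) * Gamma (m + 1 / 2) * cos (π * m) := by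
    rw [add_comm l, add_comm m, Gamma_half_sub_mul_Gamma_half_add,
      Gamma_half_sub_mul_Gamma_half_add, div_mul_cancel₀ _ hcosl, div_mul_cancel₀ _ hcos]
  have hratio : Gamma (m + 1 / 2) / Gamma (1 / 2 - l) =
      cos (π * l) / cos (π * m) * (Gamma (l + 1 / 2) / Gamma (1 / 2 - m)) := by
    rw [div_mul_div_comm, div_eq_div_iff hGl (mul_ne_zero hcos hGm)]
    linear_combination -hreflect
  rw [triangleIntegral_eq_mul_tsum_dougallTerm hm hl (by rwa [add_comm]) hcosl,
    sub_right_comm 1 m l, mul_div_assoc, hratio]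
  ring

end Integral
end

-- A factor `Γ(lam + 1 - mu)` or `Γ(mu + 1 - lam)` may have a pole here; Mathlib's value `0` for
-- `Γ` at a pole and for `0⁻¹` then gives the correct value `0` of `1 / Γ`.
theorem stmt16_general (lam mu : ℂ) (hlam : -(1 / 2 : ℝ) < lam.re) (hmu : -(1 / 2 : ℝ) < mu.re)
    (hsum : (lam + mu).re < 1) (hcos : Complex.cos (Real.pi * mu) ≠ 0) :
    (∫ t in (0 : ℝ)..1, ∫ s in (0 : ℝ)..t,
          (t : ℂ) ^ (lam - 1 / 2 : ℂ) * ((1 - t : ℝ) : ℂ) ^ (lam - 1 / 2 : ℂ) *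
            (s : ℂ) ^ (mu - 1 / 2 : ℂ) * ((1 - s : ℝ) : ℂ) ^ (mu - 1 / 2 : ℂ) *
            ((|s - t| : ℝ) : ℂ) ^ (-lam - mu)) +
        (Complex.cos (Real.pi * lam) / Complex.cos (Real.pi * mu)) *
          ∫ s in (0 : ℝ)..1, ∫ t in (0 : ℝ)..s,
            (t : ℂ) ^ (lam - 1 / 2 : ℂ) * ((1 - t : ℝ) : ℂ) ^ (lam - 1 / 2 : ℂ) *
              (s : ℂ) ^ (mu - 1 / 2 : ℂ) * ((1 - s : ℝ) : ℂ) ^ (mu - 1 / 2 : ℂ) *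
              ((|s - t| : ℝ) : ℂ) ^ (-lam - mu) =
      Complex.Gamma (lam + 1 / 2) * Complex.Gamma (1 / 2 - mu) *
          Complex.Gamma (mu + 1 / 2) ^ 2 /
        (Complex.Gamma (lam + 1 - mu) * Complex.Gamma (mu + 1 - lam) *
          Complex.Gamma (lam + mu + 1)) := by
  have hGsum : Complex.Gamma (1 - (lam + mu)) ≠ 0 :=
    Complex.Gamma_ne_zero_of_re_pos (by simpa using hsum)
  rw [integral_integral_eq_triangleIntegral_swap, ← triangleIntegral,
    triangleIntegral_eq_mul_tsum_dougallTerm hlam hmu hsum hcos,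
    cos_div_cos_mul_triangleIntegral hlam hmu hsum hcos, ← mul_add,
    tsum_dougallTerm_add_tsum_dougallTerm hcos, ← Gamma_half_sub_mul_Gamma_half_add,
    show 1 - lam - mu = 1 - (lam + mu) by ring, show lam + 1 - mu = 1 + (lam - mu) by ring,
    show mu + 1 - lam = 1 - (lam - mu) by ring, add_comm (lam + mu) 1, add_comm mu (1 / 2)]
  field_simp

theorem stmt16 (lam mu : ℂ) (hlam : -(1 / 2 : ℝ) < lam.re) (hmu : -(1 / 2 : ℝ) < mu.re)
    (hsum : (lam + mu).re < 0) :
    (∫ t in (0 : ℝ)..1, ∫ s in (0 : ℝ)..t,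
          (t : ℂ) ^ (lam - 1 / 2 : ℂ) * ((1 - t : ℝ) : ℂ) ^ (lam - 1 / 2 : ℂ) *
            (s : ℂ) ^ (mu - 1 / 2 : ℂ) * ((1 - s : ℝ) : ℂ) ^ (mu - 1 / 2 : ℂ) *
            ((|s - t| : ℝ) : ℂ) ^ (-lam - mu)) +
        (Complex.cos (Real.pi * lam) / Complex.cos (Real.pi * mu)) *
          ∫ s in (0 : ℝ)..1, ∫ t in (0 : ℝ)..s,
            (t : ℂ) ^ (lam - 1 / 2 : ℂ) * ((1 - t : ℝ) : ℂ) ^ (lam - 1 / 2 : ℂ) *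
              (s : ℂ) ^ (mu - 1 / 2 : ℂ) * ((1 - s : ℝ) : ℂ) ^ (mu - 1 / 2 : ℂ) *
              ((|s - t| : ℝ) : ℂ) ^ (-lam - mu) =
      Complex.Gamma (lam + 1 / 2) * Complex.Gamma (1 / 2 - mu) *
          Complex.Gamma (mu + 1 / 2) ^ 2 /
        (Complex.Gamma (lam + 1 - mu) * Complex.Gamma (mu + 1 - lam) *
          Complex.Gamma (lam + mu + 1)) := by
  exact stmt16_general lam mu hlam hmu (hsum.trans one_pos)
    (cos_pi_mul_ne_zero_of_re_mem_Ioo ⟨hmu, by linarith [Complex.add_re lam mu]⟩)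
end
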